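/- arXiv:1912.00140 — 3 statements merged into one kernel-verified Lean document; each statement's English description precedes it below -/
import Mathlib

section
/- 2·∑_{n=1}^∞ 4^{n-1} / (n² · C(2n,n)) = π²/4 + log²2 + (1/2)·∑_{n=1}^∞ (C(2n,n)/(4ⁿ · n²))·(2 + 2n(H_{n-1} - H_{2n-1})), where both series converge. -/
open Filter Topology Finset

noncomputable def cbA (n : ℕ) : ℝ := (Nat.centralBinom n : ℝ) / 4 ^ n

lemma cbA_zero : cbA 0 = 1 := by simp [cbA]

lemma cbA_pos (n : ℕ) : 0 < cbA n := by
  unfold cbA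
  have := Nat.centralBinom_pos n
  positivity

lemma cbA_rec (n : ℕ) : ((n : ℝ) + 1) * cbA (n + 1) = ((n : ℝ) + 1 / 2) * cbA n := by
  have h : ((n : ℝ) + 1) * (Nat.centralBinom (n + 1) : ℝ)
      = 2 * (2 * (n : ℝ) + 1) * (Nat.centralBinom n : ℝ) := by
    exact_mod_cast Nat.succ_mul_centralBinom_succ n
  unfold cbA
  rw [pow_succ, ← mul_div_assoc, h]
  field_simp
  ring

lemma cbA_sq_le (n : ℕ) : ((n : ℝ) + 1) * cbA n ^ 2 ≤ 1 := by
  induction n with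
  | zero => simp [cbA_zero]
  | succ n ih =>
    have h := cbA_rec n
    have hn : (0 : ℝ) ≤ n := Nat.cast_nonneg n
    have e : cbA (n + 1) = ((n : ℝ) + 1 / 2) / (n + 1) * cbA n := by
      field_simp; linarith
    rw [e]; push_cast
    refine le_trans ?_ ih
    have h2 : ((n : ℝ) + 1 + 1) * (((n : ℝ) + 1 / 2) / (n + 1)) ^ 2 ≤ n + 1 := by
      rw [div_pow, ← mul_div_assoc, div_le_iff₀ (by positivity)]
      nlinarith
    have h3 := mul_le_mul_of_nonneg_right h2 (sq_nonneg (cbA n))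
    nlinarith

lemma cbA_tendsto : Tendsto cbA atTop (𝓝 0) := by
  have h : Tendsto (fun n => cbA n ^ 2) atTop (𝓝 0) := by
    refine squeeze_zero (fun n => sq_nonneg _) (fun n => ?_) tendsto_one_div_add_atTop_nhds_zero_nat
    rw [le_div_iff₀ (by positivity)]
    linarith [cbA_sq_le n]
  have h2 := h.sqrt
  simpa [Real.sqrt_sq (cbA_pos _).le] using h2

/-- Creative-telescoping summation lemma. -/
lemma tele_sum (F : ℕ → ℕ → ℝ) (r : ℕ → ℝ) (R : ℝ) (h0 : ∀ j m, 0 ≤ F j m)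
    (hs : Summable (F 0)) (hb : ∀ j m, F j m ≤ F 0 m / ((j : ℝ) + 1))
    (hd : ∀ j, HasSum (fun m => F j m - F (j + 1) m) (r j))
    (hr : Tendsto (fun J => ∑ j ∈ range J, r j) atTop (𝓝 R)) : HasSum (F 0) R := by
  have hsj : ∀ j, Summable (F j) := fun j =>
    Summable.of_nonneg_of_le (h0 j) (hb j) (hs.div_const _)
  have hr' : ∀ j, r j = ∑' m, F j m - ∑' m, F (j + 1) m := fun j => by
    rw [← (hd j).tsum_eq, (hsj j).tsum_sub (hsj (j + 1))]
  have hsum : ∀ J, ∑ j ∈ range J, r j = ∑' m, F 0 m - ∑' m, F J m := fun J => by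
    simp_rw [hr']
    rw [sum_range_sub']
  have hlim : Tendsto (fun J => ∑' m, F J m) atTop (𝓝 0) := by
    have h1 : Tendsto (fun J : ℕ => (∑' m, F 0 m) * (1 / ((J : ℝ) + 1))) atTop (𝓝 0) := by
      simpa using tendsto_one_div_add_atTop_nhds_zero_nat.const_mul (∑' m, F 0 m)
    refine squeeze_zero (fun J => tsum_nonneg (h0 J)) (fun J => ?_) h1
    have := (hsj J).tsum_le_tsum (hb J) (hs.div_const _)
    rw [tsum_div_const] at this
    rw [mul_one_div]; exact this
  have h2 : Tendsto (fun J => ∑ j ∈ range J, r j) atTop (𝓝 (∑' m, F 0 m)) := by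
    simp_rw [hsum]
    simpa using hlim.const_sub (∑' m, F 0 m)
  rw [← tendsto_nhds_unique h2 hr]
  exact hs.hasSum

lemma hs_conv {f g : ℕ → ℝ} {a b : ℝ} (h : HasSum g b) (e : ∀ n, f n = g n) (hab : a = b) :
    HasSum f a := by
  rw [hab, funext e]; exact h

lemma hasSum_tele (g : ℕ → ℝ) (hg : Antitone g) (l : Tendsto g atTop (𝓝 0)) :
    HasSum (fun m => g m - g (m + 1)) (g 0) := by
  rw [hasSum_iff_tendsto_nat_of_nonneg (fun i => sub_nonneg.2 (hg (Nat.le_succ i)))]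
  simp_rw [sum_range_sub']
  simpa using l.const_sub (g 0)

/-! ### The sum of `a n / n` -/

noncomputable def wA : ℕ → ℕ → ℝ
  | 0, n => cbA n
  | c + 1, n => wA c n * (((c : ℝ) + 1) / (c + 1 + n))

lemma wA_pos (c n : ℕ) : 0 < wA c n := by
  induction c with
  | zero => exact cbA_pos n
  | succ c ih => unfold wA; positivity

lemma wA_z (c : ℕ) : wA c 0 = 1 := by
  induction c with
  | zero => exact cbA_zero
  | succ c ih => unfold wA; rw [ih]; push_cast; field_simp; ring

lemma wA_rec (c n : ℕ) : wA c (n + 1) * ((c : ℝ) + 1 + n) = wA c n * ((n : ℝ) + 1 / 2) := by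
  induction c with
  | zero => unfold wA; push_cast; linarith [cbA_rec n]
  | succ c ih =>
    unfold wA; push_cast
    have e : wA c (n + 1) = wA c n * ((n : ℝ) + 1 / 2) / ((c : ℝ) + 1 + n) := by
      rw [eq_div_iff (by positivity)]; exact ih
    rw [e]; field_simp; ring

lemma wA_le (c n : ℕ) : wA c (n + 1) ≤ cbA (n + 1) / ((c : ℝ) + 1) := by
  induction c with
  | zero => unfold wA; simp
  | succ c ih =>
    unfold wA
    have hA := cbA_pos (n + 1)
    have h1 : ((c : ℝ) + 1) / (c + 1 + ((n + 1 : ℕ) : ℝ)) ≤ ((c : ℝ) + 1) / (c + 1 + 1) := by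
      push_cast
      gcongr
      have : (0 : ℝ) ≤ n := Nat.cast_nonneg n
      linarith
    calc _ ≤ cbA (n + 1) / ((c : ℝ) + 1) * (((c : ℝ) + 1) / (c + 1 + 1)) := by gcongr
      _ = _ := by push_cast; field_simp

lemma wA_le' (c n : ℕ) : wA c (n + 1) ≤ cbA (n + 1) := by
  refine (wA_le c n).trans (div_le_self (cbA_pos _).le ?_)
  have : (0 : ℝ) ≤ c := Nat.cast_nonneg c
  linarith

lemma wA_sub (c n : ℕ) :
    wA c n - wA c (n + 1) = wA c n * (((c : ℝ) + 1 / 2) / (c + 1 + n)) := by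
  have e : wA c (n + 1) = wA c n * ((n : ℝ) + 1 / 2) / ((c : ℝ) + 1 + n) := by
    rw [eq_div_iff (by positivity)]; exact wA_rec c n
  rw [e]; field_simp; ring

lemma wA_hasSum (c : ℕ) : HasSum (fun m => wA c (m + 1) - wA c (m + 1 + 1)) (wA c 1) := by
  refine hasSum_tele (fun m => wA c (m + 1)) (antitone_nat_of_succ_le fun m => ?_) ?_
  · have := wA_sub c (m + 1)
    have h2 : 0 ≤ wA c (m + 1) * (((c : ℝ) + 1 / 2) / (c + 1 + ((m + 1 : ℕ) : ℝ))) := by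
      have := wA_pos c (m + 1)
      positivity
    linarith
  · exact squeeze_zero (fun m => (wA_pos _ _).le) (fun m => wA_le' c m)
      ((tendsto_add_atTop_iff_nat 1).2 cbA_tendsto)

lemma log_tendsto : Tendsto (fun J : ℕ => (harmonic (2 * J) : ℝ) - harmonic J) atTop
    (𝓝 (Real.log 2)) := by
  have h1 := Real.tendsto_harmonic_sub_log
  have h2 : Tendsto (fun n : ℕ => 2 * n) atTop atTop :=
    tendsto_id.const_mul_atTop' (by norm_num)
  have h3 := ((h1.comp h2).sub h1).add_const (Real.log 2)
  simp only [sub_self, zero_add] at h3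
  refine h3.congr' ?_
  filter_upwards [eventually_gt_atTop 0] with n hn
  have : (n : ℝ) ≠ 0 := by positivity
  simp only [Function.comp]
  push_cast
  rw [Real.log_mul (by norm_num) this]
  ring

lemma harm_two (J : ℕ) : (harmonic (2 * (J + 1)) : ℝ) - harmonic (J + 1)
    = harmonic (2 * J) - harmonic J + (1 / (2 * (J : ℝ) + 1) - 1 / (2 * (J : ℝ) + 2)) := by
  rw [show 2 * (J + 1) = 2 * J + 1 + 1 by ring]
  simp only [harmonic_succ]
  push_cast
  field_simp
  ring

noncomputable def uA (n : ℕ) : ℝ := cbA n / n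

lemma uA_summable : Summable (fun m => uA (m + 1)) := by
  have h := (wA_hasSum 0).summable.mul_left 4
  refine Summable.of_nonneg_of_le (fun m => ?_) (fun m => ?_) h
  · unfold uA; have := cbA_pos (m + 1); positivity
  · rw [wA_sub]
    unfold uA wA
    have := cbA_pos (m + 1)
    push_cast
    rw [show 4 * (cbA (m + 1) * ((0 + 1 / 2) / ((0 : ℝ) + 1 + (m + 1))))
      = cbA (m + 1) * (2 / (m + 2)) by field_simp; ring, div_eq_mul_inv]
    gcongr
    rw [inv_eq_one_div, div_le_div_iff₀ (by positivity) (by positivity)]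
    have : (0 : ℝ) ≤ m := Nat.cast_nonneg m
    linarith

lemma uA_hasSum : HasSum (fun m => uA (m + 1)) (2 * Real.log 2) := by
  have key := tele_sum (fun c m => wA c (m + 1) / ((m : ℝ) + 1))
    (fun c => 2 * (1 / (2 * (c : ℝ) + 1) - 1 / (2 * (c : ℝ) + 2))) (2 * Real.log 2)
    (fun c m => by have := wA_pos c (m + 1); positivity)
    (by simpa [uA, wA] using uA_summable)
    (fun c m => by
      have := wA_le c m
      simp only [wA]
      rw [div_right_comm]
      gcongr)
    (fun c => by
      have h := (wA_hasSum c).div_const ((c : ℝ) + 1 / 2)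
      refine hs_conv (h) (fun m => ?_) ?_
      · show _ = _
        rw [wA_sub c (m + 1)]
        simp only [wA]
        push_cast
        field_simp
        ring
      · have h1 := wA_rec c 0
        rw [wA_z] at h1
        have e : wA c 1 = (1 / 2) / ((c : ℝ) + 1) := by
          rw [eq_div_iff (by positivity)]; simpa using h1
        rw [e]
        field_simp
        ring)
    (by
      have h := log_tendsto.const_mul 2
      refine h.congr fun J => ?_
      induction J with
      | zero => simp
      | succ J ih => rw [sum_range_succ, ← ih, harm_two]; ring)
  simpa [uA, wA] using key

/-! ### The inverse central binomial sum -/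

noncomputable def bA : ℕ → ℕ → ℝ
  | 0, m => 1 / (((m : ℝ) + 1) * cbA (m + 1))
  | j + 1, m => bA j m * (((j : ℝ) + 1 / 2) / (m + 1 + j + 1 / 2))

lemma bA_pos (j m : ℕ) : 0 < bA j m := by
  induction j with
  | zero => unfold bA; have := cbA_pos (m + 1); positivity
  | succ j ih => unfold bA; positivity

lemma bA_rec (j m : ℕ) : bA j (m + 1) = bA j m * (((m : ℝ) + 1) / (m + 1 + j + 1 / 2)) := by
  induction j with
  | zero =>
    unfold bA
    have h := cbA_rec (m + 1)
    have := cbA_pos (m + 1)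
    have e : cbA (m + 1 + 1) = cbA (m + 1) * ((m : ℝ) + 1 + 1 / 2) / ((m : ℝ) + 1 + 1) := by
      rw [eq_div_iff (by positivity)]; push_cast at h; linarith
    rw [e]; push_cast; field_simp; ring
  | succ j ih =>
    unfold bA; rw [ih]; push_cast; field_simp; ring

lemma bA_z (j : ℕ) : bA j 0 = 1 / ((j : ℝ) + 1 / 2) := by
  induction j with
  | zero =>
    have h := cbA_rec 0
    rw [cbA_zero] at h
    unfold bA
    norm_num at h
    simp [h]
  | succ j ih => unfold bA; rw [ih]; push_cast; field_simp; ring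

lemma bA_le (j m : ℕ) : bA j m ≤ bA 0 m / ((j : ℝ) + 1) := by
  have key : bA j m ≤ bA 0 m * ((1 / 2) / ((j : ℝ) + 1 / 2)) := by
    induction j with
    | zero => simp
    | succ j ih =>
      have h0 := bA_pos 0 m
      have h1 : ((j : ℝ) + 1 / 2) / (m + 1 + j + 1 / 2) ≤ ((j : ℝ) + 1 / 2) / (j + 1 + 1 / 2) := by
        have : (0 : ℝ) ≤ m := Nat.cast_nonneg m
        exact div_le_div_of_nonneg_left (by positivity) (by positivity) (by linarith)
      have e : bA (j + 1) m = bA j m * (((j : ℝ) + 1 / 2) / (m + 1 + j + 1 / 2)) := rfl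
      rw [e]
      calc _ ≤ bA 0 m * ((1 / 2) / ((j : ℝ) + 1 / 2)) * (((j : ℝ) + 1 / 2) / (j + 1 + 1 / 2)) := by
            gcongr
        _ = _ := by push_cast; field_simp
  refine key.trans ?_
  rw [div_eq_mul_one_div (bA 0 m)]
  have h0 := bA_pos 0 m
  gcongr ?_ * ?_
  rw [div_le_div_iff₀ (by positivity) (by positivity)]
  have : (0 : ℝ) ≤ j := Nat.cast_nonneg j
  linarith

lemma bA_sub (j m : ℕ) : bA j m - bA j (m + 1)
    = bA j m * (((j : ℝ) + 1 / 2) / (m + 1 + j + 1 / 2)) := by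
  rw [bA_rec]; field_simp; ring

lemma bA_sq_le (m : ℕ) : ((m : ℝ) + 1) * bA 0 m ^ 2 ≤ 4 := by
  induction m with
  | zero => rw [bA_z]; norm_num
  | succ m ih =>
    rw [bA_rec]; push_cast
    refine le_trans ?_ ih
    have h2 : ((m : ℝ) + 1 + 1) * (((m : ℝ) + 1) / (m + 1 + 0 + 1 / 2)) ^ 2 ≤ m + 1 := by
      rw [div_pow, ← mul_div_assoc, div_le_iff₀ (by positivity)]
      have : (0 : ℝ) ≤ m := Nat.cast_nonneg m
      nlinarith
    have h3 := mul_le_mul_of_nonneg_right h2 (sq_nonneg (bA 0 m))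
    nlinarith

lemma bA_tendsto (j : ℕ) : Tendsto (bA j) atTop (𝓝 0) := by
  have h : Tendsto (fun m => bA 0 m ^ 2) atTop (𝓝 0) := by
    have h1 : Tendsto (fun J : ℕ => 4 * (1 / ((J : ℝ) + 1))) atTop (𝓝 0) := by
      simpa using tendsto_one_div_add_atTop_nhds_zero_nat.const_mul (4 : ℝ)
    refine squeeze_zero (fun n => sq_nonneg _) (fun n => ?_) h1
    rw [mul_one_div, le_div_iff₀ (by positivity)]
    linarith [bA_sq_le n]
  have h2 := h.sqrt
  have h3 : Tendsto (bA 0) atTop (𝓝 0) := by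
    simpa [Real.sqrt_sq (bA_pos 0 _).le] using h2
  refine squeeze_zero (fun m => (bA_pos _ _).le) (fun m => ?_) h3
  refine (bA_le j m).trans (div_le_self (bA_pos _ _).le ?_)
  have : (0 : ℝ) ≤ j := Nat.cast_nonneg j
  linarith

lemma bA_hasSum (j : ℕ) : HasSum (fun m => bA j m - bA j (m + 1)) (1 / ((j : ℝ) + 1 / 2)) := by
  rw [← bA_z]
  refine hasSum_tele (bA j) (antitone_nat_of_succ_le fun m => ?_) (bA_tendsto j)
  have := bA_sub j m
  have h2 : 0 ≤ bA j m * (((j : ℝ) + 1 / 2) / (m + 1 + j + 1 / 2)) := by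
    have := bA_pos j m
    positivity
  linarith

lemma odd_sum : HasSum (fun j : ℕ => 1 / ((j : ℝ) + 1 / 2) ^ 2) (Real.pi ^ 2 / 2) := by
  have hz := hasSum_zeta_two
  have he : HasSum (fun n : ℕ => (1 : ℝ) / ((2 * n : ℕ) : ℝ) ^ 2) (Real.pi ^ 2 / 24) := by
    refine hs_conv (hz.div_const 4) (fun n => ?_) ?_
    · push_cast; rw [mul_pow, div_div, mul_comm]; norm_num
    · ring
  have ho : Summable (fun n : ℕ => (1 : ℝ) / ((2 * n + 1 : ℕ) : ℝ) ^ 2) :=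
    hz.summable.comp_injective (i := fun n : ℕ => 2 * n + 1) (fun a b h => by
      simp only at h; omega)
  have hh := (HasSum.even_add_odd (f := fun n : ℕ => (1 : ℝ) / (n : ℝ) ^ 2) he ho.hasSum).unique hz
  have := ho.hasSum.mul_left 4
  refine hs_conv (this) (fun n => ?_) ?_
  · push_cast; field_simp
    ring
  · linarith

lemma inv_hasSum : HasSum (fun m : ℕ => bA 0 m / ((m : ℝ) + 1)) (Real.pi ^ 2 / 2) := by
  refine tele_sum (fun j m => bA j m / ((m : ℝ) + 1))
    (fun j => 1 / ((j : ℝ) + 1 / 2) ^ 2) (Real.pi ^ 2 / 2)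
    (fun c m => by have := bA_pos c m; positivity) ?_
    (fun c m => by
      have := bA_le c m
      rw [div_right_comm]
      gcongr)
    (fun c => by
      have h := (bA_hasSum c).div_const ((c : ℝ) + 1 / 2)
      refine hs_conv (h) (fun m => ?_) ?_
      · show _ = _
        rw [bA_sub c m]
        simp only [bA]
        field_simp
        ring
      · field_simp) odd_sum.tendsto_sum_nat
  have h := (bA_hasSum 0).summable.mul_left 4
  refine Summable.of_nonneg_of_le (fun m => ?_) (fun m => ?_) h
  · have := bA_pos 0 m; positivity
  · rw [bA_sub]
    have := bA_pos 0 m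
    have hm : (0 : ℝ) ≤ m := Nat.cast_nonneg m
    rw [div_eq_mul_one_div, mul_left_comm]
    gcongr
    push_cast
    rw [← mul_div_assoc, div_le_div_iff₀ (by positivity) (by positivity)]
    linarith

/-! ### Convolutions -/

lemma conv_one (N : ℕ) : ∑ p ∈ antidiagonal N, cbA p.1 * cbA p.2 = 1 := by
  induction N with
  | zero => simp [cbA_zero]
  | succ N ih =>
    have hsw : ∑ p ∈ antidiagonal (N + 1), (p.2 : ℝ) * (cbA p.1 * cbA p.2)
        = ∑ p ∈ antidiagonal (N + 1), (p.1 : ℝ) * (cbA p.1 * cbA p.2) := by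
      rw [← Finset.Nat.sum_antidiagonal_swap]
      exact sum_congr rfl fun p _ => by simp only [Prod.fst_swap, Prod.snd_swap]; ring
    have h1 : ((N : ℝ) + 1) * ∑ p ∈ antidiagonal (N + 1), cbA p.1 * cbA p.2
        = 2 * ∑ p ∈ antidiagonal (N + 1), (p.1 : ℝ) * (cbA p.1 * cbA p.2) := by
      rw [two_mul]
      nth_rewrite 2 [← hsw]
      rw [← sum_add_distrib, mul_sum]
      refine sum_congr rfl fun p hp => ?_
      have : (p.1 : ℝ) + p.2 = N + 1 := by exact_mod_cast mem_antidiagonal.1 hp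
      rw [← this]; ring
    have hsw2 : ∑ p ∈ antidiagonal N, (p.2 : ℝ) * (cbA p.1 * cbA p.2)
        = ∑ p ∈ antidiagonal N, (p.1 : ℝ) * (cbA p.1 * cbA p.2) := by
      rw [← Finset.Nat.sum_antidiagonal_swap]
      exact sum_congr rfl fun p _ => by simp only [Prod.fst_swap, Prod.snd_swap]; ring
    have h3 : (N : ℝ) * ∑ p ∈ antidiagonal N, cbA p.1 * cbA p.2
        = 2 * ∑ p ∈ antidiagonal N, (p.1 : ℝ) * (cbA p.1 * cbA p.2) := by
      rw [two_mul]
      nth_rewrite 2 [← hsw2]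
      rw [← sum_add_distrib, mul_sum]
      refine sum_congr rfl fun p hp => ?_
      have : (p.1 : ℝ) + p.2 = N := by exact_mod_cast mem_antidiagonal.1 hp
      rw [← this]; ring
    have h2 : ∑ p ∈ antidiagonal (N + 1), (p.1 : ℝ) * (cbA p.1 * cbA p.2)
        = ∑ p ∈ antidiagonal N, (p.1 : ℝ) * (cbA p.1 * cbA p.2)
          + 1 / 2 * ∑ p ∈ antidiagonal N, cbA p.1 * cbA p.2 := by
      rw [Finset.Nat.sum_antidiagonal_succ, mul_sum, ← sum_add_distrib]
      simp only [Nat.cast_zero, zero_mul, zero_add]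
      refine sum_congr rfl fun p _ => ?_
      have := cbA_rec p.1
      push_cast
      linear_combination cbA p.2 * this
    have hN : ((N : ℝ) + 1) ≠ 0 := by positivity
    apply mul_left_cancel₀ hN
    rw [h1, h2, ih]
    rw [ih] at h3
    linarith

lemma mul_uA (n : ℕ) : (n : ℝ) * uA n = cbA n - if n = 0 then 1 else 0 := by
  rcases n with _ | n
  · simp [cbA_zero]
  · unfold uA; push_cast; field_simp; simp

lemma uA_zero : uA 0 = 0 := by simp [uA]

lemma conv_aux (N : ℕ) : ∑ p ∈ antidiagonal N, ((p.1 : ℝ) * uA p.1) * cbA p.2 = 1 - cbA N := by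
  have : ∀ p ∈ antidiagonal N, ((p.1 : ℝ) * uA p.1) * cbA p.2
      = cbA p.1 * cbA p.2 - if p = (0, N) then cbA N else 0 := by
    intro p hp
    have hp' := mem_antidiagonal.1 hp
    rw [mul_uA]
    by_cases h : p.1 = 0
    · have h2 : p = (0, N) := by ext <;> simp <;> omega
      subst h2; simp [sub_mul]
    · have h2 : p ≠ (0, N) := fun e => h (by rw [e])
      simp [h, h2]
  rw [sum_congr rfl this, sum_sub_distrib, conv_one, sum_ite_eq']
  simp

lemma conv_u (N : ℕ) : ∑ p ∈ antidiagonal N, uA p.1 * cbA p.2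
    = 2 * cbA N * (harmonic (2 * N) - harmonic N) := by
  induction N with
  | zero => simp [uA_zero]
  | succ N ih =>
    have h1 : ((N : ℝ) + 1) * ∑ p ∈ antidiagonal (N + 1), uA p.1 * cbA p.2
        = (1 - cbA (N + 1)) + ∑ p ∈ antidiagonal (N + 1), uA p.1 * ((p.2 : ℝ) * cbA p.2) := by
      rw [← conv_aux, ← sum_add_distrib, mul_sum]
      refine sum_congr rfl fun p hp => ?_
      have : (p.1 : ℝ) + p.2 = N + 1 := by exact_mod_cast mem_antidiagonal.1 hp
      rw [← this]; ring
    have h2 : ∑ p ∈ antidiagonal (N + 1), uA p.1 * ((p.2 : ℝ) * cbA p.2)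
        = ((N : ℝ) + 1 / 2) * (∑ p ∈ antidiagonal N, uA p.1 * cbA p.2) - (1 - cbA N) := by
      rw [← conv_aux, mul_sum, ← sum_sub_distrib, Finset.Nat.sum_antidiagonal_succ']
      simp only [Nat.cast_zero, zero_mul, mul_zero, zero_add, add_zero]
      refine sum_congr rfl fun p hp => ?_
      have h := cbA_rec p.2
      have : (p.1 : ℝ) + p.2 = N := by exact_mod_cast mem_antidiagonal.1 hp
      rw [← this]
      push_cast
      linear_combination uA p.1 * h
    have hN : ((N : ℝ) + 1) ≠ 0 := by positivity
    have hr := cbA_rec N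
    have e : cbA N = cbA (N + 1) * ((N : ℝ) + 1) / ((N : ℝ) + 1 / 2) := by
      rw [eq_div_iff (by positivity)]; linarith
    apply mul_left_cancel₀ hN
    rw [h1, h2, ih, harm_two, e]
    field_simp
    ring

lemma conv_uu (N : ℕ) : ((N : ℝ)) * ∑ p ∈ antidiagonal N, uA p.1 * uA p.2
    = 2 * (2 * cbA N * (harmonic (2 * N) - harmonic N) - uA N) := by
  have hsw : ∑ p ∈ antidiagonal N, ((p.1 : ℝ) * uA p.1) * uA p.2
      = ∑ p ∈ antidiagonal N, uA p.1 * ((p.2 : ℝ) * uA p.2) := by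
    rw [← Finset.Nat.sum_antidiagonal_swap]
    exact sum_congr rfl fun p _ => by simp only [Prod.fst_swap, Prod.snd_swap]; ring
  have h1 : (N : ℝ) * ∑ p ∈ antidiagonal N, uA p.1 * uA p.2
      = 2 * ∑ p ∈ antidiagonal N, uA p.1 * ((p.2 : ℝ) * uA p.2) := by
    rw [two_mul]
    nth_rewrite 1 [← hsw]
    rw [← sum_add_distrib, mul_sum]
    refine sum_congr rfl fun p hp => ?_
    have : (p.1 : ℝ) + p.2 = N := by exact_mod_cast mem_antidiagonal.1 hp
    rw [← this]; ring
  have h2 : ∀ p ∈ antidiagonal N, uA p.1 * ((p.2 : ℝ) * uA p.2)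
      = uA p.1 * cbA p.2 - if p = (N, 0) then uA N else 0 := by
    intro p hp
    have hp' := mem_antidiagonal.1 hp
    rw [mul_uA]
    by_cases h : p.2 = 0
    · have h2 : p = (N, 0) := by ext <;> simp <;> omega
      subst h2; simp [mul_sub]
    · have h2 : p ≠ (N, 0) := fun e => h (by rw [e])
      simp [h, h2]
  rw [h1, sum_congr rfl h2, sum_sub_distrib, conv_u, sum_ite_eq']
  simp

lemma second_hasSum : HasSum (fun n : ℕ =>
      (Nat.centralBinom (n + 1) : ℝ) / ((4 : ℝ) ^ (n + 1) * ((n : ℝ) + 1) ^ 2) *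
        (2 + 2 * ((n : ℝ) + 1) * ((harmonic n : ℝ) - (harmonic (2 * n + 1) : ℝ))))
      (-2 * Real.log 2 ^ 2) := by
  have hu : HasSum uA (2 * Real.log 2) := by
    have := (hasSum_nat_add_iff (f := uA) 1).1 uA_hasSum
    simpa [uA_zero] using this
  have hn : Summable (fun n => ‖uA n‖) := hu.summable.norm
  have hs := (summable_norm_sum_mul_antidiagonal_of_summable_norm hn hn).of_norm
  have ht := tsum_mul_tsum_eq_tsum_sum_antidiagonal_of_summable_norm hn hn
  rw [hu.tsum_eq] at ht
  have hc := hs.hasSum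
  rw [← ht] at hc
  have hc1 := (hasSum_nat_add_iff' 1).2 hc
  have hc2 := hc1.mul_left (-1 / 2)
  refine hs_conv (hc2) (fun n => ?_) ?_
  · show _ = _
    have h := conv_uu (n + 1)
    have hn1 : ((n + 1 : ℕ) : ℝ) ≠ 0 := by positivity
    have e : ∑ p ∈ antidiagonal (n + 1), uA p.1 * uA p.2
        = 2 * (2 * cbA (n + 1) * (harmonic (2 * (n + 1)) - harmonic (n + 1)) - uA (n + 1))
          / ((n + 1 : ℕ) : ℝ) := by
      rw [eq_div_iff hn1, mul_comm]; exact h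
    rw [e, show 2 * (n + 1) = 2 * n + 1 + 1 by ring, harmonic_succ (2 * n + 1), harmonic_succ n]
    unfold uA cbA
    push_cast
    field_simp
    ring
  · simp [uA_zero]; ring

lemma first_hasSum : HasSum (fun n : ℕ =>
      (4 : ℝ) ^ n / (((n : ℝ) + 1) ^ 2 * (Nat.centralBinom (n + 1) : ℝ))) (Real.pi ^ 2 / 8) := by
  have h := inv_hasSum.div_const 4
  refine hs_conv (h) (fun n => ?_) ?_
  · show _ = _
    have h0 : (0 : ℝ) < (Nat.centralBinom (n + 1) : ℝ) := by
      exact_mod_cast Nat.centralBinom_pos (n + 1)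
    unfold bA cbA
    field_simp
    ring
  · ring

/-- 2·∑_{n=1}^∞ 4^{n-1}/(n²·C(2n,n)) = π²/4 + log²2
+ (1/2)·∑_{n=1}^∞ (C(2n,n)/(4ⁿ·n²))·(2 + 2n(H_{n-1} - H_{2n-1})), both series converging. -/
theorem inverse_centralBinom_nsq_identity :
    Summable (fun n : ℕ =>
      (4 : ℝ) ^ n / (((n : ℝ) + 1) ^ 2 * (Nat.centralBinom (n + 1) : ℝ))) ∧
    Summable (fun n : ℕ =>
      (Nat.centralBinom (n + 1) : ℝ) / ((4 : ℝ) ^ (n + 1) * ((n : ℝ) + 1) ^ 2) *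
        (2 + 2 * ((n : ℝ) + 1) * ((harmonic n : ℝ) - (harmonic (2 * n + 1) : ℝ)))) ∧
    2 * ∑' n : ℕ, (4 : ℝ) ^ n / (((n : ℝ) + 1) ^ 2 * (Nat.centralBinom (n + 1) : ℝ)) =
      Real.pi ^ 2 / 4 + Real.log 2 ^ 2 +
        (1 / 2) * ∑' n : ℕ,
          (Nat.centralBinom (n + 1) : ℝ) / ((4 : ℝ) ^ (n + 1) * ((n : ℝ) + 1) ^ 2) *
            (2 + 2 * ((n : ℝ) + 1) * ((harmonic n : ℝ) - (harmonic (2 * n + 1) : ℝ))) := by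
  refine ⟨first_hasSum.summable, second_hasSum.summable, ?_⟩
  rw [first_hasSum.tsum_eq, second_hasSum.tsum_eq]
  ring
end

section
/- 2·∑_{n=1}^∞ 4^{n-1} / (n³ · C(2n,n)) = -ζ(3) + (1/3)·π²·log 2 + (4/3)·log³2 - (1/2)·∑_{n=1}^∞ (C(2n,n)/(4ⁿ · n³))·(3 + 2n(H_{n-1} - H_{2n-1})), where both series converge. -/
open Filter Topology Finset

namespace ICB

noncomputable def a (m : ℕ) : ℝ := (Nat.centralBinom m : ℝ) / 4 ^ m
noncomputable def O (m : ℕ) : ℝ := ∑ j ∈ range m, 1 / ((j : ℝ) + 1 / 2)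
noncomputable def b (m : ℕ) : ℝ := a m * O m

lemma a_pos (m : ℕ) : 0 < a m := by
  unfold a
  have := Nat.centralBinom_pos m
  positivity

lemma a_zero : a 0 = 1 := by simp [a]

lemma a_succ (m : ℕ) : ((m : ℝ) + 1) * a (m + 1) = (m + 1 / 2) * a m := by
  unfold a
  have h := Nat.succ_mul_centralBinom_succ m
  have h' : ((m : ℝ) + 1) * (Nat.centralBinom (m + 1) : ℝ)
      = 2 * (2 * m + 1) * Nat.centralBinom m := by exact_mod_cast h
  rw [pow_succ, mul_div_assoc', h']
  field_simp
  ring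

lemma O_nonneg (m : ℕ) : 0 ≤ O m := by
  unfold O
  positivity

lemma O_succ (m : ℕ) : O (m + 1) = O m + 1 / ((m : ℝ) + 1 / 2) := by
  unfold O
  rw [sum_range_succ]

lemma b_nonneg (m : ℕ) : 0 ≤ b m := mul_nonneg (a_pos m).le (O_nonneg m)

lemma b_succ (m : ℕ) : ((m : ℝ) + 1) * b (m + 1) = (m + 1 / 2) * b m + a m := by
  unfold b
  rw [← mul_assoc, a_succ, O_succ]
  have : (m : ℝ) + 1 / 2 ≠ 0 := by positivity
  field_simp

lemma a_one : a 1 = 1 / 2 := by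
  have := a_succ 0
  rw [a_zero] at this
  norm_num at this ⊢
  exact this

lemma b_one : b 1 = 1 := by
  simp [b, a_one, O]

lemma a_sq_bound (m : ℕ) : a m ^ 2 * (m + 1) ≤ 1 := by
  induction m with
  | zero => simp [a_zero]
  | succ m ih =>
    have h : a (m + 1) = (m + 1 / 2) * a m / (m + 1) := by
      rw [← a_succ]; field_simp
    rw [h]
    push_cast
    have hm : (0 : ℝ) ≤ m := Nat.cast_nonneg m
    refine le_trans ?_ ih
    rw [div_pow, div_mul_eq_mul_div, div_le_iff₀ (by positivity)]
    have : ((m : ℝ) + 1 / 2) ^ 2 * (m + 1 + 1) ≤ (m + 1) * (m + 1) ^ 2 := by nlinarith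
    nlinarith [mul_le_mul_of_nonneg_left this (sq_nonneg (a m))]

lemma a_bound (m : ℕ) : a m ≤ ((m : ℝ) + 1) ^ (-(1 / 2) : ℝ) := by
  have hm : (0 : ℝ) < m + 1 := by positivity
  rw [Real.rpow_neg hm.le, ← Real.sqrt_eq_rpow]
  rw [← one_div, le_div_iff₀ (by positivity)]
  have := a_sq_bound m
  rw [← abs_of_nonneg (a := a m * √(m + 1)) (by have := a_pos m; positivity)]
  rw [← sq_le_one_iff_abs_le_one, mul_pow, Real.sq_sqrt hm.le]
  exact this

lemma O_bound (m : ℕ) : O m ≤ 10 * ((m : ℝ) + 1) ^ ((1 / 4) : ℝ) := by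
  have h1 : O m ≤ 2 * (harmonic m : ℝ) := by
    unfold O harmonic
    push_cast
    rw [mul_sum]
    refine sum_le_sum fun j _ => ?_
    rw [← one_div, mul_one_div, div_le_div_iff₀ (by positivity) (by positivity)]
    linarith
  have h2 := harmonic_le_one_add_log m
  have h3 : Real.log m ≤ Real.log (m + 1) := by
    rcases Nat.eq_zero_or_pos m with h | h
    · simp [h]
    · exact Real.log_le_log (by exact_mod_cast h) (by linarith)
  have h4 := Real.log_le_rpow_div (x := (m : ℝ) + 1) (by positivity) (ε := 1 / 4) (by norm_num)
  have h5 : 1 ≤ ((m : ℝ) + 1) ^ ((1 / 4) : ℝ) :=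
    Real.one_le_rpow (by linarith [(Nat.cast_nonneg m : (0:ℝ) ≤ m)]) (by norm_num)
  linarith

lemma b_bound (m : ℕ) : b m ≤ 10 * ((m : ℝ) + 1) ^ (-(1 / 4) : ℝ) := by
  have hm : (0 : ℝ) < m + 1 := by positivity
  unfold b
  calc a m * O m ≤ ((m : ℝ) + 1) ^ (-(1 / 2) : ℝ) * (10 * ((m : ℝ) + 1) ^ ((1 / 4) : ℝ)) :=
        mul_le_mul (a_bound m) (O_bound m) (O_nonneg m) (by positivity)
    _ = 10 * (((m : ℝ) + 1) ^ (-(1 / 2) : ℝ) * ((m : ℝ) + 1) ^ ((1 / 4) : ℝ)) := by ring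
    _ = _ := by rw [← Real.rpow_add hm]; norm_num

lemma tendsto_pow_aux (ε : ℝ) (hε : 0 < ε) :
    Tendsto (fun m : ℕ => ((m : ℝ) + 1) ^ (-ε)) atTop (𝓝 0) :=
  (tendsto_rpow_neg_atTop hε).comp
    (tendsto_atTop_add_const_right _ _ tendsto_natCast_atTop_atTop)

lemma a_tendsto : Tendsto a atTop (𝓝 0) :=
  squeeze_zero (fun m => (a_pos m).le) a_bound (tendsto_pow_aux _ (by norm_num))

lemma b_tendsto : Tendsto b atTop (𝓝 0) :=
  squeeze_zero b_nonneg b_bound (by simpa using (tendsto_pow_aux (1/4) (by norm_num)).const_mul 10)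

lemma sb : Summable (fun m : ℕ => b (m + 1) / ((m : ℝ) + 1)) := by
  have h : Summable (fun m : ℕ => 10 * ((m : ℝ) + 1) ^ (-(5 / 4) : ℝ)) := by
    have := (Real.summable_nat_rpow (p := -(5/4))).2 (by norm_num)
    have := ((summable_nat_add_iff 1).2 this).mul_left 10
    simpa using this
  refine Summable.of_nonneg_of_le (fun m => div_nonneg (b_nonneg _) (by positivity)) (fun m => ?_) h
  have hm : (0 : ℝ) < m + 1 := by positivity
  rw [div_le_iff₀ hm, mul_assoc, ← Real.rpow_add_one hm.ne']
  refine (b_bound _).trans ?_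
  push_cast
  have := Real.rpow_le_rpow_of_nonpos hm (by linarith : (m : ℝ) + 1 ≤ m + 1 + 1) (z := -(1/4)) (by norm_num)
  norm_num at this ⊢
  linarith

lemma sa : Summable (fun m : ℕ => a (m + 1) / ((m : ℝ) + 1)) := by
  refine Summable.of_nonneg_of_le (fun m => div_nonneg (a_pos _).le (by positivity)) (fun m => ?_) sb
  have h : 1 ≤ O (m + 1) := by
    unfold O
    have := single_le_sum (f := fun j : ℕ => 1 / ((j : ℝ) + 1 / 2)) (s := range (m + 1))
      (fun i _ => by positivity) (mem_range.2 (Nat.succ_pos m))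
    norm_num at this ⊢
    linarith
  unfold b
  gcongr
  have := a_pos (m + 1)
  nlinarith

lemma tele (f t : ℕ → ℝ) (hf : Summable f) (h : ∀ m, f m = t (m + 1) - t m)
    (ht : Tendsto t atTop (𝓝 0)) : ∑' m, f m = - t 0 := by
  have h1 := hf.hasSum.tendsto_sum_nat
  have h2 : Tendsto (fun n => ∑ i ∈ range n, f i) atTop (𝓝 (0 - t 0)) := by
    simp_rw [h, sum_range_sub]
    exact ht.sub_const _
  rw [tendsto_nhds_unique h1 h2]; ring

/-- generic sums -/
noncomputable def F (c : ℕ → ℝ) (s : ℝ) : ℝ := ∑' m : ℕ, c (m + 1) / ((m : ℝ) + 1 + s)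
noncomputable def Q (c : ℕ → ℝ) (k : ℕ) : ℝ := ∑' m : ℕ, c (m + 1) / ((m : ℝ) + 1) ^ k
noncomputable def P (s : ℝ) : ℝ := ∑' m : ℕ, a (m + 1) * ((m : ℝ) + 1) / ((m : ℝ) + 1 + s) ^ 2
noncomputable def g (s : ℝ) : ℝ := 1 + s * F a s


lemma sF (c : ℕ → ℝ) (hc : ∀ m, 0 ≤ c m)
    (hs : Summable (fun m : ℕ => c (m + 1) / ((m : ℝ) + 1))) {s : ℝ} (h : 0 ≤ s) : Summable (fun m : ℕ => c (m + 1) / ((m : ℝ) + 1 + s)) := by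
  refine Summable.of_nonneg_of_le (fun m => div_nonneg (hc _) (by positivity)) (fun m => ?_) hs
  have := hc (m + 1)
  exact div_le_div_of_nonneg_left this (by positivity) (by linarith)

lemma sQ (c : ℕ → ℝ) (hc : ∀ m, 0 ≤ c m)
    (hs : Summable (fun m : ℕ => c (m + 1) / ((m : ℝ) + 1))) {k : ℕ} (h : 1 ≤ k) : Summable (fun m : ℕ => c (m + 1) / ((m : ℝ) + 1) ^ k) := by
  refine Summable.of_nonneg_of_le (fun m => div_nonneg (hc _) (by positivity)) (fun m => ?_) hs
  have := hc (m + 1)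
  have h1 : (1 : ℝ) ≤ m + 1 := by linarith [(Nat.cast_nonneg m : (0:ℝ) ≤ m)]
  gcongr
  exact le_self_pow₀ h1 (by omega)

lemma F_nonneg (c : ℕ → ℝ) (hc : ∀ m, 0 ≤ c m) {s : ℝ} (h : 0 ≤ s) : 0 ≤ F c s :=
  tsum_nonneg fun m => div_nonneg (hc _) (by positivity)

lemma sF_mono (c : ℕ → ℝ) (hc : ∀ m, 0 ≤ c m)
    (hs : Summable (fun m : ℕ => c (m + 1) / ((m : ℝ) + 1))) {s t : ℝ} (h : 0 ≤ s) (hst : s ≤ t) : s * F c s ≤ t * F c t := by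
  unfold F
  rw [← tsum_mul_left, ← tsum_mul_left]
  refine Summable.tsum_le_tsum (fun m => ?_) ((sF c hc hs h).mul_left _)
    ((sF c hc hs (h.trans hst)).mul_left _)
  have ht : 0 ≤ t := h.trans hst
  have := hc (m + 1)
  rw [mul_div_assoc', mul_div_assoc', div_le_div_iff₀ (by positivity) (by positivity)]
  have hm : (0 : ℝ) ≤ m + 1 := by positivity
  nlinarith [mul_nonneg this (mul_nonneg hm (sub_nonneg.2 hst))]

/-- expansion with remainder -/
lemma F_exp (c : ℕ → ℝ) (hc : ∀ m, 0 ≤ c m)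
    (hs : Summable (fun m : ℕ => c (m + 1) / ((m : ℝ) + 1))) : ∃ K : ℝ, ∀ s : ℝ, 0 < s → s ≤ 1 →
    |F c s - (Q c 1 - s * Q c 2 + s ^ 2 * Q c 3)| ≤ K * s ^ 3 := by
  refine ⟨Q c 4, fun s h0 h1 => ?_⟩
  have e : F c s - (Q c 1 - s * Q c 2 + s ^ 2 * Q c 3) = ∑' m : ℕ, (c (m + 1) / ((m : ℝ) + 1 + s)
      - (c (m + 1) / ((m : ℝ) + 1) ^ 1 - s * (c (m + 1) / ((m : ℝ) + 1) ^ 2)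
        + s ^ 2 * (c (m + 1) / ((m : ℝ) + 1) ^ 3))) := by
    have s1 := sQ c hc hs (k := 1) (by norm_num)
    have s2 := (sQ c hc hs (k := 2) (by norm_num)).mul_left s
    have s3 := (sQ c hc hs (k := 3) (by norm_num)).mul_left (s ^ 2)
    rw [Summable.tsum_sub (sF c hc hs h0.le) ((s1.sub s2).add s3),
      Summable.tsum_add (s1.sub s2) s3, Summable.tsum_sub s1 s2, tsum_mul_left, tsum_mul_left]
    rfl
  have s4 := (sQ c hc hs (k := 4) (by norm_num)).mul_right (s ^ 3)
  rw [e, ← Real.norm_eq_abs]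
  unfold Q
  rw [← tsum_mul_right]
  refine tsum_of_norm_bounded s4.hasSum fun m => ?_
  have hm : (0 : ℝ) < m + 1 := by positivity
  have := hc (m + 1)
  have e2 : c (m + 1) / ((m : ℝ) + 1 + s)
      - (c (m + 1) / ((m : ℝ) + 1) ^ 1 - s * (c (m + 1) / ((m : ℝ) + 1) ^ 2)
        + s ^ 2 * (c (m + 1) / ((m : ℝ) + 1) ^ 3)) =
      - (c (m + 1) * s ^ 3 / (((m : ℝ) + 1) ^ 3 * (m + 1 + s))) := by
    field_simp; ring
  rw [e2, norm_neg, Real.norm_of_nonneg (by positivity), div_mul_eq_mul_div]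
  gcongr
  rw [pow_succ]
  exact mul_le_mul_of_nonneg_left (by linarith) (by positivity)



lemma sP {s : ℝ} (h : 0 ≤ s) :
    Summable (fun m : ℕ => a (m + 1) * ((m : ℝ) + 1) / ((m : ℝ) + 1 + s) ^ 2) := by
  refine Summable.of_nonneg_of_le (fun m => ?_) (fun m => ?_) (sF a (fun m => (a_pos m).le) sa h)
  · have := a_pos (m + 1); positivity
  · have := a_pos (m + 1)
    rw [div_le_div_iff₀ (by positivity) (by positivity)]
    have hm : (0 : ℝ) ≤ m + 1 := by positivity
    have : (m + 1) * ((m : ℝ) + 1 + s) ≤ ((m : ℝ) + 1 + s) ^ 2 := by nlinarith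
    nlinarith

lemma P_le {s : ℝ} (h : 0 ≤ s) : P s ≤ F a s := by
  refine Summable.tsum_le_tsum (fun m => ?_) (sP h) (sF a (fun m => (a_pos m).le) sa h)
  have := a_pos (m + 1)
  rw [div_le_div_iff₀ (by positivity) (by positivity)]
  have hm : (0 : ℝ) ≤ m + 1 := by positivity
  have : (m + 1) * ((m : ℝ) + 1 + s) ≤ ((m : ℝ) + 1 + s) ^ 2 := by nlinarith
  nlinarith

lemma P_nonneg {s : ℝ} (h : 0 ≤ s) : 0 ≤ P s :=
  tsum_nonneg fun m => by have := a_pos (m + 1); positivity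

lemma P_exp : ∃ K : ℝ, ∀ s : ℝ, 0 < s → s ≤ 1 →
    |P s - (Q a 1 - 2 * s * Q a 2 + 3 * s ^ 2 * Q a 3)| ≤ K * s ^ 3 := by
  refine ⟨4 * Q a 4, fun s h0 h1 => ?_⟩
  have hc : ∀ m, 0 ≤ a m := fun m => (a_pos m).le
  have e : P s - (Q a 1 - 2 * s * Q a 2 + 3 * s ^ 2 * Q a 3) =
     ∑' m : ℕ, (a (m + 1) * ((m : ℝ) + 1) / ((m : ℝ) + 1 + s) ^ 2
      - (a (m + 1) / ((m : ℝ) + 1) ^ 1 - 2 * s * (a (m + 1) / ((m : ℝ) + 1) ^ 2)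
        + 3 * s ^ 2 * (a (m + 1) / ((m : ℝ) + 1) ^ 3))) := by
    have s1 := sQ a hc sa (k := 1) (by norm_num)
    have s2 := (sQ a hc sa (k := 2) (by norm_num)).mul_left (2 * s)
    have s3 := (sQ a hc sa (k := 3) (by norm_num)).mul_left (3 * s ^ 2)
    rw [Summable.tsum_sub (sP h0.le) ((s1.sub s2).add s3),
      Summable.tsum_add (s1.sub s2) s3, Summable.tsum_sub s1 s2, tsum_mul_left, tsum_mul_left]
    rfl
  have s4 := ((sQ a hc sa (k := 4) (by norm_num)).mul_left 4).mul_right (s ^ 3)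
  rw [e, ← Real.norm_eq_abs]
  unfold Q
  rw [← tsum_mul_left, ← tsum_mul_right]
  refine tsum_of_norm_bounded s4.hasSum fun m => ?_
  have hm : (0 : ℝ) < m + 1 := by positivity
  have := a_pos (m + 1)
  have e2 : a (m + 1) * ((m : ℝ) + 1) / ((m : ℝ) + 1 + s) ^ 2
      - (a (m + 1) / ((m : ℝ) + 1) ^ 1 - 2 * s * (a (m + 1) / ((m : ℝ) + 1) ^ 2)
        + 3 * s ^ 2 * (a (m + 1) / ((m : ℝ) + 1) ^ 3)) =
      - (a (m + 1) * s ^ 3 * (4 * (m + 1) + 3 * s) / (((m : ℝ) + 1) ^ 3 * (m + 1 + s) ^ 2)) := by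
    field_simp; ring
  rw [e2, norm_neg, Real.norm_of_nonneg (by positivity), mul_div_assoc', div_mul_eq_mul_div,
    div_le_div_iff₀ (by positivity) (by positivity)]
  have : (4 * ((m : ℝ) + 1) + 3 * s) * (m + 1) ≤ 4 * (m + 1 + s) ^ 2 := by nlinarith
  have h5 : 0 ≤ a (m + 1) * s ^ 3 * ((m : ℝ) + 1) ^ 3 := by positivity
  nlinarith [mul_le_mul_of_nonneg_left this h5]

lemma tend_aux (c : ℕ → ℝ) (hc : ∀ m, 0 ≤ c m) (h : Tendsto c atTop (𝓝 0)) {s : ℝ} (hs : 0 ≤ s) :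
    Tendsto (fun m : ℕ => ((m : ℝ) + 1) * c (m + 1) / (m + 1 + s)) atTop (𝓝 0) := by
  refine squeeze_zero (fun m => ?_) (fun m => ?_) (h.comp (tendsto_add_atTop_nat 1))
  · have := hc (m + 1); positivity
  · have := hc (m + 1)
    simp only [Function.comp]
    rw [div_le_iff₀ (by positivity)]
    nlinarith [mul_nonneg this hs]

lemma F_rec {s : ℝ} (h : 0 ≤ s) :
    s * F a s - (s + 1 / 2) * F a (s + 1) = - (1 / 2) / (1 + s) := by
  have hc : ∀ m, 0 ≤ a m := fun m => (a_pos m).le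
  have s1 := (sF a hc sa h).mul_left s
  have s2 := (sF a hc sa (by linarith : 0 ≤ s + 1)).mul_left (s + 1 / 2)
  have key := tele _ (fun m : ℕ => ((m : ℝ) + 1) * a (m + 1) / (m + 1 + s)) (s1.sub s2) ?_
    (tend_aux a hc a_tendsto h)
  · rw [Summable.tsum_sub s1 s2, tsum_mul_left, tsum_mul_left] at key
    unfold F
    rw [key]
    simp [a_one]; ring
  · intro m
    have := a_succ (m + 1)
    push_cast at this ⊢
    rw [this]
    field_simp
    ring

lemma Fb_rec {s : ℝ} (h : 0 ≤ s) :
    s * F b s - (s + 1 / 2) * F b (s + 1) + F a (s + 1) = - 1 / (1 + s) := by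
  have hc : ∀ m, 0 ≤ a m := fun m => (a_pos m).le
  have s1 := (sF b b_nonneg sb h).mul_left s
  have s2 := (sF b b_nonneg sb (by linarith : 0 ≤ s + 1)).mul_left (s + 1 / 2)
  have s3 := (sF a hc sa (by linarith : 0 ≤ s + 1))
  have key := tele _ (fun m : ℕ => ((m : ℝ) + 1) * b (m + 1) / (m + 1 + s)) ((s1.sub s2).add s3) ?_
    (tend_aux b b_nonneg b_tendsto h)
  · rw [Summable.tsum_add (s1.sub s2) s3, Summable.tsum_sub s1 s2, tsum_mul_left, tsum_mul_left]
      at key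
    unfold F
    rw [key]
    simp [b_one]; ring
  · intro m
    have := b_succ (m + 1)
    push_cast at this ⊢
    rw [this]
    field_simp
    ring

lemma P_rec {s : ℝ} (h : 0 ≤ s) :
    P s - (s + 1 / 2) / (s + 1) * P (s + 1) - 1 / (2 * (s + 1)) * F a (s + 1)
      = 1 / 2 / (1 + s) ^ 2 := by
  have hc : ∀ m, 0 ≤ a m := fun m => (a_pos m).le
  have s1 := sP h
  have s2 := (sP (by linarith : 0 ≤ s + 1)).mul_left ((s + 1 / 2) / (s + 1))
  have s3 := (sF a hc sa (by linarith : 0 ≤ s + 1)).mul_left (1 / (2 * (s + 1)))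
  have key := tele _ (fun m : ℕ => - (((m : ℝ) + 1) * a (m + 1) / (m + 1 + s) ^ 2))
    ((s1.sub s2).sub s3) ?_ ?_
  · rw [Summable.tsum_sub (s1.sub s2) s3, Summable.tsum_sub s1 s2, tsum_mul_left, tsum_mul_left]
      at key
    unfold F P
    rw [key]
    simp [a_one]
  · intro m
    have := a_succ (m + 1)
    push_cast at this ⊢
    rw [this]
    field_simp
    ring
  · have := tend_aux a hc a_tendsto h
    rw [← neg_zero]
    refine Tendsto.neg (squeeze_zero (fun m => ?_) (fun m => ?_) this)
    · have := hc (m + 1); positivity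
    · have := hc (m + 1)
      gcongr
      refine le_self_pow₀ ?_ (by norm_num)
      linarith [(Nat.cast_nonneg m : (0:ℝ) ≤ m)]

lemma g_pos {s : ℝ} (h : 0 ≤ s) : 0 < g s := by
  unfold g
  have := F_nonneg a (fun m => (a_pos m).le) h
  positivity

lemma g_mono {s t : ℝ} (h : 0 ≤ s) (hst : s ≤ t) : g s ≤ g t := by
  unfold g
  linarith [sF_mono a (fun m => (a_pos m).le) sa h hst]

lemma g_rec {s : ℝ} (h : 0 ≤ s) : g s = g (s + 1) * ((s + 1 / 2) / (s + 1)) := by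
  have := F_rec h
  unfold g
  field_simp at this ⊢
  linarith

lemma Pg_rec {s : ℝ} (h : 0 ≤ s) :
    P s / g s = P (s + 1) / g (s + 1) + (1 / (s + 1 / 2) - 1 / (s + 1)) := by
  have h1 := P_rec h
  have h2 := g_pos (by linarith : 0 ≤ s + 1)
  have h3 : P s = (s + 1 / 2) / (s + 1) * P (s + 1) + g (s + 1) / (2 * (s + 1) ^ 2) := by
    have h4 : P s = (s + 1 / 2) / (s + 1) * P (s + 1) + 1 / (2 * (s + 1)) * F a (s + 1)
      + 1 / 2 / (1 + s) ^ 2 := by linarith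
    rw [h4, add_comm 1 s]
    unfold g
    field_simp
    ring
  rw [g_rec h, h3]
  field_simp
  ring

lemma hg_rec {s : ℝ} (h : 0 ≤ s) :
    (s + 1) * F b (s + 1) / g (s + 1) = s * F b s / g s + 1 / (s + 1 / 2) := by
  have h1 := Fb_rec h
  have h2 := g_pos (by linarith : 0 ≤ s + 1)
  have h3 : s * F b s = (s + 1 / 2) * F b (s + 1) - g (s + 1) / (s + 1) := by
    unfold g
    field_simp at h1 ⊢
    linarith
  rw [g_rec h, h3]
  field_simp
  ring


lemma Pg_iter {s : ℝ} (h : 0 ≤ s) (N : ℕ) :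
    ∑ j ∈ range N, (1 / ((j : ℝ) + 1 / 2 + s) - 1 / ((j : ℝ) + 1 + s))
      = P s / g s - P (s + N) / g (s + N) := by
  induction N with
  | zero => simp
  | succ N ih =>
    rw [sum_range_succ, ih]
    have := Pg_rec (s := s + N) (by positivity)
    push_cast
    rw [show s + (N + 1 : ℝ) = s + N + 1 by ring, this,
      show (N : ℝ) + 1 / 2 + s = s + N + 1 / 2 by ring, show (N : ℝ) + 1 + s = s + N + 1 by ring]
    ring

lemma D_hasSum {s : ℝ} (h : 0 ≤ s) :
    HasSum (fun j : ℕ => 1 / ((j : ℝ) + 1 / 2 + s) - 1 / ((j : ℝ) + 1 + s)) (P s / g s) := by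
  rw [hasSum_iff_tendsto_nat_of_nonneg]
  · simp_rw [Pg_iter h]
    have : Tendsto (fun N : ℕ => P (s + N) / g (s + N)) atTop (𝓝 0) := by
      refine squeeze_zero' (g := fun N : ℕ => 1 / (N : ℝ)) (Eventually.of_forall fun N => ?_) ?_
        tendsto_one_div_atTop_nhds_zero_nat
      · have hN : 0 ≤ s + N := by positivity
        exact div_nonneg (P_nonneg hN) (g_pos hN).le
      · filter_upwards [eventually_gt_atTop 0] with N hN0
        have hN : 0 ≤ s + N := by positivity
        have hN' : (0 : ℝ) < N := by exact_mod_cast hN0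
        rw [div_le_div_iff₀ (g_pos hN) hN']
        have h1 := P_le hN
        have h2 := P_nonneg hN
        have h3 := F_nonneg a (fun m => (a_pos m).le) hN
        unfold g
        nlinarith [mul_nonneg h h3, mul_le_mul_of_nonneg_right h1 hN'.le]
    simpa using this.const_sub (P s / g s)
  · intro j
    rw [sub_nonneg]
    exact one_div_le_one_div_of_le (by positivity) (by linarith)

noncomputable def ph (s : ℝ) : ℝ := s * F b s / g s

lemma ph_iter {s : ℝ} (h : 0 ≤ s) (N : ℕ) :
    ph (s + N) = ph s + ∑ j ∈ range N, 1 / ((j : ℝ) + 1 / 2 + s) := by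
  induction N with
  | zero => simp
  | succ N ih =>
    have := hg_rec (s := s + N) (by positivity)
    rw [sum_range_succ, ← add_assoc, ← ih]
    push_cast
    unfold ph
    rw [show s + (N + 1 : ℝ) = s + N + 1 by ring, this,
      show (N : ℝ) + 1 / 2 + s = s + N + 1 / 2 by ring]

lemma ph_nat (N : ℕ) : ph N = O N := by
  have := ph_iter le_rfl N
  simpa [ph, O] using this

lemma E_tend {s : ℝ} (h : 0 ≤ s) (h1 : s ≤ 1) :
    Tendsto (fun N : ℕ => ph (s + N) - O N) atTop (𝓝 0) := by
  have hlim : Tendsto (fun N : ℕ => O N / ((N : ℝ) + 1)) atTop (𝓝 0) := by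
    refine squeeze_zero (g := fun N : ℕ => 10 * ((N : ℝ) + 1) ^ (-(3 / 4) : ℝ))
      (fun N => div_nonneg (O_nonneg N) (by positivity)) (fun N => ?_)
      (by simpa using (tendsto_pow_aux (3/4) (by norm_num)).const_mul 10)
    have hm : (0 : ℝ) < N + 1 := by positivity
    rw [div_le_iff₀ hm, mul_assoc, ← Real.rpow_add_one hm.ne']
    have := O_bound N
    norm_num at this ⊢
    exact this
  have hlim2 : Tendsto (fun N : ℕ => 1 / ((N : ℝ) + 1)) atTop (𝓝 0) :=
    tendsto_one_div_add_atTop_nhds_zero_nat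
  refine tendsto_of_tendsto_of_tendsto_of_le_of_le
    (g := fun N : ℕ => - (O N / ((N : ℝ) + 1)))
    (h := fun N : ℕ => 4 * (1 / ((N : ℝ) + 1)) + O N / ((N : ℝ) + 1))
    (by simpa using hlim.neg) (by simpa using (hlim2.const_mul 4).add hlim) ?_ ?_
  · intro N
    have hN : (0 : ℝ) ≤ N := Nat.cast_nonneg N
    have hO := O_nonneg N
    have k1 : (N : ℝ) * F b N = g N * O N := by
      rw [← ph_nat, ph]; have := g_pos hN; field_simp
    have k2 := sF_mono b b_nonneg sb hN (by linarith : (N : ℝ) ≤ s + N)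
    have k3 := g_mono (by positivity : 0 ≤ s + N) (by linarith : s + N ≤ (N : ℝ) + 1)
    have k4 := g_rec hN
    have p1 := g_pos (by positivity : 0 ≤ s + N)
    have p2 := g_pos (by positivity : 0 ≤ (N : ℝ) + 1)
    have : O N * ((N + 1 / 2) / (N + 1)) ≤ ph (s + N) := by
      unfold ph
      rw [le_div_iff₀ p1]
      calc O N * ((N + 1 / 2) / (N + 1)) * g (s + N)
          ≤ O N * ((N + 1 / 2) / (N + 1)) * g (N + 1) := by gcongr
        _ = g N * O N := by rw [k4]; ring
        _ ≤ _ := by rw [← k1]; exact k2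
    have e : O N * (((N : ℝ) + 1 / 2) / (N + 1)) = O N - O N / (N + 1) / 2 := by
      field_simp; ring
    have : 0 ≤ O N / ((N : ℝ) + 1) := by positivity
    simp only
    linarith
  · intro N
    have hN : (0 : ℝ) ≤ N := Nat.cast_nonneg N
    have hO := O_nonneg N
    have hN1 : (0 : ℝ) ≤ N + 1 := by positivity
    have k1 : ((N : ℝ) + 1) * F b (N + 1) = g (N + 1) * O (N + 1) := by
      have := ph_nat (N + 1)
      push_cast at this
      rw [← this, ph]; have := g_pos hN1; field_simp
    have k2 := sF_mono b b_nonneg sb (by positivity : 0 ≤ s + N) (by linarith : s + N ≤ (N : ℝ) + 1)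
    have k3 := g_mono hN (by linarith : (N : ℝ) ≤ s + N)
    have k4 := g_rec hN
    have p0 := g_pos hN
    have p1 := g_pos (by positivity : 0 ≤ s + N)
    have p2 := g_pos (by positivity : 0 ≤ (N : ℝ) + 1)
    have hO1 := O_nonneg (N + 1)
    have : ph (s + N) ≤ O (N + 1) * ((N + 1) / (N + 1 / 2)) := by
      unfold ph
      rw [div_le_iff₀ p1]
      calc (s + N) * F b (s + N) ≤ g (N + 1) * O (N + 1) := by rw [← k1]; exact k2
        _ = O (N + 1) * ((N + 1) / (N + 1 / 2)) * g N := by rw [k4]; field_simp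
        _ ≤ _ := by gcongr
    rw [O_succ] at this
    have e1 : 1 / ((N : ℝ) + 1 / 2) * ((N + 1) / (N + 1 / 2)) ≤ 4 * (1 / ((N : ℝ) + 1)) := by
      rw [div_mul_div_comm, mul_one_div, div_le_div_iff₀ (by positivity) (by positivity)]
      nlinarith
    have e2 : O N * (((N : ℝ) + 1) / (N + 1 / 2)) ≤ O N + O N / (N + 1) := by
      rw [show O N + O N / ((N : ℝ) + 1) = O N * ((N + 2) / (N + 1)) by field_simp; ring]
      refine mul_le_mul_of_nonneg_left ?_ hO
      rw [div_le_div_iff₀ (by positivity) (by positivity)]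
      nlinarith
    rw [add_mul] at this
    simp only
    linarith

lemma E_hasSum {s : ℝ} (h : 0 ≤ s) (h1 : s ≤ 1) :
    HasSum (fun j : ℕ => 1 / ((j : ℝ) + 1 / 2) - 1 / ((j : ℝ) + 1 / 2 + s)) (ph s) := by
  rw [hasSum_iff_tendsto_nat_of_nonneg]
  · have := (E_tend h h1).const_sub (ph s)
    rw [sub_zero] at this
    refine this.congr fun N => ?_
    rw [sum_sub_distrib, ph_iter h]
    unfold O
    ring
  · intro j
    rw [sub_nonneg]
    exact one_div_le_one_div_of_le (by positivity) (by linarith)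

lemma hs_congr {f h : ℕ → ℝ} {x y : ℝ} (H : HasSum f x) (hf : ∀ n, h n = f n) (e : y = x) :
    HasSum h y := by
  rw [e, show h = f from funext hf]
  exact H

/-! constants -/

noncomputable def Z (k : ℕ) : ℝ := ∑' j : ℕ, 1 / ((j : ℝ) + 1) ^ k

lemma Z_hasSum {k : ℕ} (hk : 2 ≤ k) : HasSum (fun j : ℕ => 1 / ((j : ℝ) + 1) ^ k) (Z k) := by
  have := (Real.summable_one_div_nat_pow (p := k)).2 (by omega)
  have := (summable_nat_add_iff 1).2 this
  push_cast at this
  exact this.hasSum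

lemma Zh_hasSum {k : ℕ} (hk : 2 ≤ k) :
    HasSum (fun j : ℕ => 1 / ((j : ℝ) + 1 / 2) ^ k) ((2 ^ k - 1) * Z k) := by
  have h1 := Z_hasSum hk
  -- odd part
  have s1 : Summable (fun j : ℕ => 1 / ((j : ℝ) + 1 / 2) ^ k) := by
    refine Summable.of_nonneg_of_le (fun j => by positivity) (fun j => ?_)
      (h1.summable.mul_left (2 ^ k))
    rw [mul_one_div, div_le_div_iff₀ (by positivity) (by positivity), one_mul, ← mul_pow]
    gcongr
    linarith
  have h2 : HasSum (fun j : ℕ => 1 / (((2 * j + 1 : ℕ) : ℝ) + 1) ^ k) (1 / 2 ^ k * Z k) := by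
    refine (h1.mul_left (1 / 2 ^ k)).congr_fun ?_
    intro j
    push_cast
    rw [div_mul_div_comm, one_mul, ← mul_pow]
    congr 2; ring
  have h3 : HasSum (fun j : ℕ => 1 / (((2 * j : ℕ) : ℝ) + 1) ^ k)
      (1 / 2 ^ k * ∑' j : ℕ, 1 / ((j : ℝ) + 1 / 2) ^ k) := by
    refine (s1.hasSum.mul_left (1 / 2 ^ k)).congr_fun ?_
    intro j
    push_cast
    rw [div_mul_div_comm, one_mul, ← mul_pow]
    congr 2; ring
  have h4 := (HasSum.even_add_odd (f := fun j : ℕ => 1 / ((j : ℝ) + 1) ^ k) h3 h2).unique h1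
  have : ∑' j : ℕ, 1 / ((j : ℝ) + 1 / 2) ^ k = (2 ^ k - 1) * Z k := by
    generalize ∑' j : ℕ, 1 / ((j : ℝ) + 1 / 2) ^ k = w at h4 ⊢
    field_simp at h4
    linarith
  rw [← this]
  exact s1.hasSum

lemma Z_two : Z 2 = Real.pi ^ 2 / 6 := by
  have h := hasSum_zeta_two
  rw [← hasSum_nat_add_iff' 1] at h
  simp at h
  refine (Z_hasSum le_rfl).unique ?_
  simpa using h

lemma Z_three : (Z 3 : ℂ) = riemannZeta 3 := by
  have h := zeta_nat_eq_tsum_of_gt_one (k := 3) (by norm_num)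
  have s := (Real.summable_one_div_nat_pow (p := 3)).2 (by norm_num)
  have e : ∑' n : ℕ, 1 / (n : ℝ) ^ 3 = Z 3 := by
    rw [s.tsum_eq_zero_add]
    simp [Z]
  rw [← e]
  push_cast at h ⊢
  rw [h]

lemma harm_odd (N : ℕ) : O N = 2 * (harmonic (2 * N) : ℝ) - (harmonic N : ℝ) := by
  induction N with
  | zero => simp [O]
  | succ N ih =>
    rw [O_succ, ih, show 2 * (N + 1) = 2 * N + 1 + 1 by ring, harmonic_succ, harmonic_succ,
      harmonic_succ]
    push_cast
    field_simp
    ring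

lemma D0_hasSum : HasSum (fun j : ℕ => 1 / ((j : ℝ) + 1 / 2) - 1 / ((j : ℝ) + 1)) (2 * Real.log 2) := by
  rw [hasSum_iff_tendsto_nat_of_nonneg]
  · have h := Real.tendsto_harmonic_sub_log
    have h2 : Tendsto (fun n : ℕ => 2 * n) atTop atTop :=
      tendsto_id.const_mul_atTop' (by norm_num)
    have h3 := (((h.comp h2).sub h).const_mul 2).add_const (2 * Real.log 2)
    simp only [sub_self, mul_zero, zero_add] at h3
    refine h3.congr' ?_
    filter_upwards [eventually_gt_atTop 0] with N hN
    have hN' : (N : ℝ) ≠ 0 := by positivity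
    rw [sum_sub_distrib]
    have e1 : ∑ j ∈ range N, 1 / ((j : ℝ) + 1 / 2) = O N := rfl
    have e2 : ∑ j ∈ range N, 1 / ((j : ℝ) + 1) = (harmonic N : ℝ) := by
      simp [harmonic]
    rw [e1, e2, harm_odd]
    simp only [Function.comp]
    push_cast
    rw [Real.log_mul (by norm_num) hN']
    ring
  · intro j
    rw [sub_nonneg]
    exact one_div_le_one_div_of_le (by positivity) (by linarith)

lemma D_exp : ∃ K : ℝ, ∀ s : ℝ, 0 < s → s ≤ 1 →
    |P s / g s - (2 * Real.log 2 - s * (2 * Z 2) + s ^ 2 * (6 * Z 3))| ≤ K * s ^ 3 := by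
  refine ⟨(2 ^ 4 - 1) * Z 4, fun s h0 h1 => ?_⟩
  have a2 := ((Zh_hasSum (k := 2) le_rfl).sub (Z_hasSum (k := 2) le_rfl)).mul_left s
  have a3 := ((Zh_hasSum (k := 3) (by norm_num)).sub (Z_hasSum (k := 3) (by norm_num))).mul_left (s ^ 2)
  have := (D_hasSum h0.le).sub ((D0_hasSum.sub a2).add a3)
  have e : P s / g s - (2 * Real.log 2 - s * (2 * Z 2) + s ^ 2 * (6 * Z 3))
    = P s / g s - (2 * Real.log 2 - s * ((2 ^ 2 - 1) * Z 2 - Z 2) + s ^ 2 * ((2 ^ 3 - 1) * Z 3 - Z 3)) := by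
    ring
  rw [e, ← this.tsum_eq, ← Real.norm_eq_abs]
  refine tsum_of_norm_bounded ((Zh_hasSum (k := 4) (by norm_num)).mul_right (s ^ 3)) fun j => ?_
  have hx : (0 : ℝ) < j + 1 / 2 := by positivity
  have hxy : (j : ℝ) + 1 / 2 ≤ j + 1 := by linarith
  generalize (j : ℝ) + 1 / 2 = x at *
  generalize (j : ℝ) + 1 = y at *
  have hy : 0 < y := hx.trans_le hxy
  have e2 : 1 / (x + s) - 1 / (y + s) - (1 / x - 1 / y - s * (1 / x ^ 2 - 1 / y ^ 2)
      + s ^ 2 * (1 / x ^ 3 - 1 / y ^ 3)) = s ^ 3 / (y ^ 3 * (y + s)) - s ^ 3 / (x ^ 3 * (x + s)) := by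
    field_simp; ring
  rw [e2, Real.norm_eq_abs, abs_sub_comm, abs_of_nonneg]
  · have q1 : 0 ≤ s ^ 3 / (y ^ 3 * (y + s)) := by positivity
    have q2 : s ^ 3 / (x ^ 3 * (x + s)) ≤ 1 / x ^ 4 * s ^ 3 := by
      rw [div_mul_eq_mul_div, one_mul, pow_succ x 3]
      refine div_le_div_of_nonneg_left (by positivity) (by positivity) ?_
      exact mul_le_mul_of_nonneg_left (by linarith) (by positivity)
    linarith
  · rw [sub_nonneg]
    gcongr

lemma E_exp : ∃ K : ℝ, ∀ s : ℝ, 0 < s → s ≤ 1 →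
    |ph s - (s * (3 * Z 2) - s ^ 2 * (7 * Z 3))| ≤ K * s ^ 3 := by
  refine ⟨(2 ^ 4 - 1) * Z 4, fun s h0 h1 => ?_⟩
  have a2 := (Zh_hasSum (k := 2) le_rfl).mul_left s
  have a3 := (Zh_hasSum (k := 3) (by norm_num)).mul_left (s ^ 2)
  have := (E_hasSum h0.le h1).sub (a2.sub a3)
  have e : ph s - (s * (3 * Z 2) - s ^ 2 * (7 * Z 3))
    = ph s - (s * ((2 ^ 2 - 1) * Z 2) - s ^ 2 * ((2 ^ 3 - 1) * Z 3)) := by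
    ring
  rw [e, ← this.tsum_eq, ← Real.norm_eq_abs]
  refine tsum_of_norm_bounded ((Zh_hasSum (k := 4) (by norm_num)).mul_right (s ^ 3)) fun j => ?_
  have hx : (0 : ℝ) < j + 1 / 2 := by positivity
  generalize (j : ℝ) + 1 / 2 = x at *
  have e2 : 1 / x - 1 / (x + s) - (s * (1 / x ^ 2) - s ^ 2 * (1 / x ^ 3))
      = s ^ 3 / (x ^ 3 * (x + s)) := by
    field_simp; ring
  rw [e2, Real.norm_of_nonneg (by positivity)]
  rw [div_mul_eq_mul_div, one_mul, pow_succ x 3]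
  refine div_le_div_of_nonneg_left (by positivity) (by positivity) ?_
  exact mul_le_mul_of_nonneg_left (by linarith) (by positivity)

/-! comparison of expansions -/

def Bd (f : ℝ → ℝ) : Prop := ∃ K : ℝ, ∀ s : ℝ, 0 < s → s ≤ 1 → |f s| ≤ K

lemma Bd.add {f h : ℝ → ℝ} (hf : Bd f) (hh : Bd h) : Bd (fun s => f s + h s) := by
  obtain ⟨K, hK⟩ := hf
  obtain ⟨K', hK'⟩ := hh
  exact ⟨K + K', fun s h0 h1 => (abs_add_le _ _).trans (add_le_add (hK s h0 h1) (hK' s h0 h1))⟩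

lemma Bd.mul {f h : ℝ → ℝ} (hf : Bd f) (hh : Bd h) : Bd (fun s => f s * h s) := by
  obtain ⟨K, hK⟩ := hf
  obtain ⟨K', hK'⟩ := hh
  refine ⟨K * K', fun s h0 h1 => ?_⟩
  rw [abs_mul]
  exact mul_le_mul (hK s h0 h1) (hK' s h0 h1) (abs_nonneg _) ((abs_nonneg _).trans (hK s h0 h1))

lemma Bd.neg {f : ℝ → ℝ} (hf : Bd f) : Bd (fun s => - f s) := by
  obtain ⟨K, hK⟩ := hf
  exact ⟨K, fun s h0 h1 => by rw [abs_neg]; exact hK s h0 h1⟩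

lemma Bd.sub {f h : ℝ → ℝ} (hf : Bd f) (hh : Bd h) : Bd (fun s => f s - h s) := by
  simpa only [sub_eq_add_neg] using hf.add hh.neg

lemma Bd.const (c : ℝ) : Bd (fun _ => c) := ⟨|c|, fun _ _ _ => le_rfl⟩
lemma Bd.id : Bd (fun s => s) := ⟨1, fun s h0 h1 => by rwa [abs_of_pos h0]⟩
lemma Bd.pow (k : ℕ) : Bd (fun s => s ^ k) :=
  ⟨1, fun s h0 h1 => by rw [abs_of_nonneg (by positivity)]; exact pow_le_one₀ h0.le h1⟩

lemma exp_rem {f p : ℝ → ℝ}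
    (h : ∃ K : ℝ, ∀ s : ℝ, 0 < s → s ≤ 1 → |f s - p s| ≤ K * s ^ 3) :
    ∃ r : ℝ → ℝ, Bd r ∧ ∀ s : ℝ, 0 < s → s ≤ 1 → f s = p s + r s * s ^ 3 := by
  obtain ⟨K, hK⟩ := h
  refine ⟨fun s => (f s - p s) / s ^ 3, ⟨K, fun s h0 h1 => ?_⟩, fun s h0 h1 => ?_⟩
  · rw [abs_div, abs_of_pos (by positivity : 0 < s ^ 3), div_le_iff₀ (by positivity)]
    exact hK s h0 h1
  · field_simp; ring

lemma Bd.zero_of {c : ℝ} {r : ℝ → ℝ} (hr : Bd r) (h : ∀ s : ℝ, 0 < s → s ≤ 1 → c = s * r s) :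
    c = 0 := by
  obtain ⟨K, hK⟩ := hr
  have hl : Tendsto (fun n : ℕ => K * (1 / ((n : ℝ) + 1))) atTop (𝓝 0) := by
    simpa using (tendsto_one_div_add_atTop_nhds_zero_nat (𝕜 := ℝ)).const_mul K
  have : |c| ≤ 0 := by
    refine ge_of_tendsto' hl fun n => ?_
    have h0 : (0 : ℝ) < 1 / ((n : ℝ) + 1) := by positivity
    have h1 : 1 / ((n : ℝ) + 1) ≤ 1 := by
      rw [div_le_one (by positivity)]
      linarith [(Nat.cast_nonneg n : (0:ℝ) ≤ n)]
    rw [h _ h0 h1, abs_mul, abs_of_pos h0, mul_comm]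
    exact mul_le_mul_of_nonneg_right (hK _ h0 h1) h0.le
  exact abs_nonpos_iff.1 this

lemma uniq {c0 c1 c2 : ℝ} {r : ℝ → ℝ} (hr : Bd r)
    (h : ∀ s : ℝ, 0 < s → s ≤ 1 → c0 + c1 * s + c2 * s ^ 2 = s ^ 3 * r s) :
    c0 = 0 ∧ c1 = 0 ∧ c2 = 0 := by
  have h0 : c0 = 0 := by
    refine Bd.zero_of (((Bd.pow 2).mul hr).sub ((Bd.const c1).add ((Bd.const c2).mul Bd.id)))
      fun s a b => ?_
    linear_combination h s a b
  subst h0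
  have h1 : c1 = 0 := by
    refine Bd.zero_of ((Bd.id.mul hr).sub (Bd.const c2)) fun s a b => ?_
    refine mul_left_cancel₀ a.ne' ?_
    linear_combination h s a b
  subst h1
  refine ⟨rfl, rfl, ?_⟩
  refine Bd.zero_of hr fun s a b => ?_
  refine mul_left_cancel₀ (pow_ne_zero 2 a.ne') ?_
  linear_combination h s a b

lemma eqs1 : Q a 1 = 2 * Real.log 2 ∧ Q a 2 = Z 2 - 2 * Real.log 2 ^ 2 ∧
    Q a 3 = 2 * Z 3 - 2 * Real.log 2 * Z 2 + 4 / 3 * Real.log 2 ^ 3 := by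
  obtain ⟨r2, b2, h2⟩ := exp_rem (F_exp a (fun m => (a_pos m).le) sa)
  obtain ⟨r1, b1, h1⟩ := exp_rem P_exp
  obtain ⟨r3, b3, h3⟩ := exp_rem D_exp
  set L := Real.log 2
  have key := uniq (c0 := Q a 1 - 2 * L) (c1 := - 2 * Q a 2 + 2 * Z 2 - Q a 1 * (2 * L))
    (c2 := 3 * Q a 3 - 6 * Z 3 + Q a 1 * (2 * Z 2) + Q a 2 * (2 * L))
    (r := fun s => r3 s + (Q a 3 + r2 s * s) * (2 * L - s * (2 * Z 2) + s ^ 2 * (6 * Z 3) + s ^ 3 * r3 s)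
      + Q a 1 * (6 * Z 3 + s * r3 s) - Q a 2 * (s * (6 * Z 3) - 2 * Z 2 + s ^ 2 * r3 s) - r1 s) ?_ ?_
  · obtain ⟨k0, k1, k2⟩ := key
    have e1 : Q a 1 = 2 * L := by linarith
    rw [e1] at k1 k2
    have e2 : Q a 2 = Z 2 - 2 * L ^ 2 := by linarith
    rw [e2] at k2
    exact ⟨e1, e2, by linarith⟩
  · repeat' first
      | exact b1 | exact b2 | exact b3 | exact Bd.id | exact Bd.pow _ | exact Bd.const _
      | apply Bd.sub | apply Bd.add | apply Bd.mul
  · intro s h0 h1'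
    have hg := g_pos h0.le
    have e : P s = g s * (P s / g s) := by field_simp
    have hgs : g s = 1 + s * F a s := rfl
    rw [h3 s h0 h1', h1 s h0 h1', hgs, h2 s h0 h1'] at e
    linear_combination e

lemma eqs2 : Q b 1 = 3 * Z 2 ∧ Q b 2 = 7 * Z 3 - 6 * Real.log 2 * Z 2 := by
  obtain ⟨r1, b1, h1⟩ := exp_rem (F_exp b b_nonneg sb)
  obtain ⟨r2, b2, h2⟩ := exp_rem (F_exp a (fun m => (a_pos m).le) sa)
  obtain ⟨r3, b3, h3⟩ := exp_rem E_exp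
  have key := uniq (c0 := 0) (c1 := Q b 1 - 3 * Z 2)
    (c2 := - Q b 2 + 7 * Z 3 - Q a 1 * (3 * Z 2))
    (r := fun s => r3 s + (s * Q a 3 - Q a 2 + s ^ 2 * r2 s) * (3 * Z 2 - s * (7 * Z 3) + s ^ 2 * r3 s)
      + Q a 1 * (s * r3 s - 7 * Z 3) - (Q b 3 + r1 s * s)) ?_ ?_
  · obtain ⟨k0, k1, k2⟩ := key
    rw [eqs1.1] at k2
    exact ⟨by linarith, by linarith⟩
  · repeat' first
      | exact b1 | exact b2 | exact b3 | exact Bd.id | exact Bd.pow _ | exact Bd.const _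
      | apply Bd.sub | apply Bd.add | apply Bd.mul
  · intro s h0 h1'
    have hg := g_pos h0.le
    have e : s * F b s = g s * ph s := by unfold ph; field_simp
    have hgs : g s = 1 + s * F a s := rfl
    rw [h3 s h0 h1', h1 s h0 h1', hgs, h2 s h0 h1'] at e
    linear_combination e

/-! the first series -/

lemma g_nat (n : ℕ) : g n = 1 / a n := by
  induction n with
  | zero => simp [g, a_zero]
  | succ n ih =>
    have h := g_rec (Nat.cast_nonneg n)
    have h2 := a_succ n
    have p1 := a_pos n
    have p2 := a_pos (n + 1)
    rw [ih] at h
    push_cast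
    have h3 : a n = (n + 1) * a (n + 1) / (n + 1 / 2) := by rw [h2]; field_simp
    rw [h3] at h
    field_simp at h ⊢
    linarith

lemma harm_tele (m : ℕ) :
    HasSum (fun n : ℕ => 1 / ((n : ℝ) + 1) - 1 / ((n : ℝ) + 1 + m)) (harmonic m : ℝ) := by
  induction m with
  | zero => simp
  | succ m ih =>
    have h : HasSum (fun n : ℕ => 1 / ((n : ℝ) + 1 + m) - 1 / ((n : ℝ) + 1 + (m + 1)))
        (1 / ((m : ℝ) + 1)) := by
      rw [hasSum_iff_tendsto_nat_of_nonneg]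
      · have e : ∀ N : ℕ, ∑ n ∈ range N, (1 / ((n : ℝ) + 1 + m) - 1 / ((n : ℝ) + 1 + (m + 1)))
            = 1 / ((m : ℝ) + 1) - 1 / ((N : ℝ) + 1 + m) := by
          intro N
          induction N with
          | zero => simp [add_comm]
          | succ N ih => rw [sum_range_succ, ih]; push_cast; ring
        simp_rw [e]
        have : Tendsto (fun N : ℕ => 1 / ((N : ℝ) + 1 + m)) atTop (𝓝 0) := by
          refine squeeze_zero (fun N => by positivity) (fun N => ?_)
            (tendsto_one_div_add_atTop_nhds_zero_nat (𝕜 := ℝ))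
          exact one_div_le_one_div_of_le (by positivity) (by linarith [(Nat.cast_nonneg m : (0:ℝ) ≤ m)])
        simpa using this.const_sub (1 / ((m : ℝ) + 1))
      · intro j
        rw [sub_nonneg]
        exact one_div_le_one_div_of_le (by positivity) (by linarith)
    have := ih.add h
    rw [harmonic_succ]
    push_cast
    exact hs_congr this (fun n => by ring) (by rw [one_div])

lemma inner_hasSum (m : ℕ) :
    HasSum (fun n : ℕ => 1 / (((n : ℝ) + 1) ^ 2 * ((m : ℝ) + 1 + (n + 1))))
      (Z 2 / (m + 1) - (harmonic (m + 1) : ℝ) / (m + 1) ^ 2) := by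
  have h1 := (Z_hasSum (k := 2) le_rfl).mul_left (1 / ((m : ℝ) + 1))
  have h2 := (harm_tele (m + 1)).mul_left (1 / ((m : ℝ) + 1) ^ 2)
  have := h1.sub h2
  refine hs_congr this (fun n => ?_) (by ring)
  push_cast
  field_simp
  ring

lemma H_le_O (m : ℕ) : (harmonic m : ℝ) ≤ O m := by
  unfold O harmonic
  push_cast
  refine sum_le_sum fun j _ => ?_
  rw [← one_div]
  exact one_div_le_one_div_of_le (by positivity) (by linarith)

lemma H_nonneg (m : ℕ) : 0 ≤ (harmonic m : ℝ) := by
  unfold harmonic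
  push_cast
  positivity

lemma sR : Summable (fun m : ℕ => a (m + 1) * (harmonic (m + 1) : ℝ) / ((m : ℝ) + 1) ^ 2) := by
  refine Summable.of_nonneg_of_le (fun m => ?_) (fun m => ?_)
    (sQ b b_nonneg sb (k := 2) (by norm_num))
  · have := a_pos (m + 1); have := H_nonneg (m + 1); positivity
  · have := a_pos (m + 1)
    have := H_le_O (m + 1)
    unfold b
    gcongr

lemma double : HasSum (fun n : ℕ => 1 / ((n : ℝ) + 1) ^ 2 * F a (n + 1))
    (Z 2 * Q a 1 - ∑' m : ℕ, a (m + 1) * (harmonic (m + 1) : ℝ) / ((m : ℝ) + 1) ^ 2) := by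
  have hc : ∀ m, 0 ≤ a m := fun m => (a_pos m).le
  let f : ℕ × ℕ → ℝ := fun p => a (p.1 + 1) *
    (1 / (((p.2 : ℝ) + 1) ^ 2 * ((p.1 : ℝ) + 1 + (p.2 + 1))))
  have h1 : ∀ m : ℕ, HasSum (fun n => f (m, n))
      (a (m + 1) * (Z 2 / (m + 1) - (harmonic (m + 1) : ℝ) / (m + 1) ^ 2)) :=
    fun m => (inner_hasSum m).mul_left _
  have h2 : HasSum (fun m : ℕ => a (m + 1) * (Z 2 / (m + 1) - (harmonic (m + 1) : ℝ) / (m + 1) ^ 2))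
      (Z 2 * Q a 1 - ∑' m : ℕ, a (m + 1) * (harmonic (m + 1) : ℝ) / ((m : ℝ) + 1) ^ 2) := by
    have := ((sQ a hc sa (k := 1) le_rfl).hasSum.mul_left (Z 2)).sub sR.hasSum
    exact hs_congr this (fun m => by ring) rfl
  have hf : Summable f := by
    refine (summable_prod_of_nonneg (fun p => ?_)).2 ⟨fun m => (h1 m).summable, ?_⟩
    · have := hc (p.1 + 1); simp only [f, Pi.zero_apply]; positivity
    · refine h2.summable.congr fun m => ?_
      exact (h1 m).tsum_eq.symm
  have h3 : HasSum f (Z 2 * Q a 1 - ∑' m : ℕ, a (m + 1) * (harmonic (m + 1) : ℝ) / ((m : ℝ) + 1) ^ 2) := by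
    have := hf.hasSum.prod_fiberwise h1
    rw [← this.unique h2]
    exact hf.hasSum
  have h4 := (Equiv.prodComm ℕ ℕ).hasSum_iff.2 h3
  refine h4.prod_fiberwise fun n => ?_
  have := (sF a hc sa (s := (n : ℝ) + 1) (by positivity)).hasSum.mul_left (1 / ((n : ℝ) + 1) ^ 2)
  refine hs_congr this (fun m => ?_) rfl
  simp only [f, Function.comp, Equiv.prodComm_apply, Prod.swap]
  field_simp

lemma A_hasSum : HasSum (fun n : ℕ =>
      (4 : ℝ) ^ n / (((n : ℝ) + 1) ^ 3 * (Nat.centralBinom (n + 1) : ℝ)))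
    (1 / 4 * (Z 3 + (Z 2 * Q a 1
      - ∑' m : ℕ, a (m + 1) * (harmonic (m + 1) : ℝ) / ((m : ℝ) + 1) ^ 2))) := by
  have := ((Z_hasSum (k := 3) (by norm_num)).add double).mul_left (1 / 4)
  refine hs_congr this (fun n => ?_) rfl
  have h := g_nat (n + 1)
  push_cast at h
  have h2 : F a (n + 1) = (1 / a (n + 1) - 1) / (n + 1) := by
    rw [← h]; unfold g; field_simp; ring
  rw [h2]
  unfold a
  have := Nat.centralBinom_pos (n + 1)
  have : (0 : ℝ) < Nat.centralBinom (n + 1) := by exact_mod_cast this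
  field_simp
  ring

lemma S_hasSum : HasSum (fun n : ℕ =>
      (Nat.centralBinom (n + 1) : ℝ) / ((4 : ℝ) ^ (n + 1) * ((n : ℝ) + 1) ^ 3) *
        (3 + 2 * ((n : ℝ) + 1) * ((harmonic n : ℝ) - (harmonic (2 * n + 1) : ℝ))))
    (2 * Q a 3 + (∑' m : ℕ, a (m + 1) * (harmonic (m + 1) : ℝ) / ((m : ℝ) + 1) ^ 2) - Q b 2) := by
  have hc : ∀ m, 0 ≤ a m := fun m => (a_pos m).le
  have := (((sQ a hc sa (k := 3) (by norm_num)).hasSum.mul_left 2).add sR.hasSum).sub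
    (sQ b b_nonneg sb (k := 2) (by norm_num)).hasSum
  refine hs_congr this (fun n => ?_) rfl
  unfold b
  rw [harm_odd, show 2 * (n + 1) = 2 * n + 1 + 1 by ring, harmonic_succ (2 * n + 1), harmonic_succ n]
  unfold a
  push_cast
  field_simp
  ring

end ICB


/-- 2·∑_{n=1}^∞ 4^{n-1}/(n³·C(2n,n)) = -ζ(3) + (1/3)·π²·log 2 + (4/3)·log³2
- (1/2)·∑_{n=1}^∞ (C(2n,n)/(4ⁿ·n³))·(3 + 2n(H_{n-1} - H_{2n-1})), both series converging. -/
theorem inverse_centralBinom_ncube_identity :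
    Summable (fun n : ℕ =>
      (4 : ℝ) ^ n / (((n : ℝ) + 1) ^ 3 * (Nat.centralBinom (n + 1) : ℝ))) ∧
    Summable (fun n : ℕ =>
      (Nat.centralBinom (n + 1) : ℝ) / ((4 : ℝ) ^ (n + 1) * ((n : ℝ) + 1) ^ 3) *
        (3 + 2 * ((n : ℝ) + 1) * ((harmonic n : ℝ) - (harmonic (2 * n + 1) : ℝ)))) ∧
    ((2 * ∑' n : ℕ,
        (4 : ℝ) ^ n / (((n : ℝ) + 1) ^ 3 * (Nat.centralBinom (n + 1) : ℝ)) : ℝ) : ℂ) =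
      -riemannZeta 3 + (1 / 3) * (Real.pi : ℂ) ^ 2 * (Real.log 2 : ℂ)
        + (4 / 3) * (Real.log 2 : ℂ) ^ 3
        - (1 / 2) * ((∑' n : ℕ,
            (Nat.centralBinom (n + 1) : ℝ) / ((4 : ℝ) ^ (n + 1) * ((n : ℝ) + 1) ^ 3) *
              (3 + 2 * ((n : ℝ) + 1) *
                ((harmonic n : ℝ) - (harmonic (2 * n + 1) : ℝ))) : ℝ) : ℂ) := by
  refine ⟨ICB.A_hasSum.summable, ICB.S_hasSum.summable, ?_⟩
  rw [ICB.A_hasSum.tsum_eq, ICB.S_hasSum.tsum_eq, ← ICB.Z_three]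
  obtain ⟨e1, e2, e3⟩ := ICB.eqs1
  rw [e1, e3, ICB.eqs2.2, ICB.Z_two]
  push_cast
  ring
end

section
/- 2·∑_{n=1}^∞ 4^{n-1} / (n⁴ · C(2n,n)) = -(1/240)·π⁴ + (1/6)·π²·log²2 + log⁴2 + (1/2)·∑_{n=1}^∞ (C(2n,n)/(4ⁿ · n⁴))·(4 + 2n(H_{n-1} - H_{2n-1})), where both series converge. -/
namespace CB

open MeasureTheory Filter Topology Set

lemma ps_summable {a : ℕ → ℝ} {C : ℝ} (ha : ∀ n, |a n| ≤ C) {y : ℝ} (hy : |y| < 1) :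
    Summable (fun n => a n * y ^ n) := by
  apply Summable.of_norm_bounded (g := fun n => C * |y| ^ n)
  · exact (summable_geometric_of_lt_one (abs_nonneg y) hy).mul_left C
  · intro n
    rw [norm_mul, norm_pow, Real.norm_eq_abs, Real.norm_eq_abs]
    exact mul_le_mul_of_nonneg_right (ha n) (by positivity)

lemma ps_summable' {a : ℕ → ℝ} {C : ℝ} (ha : ∀ n, |a n| ≤ C) {y : ℝ} (hy : |y| < 1) :
    Summable (fun n : ℕ => ((n : ℝ) + 1) * a (n + 1) * y ^ n) := by
  have hs := summable_pow_mul_geometric_of_norm_lt_one (R := ℝ) 1 (r := |y|) (by simpa using hy)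
  have hs0 := (summable_geometric_of_lt_one (abs_nonneg y) hy)
  apply Summable.of_norm_bounded (g := fun n : ℕ => C * ((n : ℝ) ^ 1 * |y| ^ n + |y| ^ n))
  · exact (hs.add hs0).mul_left C
  · intro n
    rw [norm_mul, norm_pow, norm_mul, Real.norm_eq_abs, Real.norm_eq_abs, Real.norm_eq_abs,
      abs_of_nonneg (by positivity : (0 : ℝ) ≤ (n : ℝ) + 1)]
    have := mul_le_mul_of_nonneg_right (ha (n + 1))
      (by positivity : 0 ≤ ((n : ℝ) + 1) * |y| ^ n)
    nlinarith

lemma ps_deriv {a : ℕ → ℝ} {C : ℝ} (ha : ∀ n, |a n| ≤ C) {y : ℝ} (hy : |y| < 1) :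
    HasDerivAt (fun y => ∑' n, a n * y ^ n) (∑' n : ℕ, ((n : ℝ) + 1) * a (n + 1) * y ^ n) y := by
  obtain ⟨r, hr, hr1⟩ := exists_between hy
  have hr0 : 0 ≤ r := (abs_nonneg y).trans hr.le
  have hC : 0 ≤ C := (abs_nonneg _).trans (ha 0)
  have hs := summable_pow_mul_geometric_of_norm_lt_one (R := ℝ) 1 (r := r)
    (by rwa [Real.norm_eq_abs, abs_of_nonneg hr0])
  have hu : Summable (fun n : ℕ => C * ((n : ℝ) * r ^ (n - 1))) := by
    rw [← summable_nat_add_iff 1]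
    have hs0 := (summable_geometric_of_lt_one hr0 hr1)
    refine ((hs.add hs0).mul_left C).congr ?_
    intro n
    push_cast [Nat.add_sub_cancel]
    ring
  have key := hasDerivAt_tsum_of_isPreconnected (𝕜 := ℝ) (g := fun n y => a n * y ^ n)
    (g' := fun n y => a n * (n * y ^ (n - 1))) (t := Metric.ball (0 : ℝ) r) hu Metric.isOpen_ball
    (convex_ball 0 r).isPreconnected (y₀ := y) (y := y)
    (by
      intro n z hz
      exact (hasDerivAt_pow n z).const_mul _)
    (by
      intro n z hz
      have hz' : |z| < r := by simpa using hz
      rw [norm_mul, norm_mul, norm_pow, Real.norm_eq_abs, Real.norm_eq_abs, Real.norm_eq_abs,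
        abs_of_nonneg (by positivity : (0 : ℝ) ≤ (n : ℝ))]
      have := pow_le_pow_left₀ (abs_nonneg z) hz'.le (n - 1)
      gcongr
      exact ha n)
    (by simpa using hr) (ps_summable ha hy) (by simpa using hr)
  convert! key using 1
  have h2 : Summable (fun n : ℕ => a n * ((n : ℝ) * y ^ (n - 1))) := by
    rw [← summable_nat_add_iff 1]
    refine (ps_summable' ha hy).congr ?_
    intro n
    simp
    ring
  rw [h2.tsum_eq_zero_add]
  simp
  congr 1
  ext n
  ring

/-- normalized central binomial -/
noncomputable def b (n : ℕ) : ℝ := (Nat.centralBinom n : ℝ) / 4 ^ n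

noncomputable def h (n : ℕ) : ℝ := (harmonic (2 * n) : ℝ) - (harmonic n : ℝ)

lemma b_zero : b 0 = 1 := by simp [b]

lemma b_succ (n : ℕ) : 2 * ((n : ℝ) + 1) * b (n + 1) = (2 * n + 1) * b n := by
  have := Nat.succ_mul_centralBinom_succ n
  have h2 : ((n : ℝ) + 1) * (Nat.centralBinom (n + 1) : ℝ) = 2 * (2 * n + 1) * Nat.centralBinom n := by
    exact_mod_cast this
  unfold b
  rw [pow_succ]
  field_simp
  linear_combination 2 * h2

lemma b_succ' (n : ℕ) : b (n + 1) = (2 * n + 1) * b n / (2 * ((n : ℝ) + 1)) := by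
  rw [← b_succ]; field_simp

lemma b_pos (n : ℕ) : 0 < b n := by
  unfold b
  have : 0 < (Nat.centralBinom n : ℝ) := by exact_mod_cast Nat.centralBinom_pos n
  positivity

lemma b_le (n : ℕ) : b n ≤ 1 := by
  induction n with
  | zero => simp [b_zero]
  | succ n ih =>
    rw [b_succ', div_le_one (by positivity)]
    nlinarith [b_pos n]

lemma b_ge (n : ℕ) : 1 ≤ 2 * ((n : ℝ) + 1) * b (n + 1) := by
  induction n with
  | zero => rw [b_succ]; simp [b_zero]
  | succ n ih =>
    rw [b_succ]
    push_cast
    nlinarith [b_pos (n + 1)]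

lemma h_zero : h 0 = 0 := by simp [h]

lemma h_succ (n : ℕ) : h (n + 1) = h n + 1 / (2 * (n + 1) * (2 * n + 1)) := by
  unfold h
  rw [show 2 * (n + 1) = 2 * n + 1 + 1 by ring, harmonic_succ, harmonic_succ, harmonic_succ]
  push_cast
  field_simp
  ring

lemma h_nonneg (n : ℕ) : 0 ≤ h n := by
  induction n with
  | zero => simp [h_zero]
  | succ n ih => rw [h_succ]; positivity

lemma h_le' (n : ℕ) : h n ≤ 1 - 1 / (n + 1) := by
  induction n with
  | zero => simp [h_zero]
  | succ n ih =>
    rw [h_succ]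
    push_cast
    have : (1 : ℝ) / (2 * (n + 1) * (2 * n + 1)) ≤ 1 / (n + 1) - 1 / (n + 1 + 1) := by
      rw [div_sub_div _ _ (by positivity) (by positivity), div_le_div_iff₀ (by positivity) (by positivity)]
      have : (0 : ℝ) ≤ n := by positivity
      nlinarith [mul_nonneg this this, mul_nonneg (mul_nonneg this this) this]
    linarith

lemma h_le (n : ℕ) : h n ≤ 1 := by
  have := h_le' n
  have h2 : (0 : ℝ) ≤ 1 / (n + 1) := by positivity
  linarith

lemma b_abs (n : ℕ) : |b n| ≤ 1 := by rw [abs_of_pos (b_pos n)]; exact b_le n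

lemma bh_abs (n : ℕ) : |b n * h n| ≤ 1 := by
  rw [abs_of_nonneg (mul_nonneg (b_pos n).le (h_nonneg n))]
  exact mul_le_one₀ (b_le n) (h_nonneg n) (h_le n)

/-- a function with zero derivative -/
lemma const_of (f : ℝ → ℝ) {w : ℝ} (hw : 0 < w) (hc : ContinuousOn f (Icc 0 w))
    (hd : ∀ x ∈ Ioo 0 w, HasDerivAt f 0 x) : f w = f 0 := by
  obtain ⟨c, hc, h1⟩ := exists_hasDerivAt_eq_slope f (fun _ => 0) hw hc hd
  have : w - 0 ≠ 0 := by linarith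
  field_simp at h1
  linarith

noncomputable def Bf (y : ℝ) : ℝ := ∑' n, b n * y ^ n
noncomputable def Qf (y : ℝ) : ℝ := ∑' n : ℕ, (b n / n) * y ^ n
noncomputable def Ff (y : ℝ) : ℝ := ∑' n, (b n * h n) * y ^ n
noncomputable def yw (w : ℝ) : ℝ := 4 * w / (1 + w) ^ 2

lemma yw_nonneg {w : ℝ} (hw : 0 ≤ w) : 0 ≤ yw w := by unfold yw; positivity
lemma yw_lt {w : ℝ} (hw : 0 ≤ w) (h1 : w < 1) : yw w < 1 := by
  unfold yw; rw [div_lt_one (by positivity)]; nlinarith [sq_pos_of_pos (sub_pos.2 h1)]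
lemma yw_abs {w : ℝ} (hw : 0 ≤ w) (h1 : w < 1) : |yw w| < 1 := by
  rw [abs_of_nonneg (yw_nonneg hw)]; exact yw_lt hw h1
lemma yw_deriv {w : ℝ} (hw : 0 ≤ w) : HasDerivAt yw (4 * (1 - w) / (1 + w) ^ 3) w := by
  have h1 : (1 + w) ≠ 0 := by positivity
  have := (((hasDerivAt_id w).const_mul 4).div (((hasDerivAt_id w).const_add 1).pow 2) (by simpa using h1))
  convert! this using 1
  simp
  field_simp
  ring

lemma q_abs (n : ℕ) : |b n / n| ≤ 1 := by
  rw [abs_div, Nat.abs_cast]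
  rcases Nat.eq_zero_or_pos n with rfl | hn
  · simp
  · have : (1 : ℝ) ≤ n := by exact_mod_cast hn
    rw [div_le_one (by positivity)]
    exact (b_abs n).trans this

lemma Bf_ode {y : ℝ} (hy : |y| < 1) : ∃ B', HasDerivAt Bf B' y ∧ (1 - y) * B' = Bf y / 2 := by
  refine ⟨_, ps_deriv b_abs hy, ?_⟩
  have h1 := ps_summable' b_abs hy
  have h2 : HasSum (fun n : ℕ => (n : ℝ) * b n * y ^ n)
      (y * ∑' n : ℕ, ((n : ℝ) + 1) * b (n + 1) * y ^ n) := by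
    rw [← hasSum_nat_add_iff' 1]
    have := h1.hasSum.mul_left y
    convert! this using 1
    · ext n; push_cast; ring
    · simp
  have h3 := ((h1.hasSum.sub h2).sub ((ps_summable b_abs hy).hasSum.div_const 2))
  have h4 : HasSum (fun _ : ℕ => (0 : ℝ)) 0 := hasSum_zero
  have h5 := h3.unique (by
    convert! h4 using 2 with n
    have := b_succ n
    linear_combination (y ^ n / 2) * this)
  unfold Bf
  linear_combination h5

lemma sw_deriv {w : ℝ} (hw : 0 ≤ w) :
    HasDerivAt (fun w : ℝ => (1 - w) / (1 + w)) (-2 / (1 + w) ^ 2) w := by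
  have h1 : (1 + w) ≠ 0 := by positivity
  have := (((hasDerivAt_id w).const_sub 1).div (((hasDerivAt_id w).const_add 1)) (by simpa using h1))
  convert! this using 1
  simp
  field_simp
  ring

lemma Bf_eq {w : ℝ} (hw : 0 < w) (hw1 : w < 1) : (1 - w) / (1 + w) * Bf (yw w) = 1 := by
  have key : ∀ x ∈ Icc 0 w, HasDerivAt (fun w : ℝ => (1 - w) / (1 + w) * Bf (yw w)) 0 x := by
    intro x hx
    have hx0 : 0 ≤ x := hx.1
    have hx1 : x < 1 := hx.2.trans_lt hw1
    obtain ⟨B', hB, hB'⟩ := Bf_ode (yw_abs hx0 hx1)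
    have h1 := (sw_deriv hx0).mul (hB.comp x (yw_deriv hx0))
    convert! h1 using 1
    have h2 : 1 - yw x = ((1 - x) / (1 + x)) ^ 2 := by unfold yw; field_simp; ring
    rw [h2] at hB'
    have h3 : (1 - x) ≠ 0 := by linarith
    have h4 : (1 + x) ≠ 0 := by linarith
    simp only [Function.comp]
    have h5 : Bf (yw x) = 2 * (((1 - x) / (1 + x)) ^ 2 * B') := by linarith
    rw [h5]
    field_simp
    ring
  have := const_of _ hw (fun x hx => (key x hx).continuousAt.continuousWithinAt)
    (fun x hx => key x ⟨hx.1.le, hx.2.le⟩)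
  rw [this]
  simp [yw, Bf]
  rw [tsum_eq_single 0 (by intro n hn; simp [hn])]
  simp [b_zero]

lemma Qf_ode {y : ℝ} (hy : |y| < 1) : ∃ B', HasDerivAt Qf B' y ∧ y * B' = Bf y - 1 := by
  refine ⟨_, ps_deriv q_abs hy, ?_⟩
  have h1 := ps_summable' q_abs hy
  unfold Bf
  rw [(ps_summable b_abs hy).tsum_eq_zero_add, ← tsum_mul_left]
  simp only [b_zero, pow_zero, mul_one, add_sub_cancel_left]
  congr 1
  ext n
  push_cast
  field_simp
  ring

lemma Qf_eq {w : ℝ} (hw : 0 < w) (hw1 : w < 1) : Qf (yw w) = 2 * Real.log (1 + w) := by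
  have hc : ∀ x ∈ Icc 0 w, ∃ D, HasDerivAt (fun w : ℝ => Qf (yw w) - 2 * Real.log (1 + w)) D x ∧
      (0 < x → D = 0) := by
    intro x hx
    have hx0 : 0 ≤ x := hx.1
    have hx1 : x < 1 := hx.2.trans_lt hw1
    have h3 : (1 - x) ≠ 0 := by linarith
    have h4 : (1 + x) ≠ 0 := by linarith
    obtain ⟨B', hB, hB'⟩ := Qf_ode (yw_abs hx0 hx1)
    refine ⟨_, (hB.comp x (yw_deriv hx0)).sub
      ((((hasDerivAt_id x).const_add 1).log (by simpa using h4)).const_mul 2), ?_⟩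
    intro hx00
    have h5 := Bf_eq hx00 hx1
    have h6 : Bf (yw x) = (1 + x) / (1 - x) := by
      field_simp at h5 ⊢; linarith
    rw [h6] at hB'
    unfold yw at hB'
    simp
    have hx : x ≠ 0 := hx00.ne'
    field_simp at hB' ⊢
    apply mul_left_cancel₀ hx
    linear_combination hB'
  have := const_of _ hw (fun x hx => (hc x hx).choose_spec.1.continuousAt.continuousWithinAt)
    (fun x hx => by
      obtain ⟨D, h1, h2⟩ := hc x ⟨hx.1.le, hx.2.le⟩
      rw [h2 hx.1] at h1; exact h1)
  have h0 : Qf (yw 0) = 0 := by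
    simp [yw, Qf]
    rw [tsum_eq_single 0 (by intro n hn; simp [hn])]
    simp
  simp only [h0] at this
  simp at this
  linarith

lemma Ff_ode {y : ℝ} (hy : |y| < 1) : ∃ F', HasDerivAt Ff F' y ∧
    y * ((1 - y) * F' - Ff y / 2) = (1 - (1 - y) * Bf y) / 2 := by
  refine ⟨_, ps_deriv bh_abs hy, ?_⟩
  have h1 := ps_summable' bh_abs hy
  have h2 : HasSum (fun n : ℕ => (n : ℝ) * (b n * h n) * y ^ n)
      (y * ∑' n : ℕ, ((n : ℝ) + 1) * (b (n + 1) * h (n + 1)) * y ^ n) := by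
    rw [← hasSum_nat_add_iff' 1]
    have := h1.hasSum.mul_left y
    convert! this using 1
    · ext n; push_cast; ring
    · simp
  have h3 := (((h1.hasSum.sub h2).sub ((ps_summable bh_abs hy).hasSum.div_const 2))).mul_left y
  have hb := (ps_summable b_abs hy).hasSum
  have hb1 := (hasSum_nat_add_iff' 1).2 hb
  have h4 := ((hb.mul_left y).sub hb1).div_const 2
  have h5 := h3.unique (by
    convert! h4 using 2 with n
    have e1 := b_succ' n
    have e2 := h_succ n
    rw [e2, e1, pow_succ]
    field_simp
    ring)
  unfold Bf Ff
  simp [b_zero] at h5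
  linear_combination h5

lemma Ff_eq {w : ℝ} (hw : 0 < w) (hw1 : w < 1) :
    (1 - w) / (1 + w) * Ff (yw w) = Real.log (1 + w) := by
  have hc : ∀ x ∈ Icc 0 w, ∃ D, HasDerivAt
      (fun w : ℝ => (1 - w) / (1 + w) * Ff (yw w) - Real.log (1 + w)) D x ∧ (0 < x → D = 0) := by
    intro x hx
    have hx0 : 0 ≤ x := hx.1
    have hx1 : x < 1 := hx.2.trans_lt hw1
    have h3 : (1 - x) ≠ 0 := by linarith
    have h4 : (1 + x) ≠ 0 := by linarith
    obtain ⟨B', hB, hB'⟩ := Ff_ode (yw_abs hx0 hx1)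
    refine ⟨_, ((sw_deriv hx0).mul (hB.comp x (yw_deriv hx0))).sub
      (((hasDerivAt_id x).const_add 1).log (by simpa using h4)), ?_⟩
    intro hx00
    have h5 := Bf_eq hx00 hx1
    have h6 : Bf (yw x) = (1 + x) / (1 - x) := by
      field_simp at h5 ⊢; linarith
    rw [h6] at hB'
    simp only [Function.comp, id]
    have hx : x ≠ 0 := hx00.ne'
    generalize Ff (yw x) = F at *
    unfold yw at hB'
    field_simp at hB' ⊢
    ring_nf at hB' ⊢
    have e : (x * (1 - x)) ≠ 0 := mul_ne_zero hx h3
    apply mul_left_cancel₀ e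
    linear_combination (1/2) * hB'
  have := const_of _ hw (fun x hx => (hc x hx).choose_spec.1.continuousAt.continuousWithinAt)
    (fun x hx => by
      obtain ⟨D, h1, h2⟩ := hc x ⟨hx.1.le, hx.2.le⟩
      rw [h2 hx.1] at h1; exact h1)
  have h0 : Ff (yw 0) = 0 := by
    simp [yw, Ff]
    rw [tsum_eq_single 0 (by intro n hn; simp [hn])]
    simp [h_zero]
  simp only [h0] at this
  simp at this
  linarith

end CB

namespace CB

open MeasureTheory Filter Topology Set

lemma xlog_tendsto (k : ℕ) : Tendsto (fun x : ℝ => x * Real.log x ^ k) (𝓝[>] 0) (𝓝 0) := by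
  have h1 := (Real.isLittleO_pow_log_id_atTop (n := k)).tendsto_div_nhds_zero
  have h2 := h1.comp tendsto_inv_nhdsGT_zero
  have h3 := h2.const_mul ((-1 : ℝ) ^ k)
  rw [mul_zero] at h3
  refine h3.congr ?_
  intro x
  simp only [Function.comp, id, Real.log_inv, neg_pow (Real.log x) k, div_inv_eq_mul]
  have : ((-1 : ℝ) ^ k) * (-1) ^ k = 1 := by rw [← mul_pow]; simp
  linear_combination (Real.log x ^ k * x) * this

lemma xlog_cont (k : ℕ) : ContinuousOn (fun x : ℝ => x * Real.log x ^ k) (Ici 0) := by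
  intro x hx
  rcases eq_or_lt_of_le (show (0 : ℝ) ≤ x from hx) with h0 | h0
  · subst h0
    rw [← continuousWithinAt_Ioi_iff_Ici]
    have := xlog_tendsto k
    simpa [ContinuousWithinAt] using this
  · exact (continuousAt_id.mul ((Real.continuousAt_log h0.ne').pow k)).continuousWithinAt

noncomputable def Phi (n : ℕ) : ℕ → ℝ → ℝ
  | 0 => fun x => x ^ (n + 1) / (n + 1)
  | k + 1 => fun x => x ^ (n + 1) * (-Real.log x) ^ (k + 1) / (n + 1) + (k + 1) / (n + 1) * Phi n k x

lemma Phi_cont (n k : ℕ) : ContinuousOn (Phi n k) (Ici 0) := by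
  induction k with
  | zero => unfold Phi; fun_prop
  | succ k ih =>
    unfold Phi
    have h1 : ContinuousOn (fun x : ℝ => x ^ n * (-1) ^ (k + 1) * (x * Real.log x ^ (k + 1))) (Ici 0) :=
      (by fun_prop : ContinuousOn (fun x : ℝ => x ^ n * (-1) ^ (k + 1)) (Ici 0)).mul (xlog_cont (k + 1))
    refine ((h1.congr ?_).div_const _).add (continuousOn_const.mul ih)
    intro x hx
    beta_reduce
    rw [neg_pow (Real.log x)]
    ring

lemma Phi_deriv (n k : ℕ) {x : ℝ} (hx : 0 < x) :
    HasDerivAt (Phi n k) (x ^ n * (-Real.log x) ^ k) x := by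
  induction k with
  | zero =>
    unfold Phi
    convert! (hasDerivAt_pow (n + 1) x).div_const ((n : ℝ) + 1) using 1
    push_cast [Nat.add_sub_cancel]
    field_simp
  | succ k ih =>
    unfold Phi
    have h1 := ((hasDerivAt_pow (n + 1) x).mul ((Real.hasDerivAt_log hx.ne').neg.pow (k + 1))).div_const
      ((n : ℝ) + 1)
    convert! h1.add (ih.const_mul ((k + 1 : ℝ) / (n + 1))) using 1
    push_cast [Nat.add_sub_cancel]
    field_simp
    simp
    ring

lemma Phi_zero (n k : ℕ) : Phi n k 0 = 0 := by
  induction k with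
  | zero => simp [Phi]
  | succ k ih => simp [Phi, ih]

lemma Phi_one (n k : ℕ) : Phi n k 1 = (k.factorial : ℝ) / (n + 1) ^ (k + 1) := by
  induction k with
  | zero => simp [Phi]
  | succ k ih =>
    simp [Phi, ih, Nat.factorial_succ]
    field_simp
    ring

structure Sub (y y' : ℝ → ℝ) (B : ℝ) : Prop where
  hB : 0 < B
  c : ContinuousOn y (Icc 0 B)
  y0 : y 0 = 0
  yB : y B = 1
  d : ∀ t ∈ Ioo 0 B, HasDerivAt y (y' t) t
  pos : ∀ t ∈ Ioo 0 B, 0 < y t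
  le : ∀ t ∈ Ioo 0 B, y t < 1
  dn : ∀ t ∈ Ioo 0 B, 0 ≤ y' t

lemma gen_int {y y' : ℝ → ℝ} {B : ℝ} (H : Sub y y' B) (n k : ℕ) :
    IntegrableOn (fun t => y t ^ n * (-Real.log (y t)) ^ k * y' t) (Ioc 0 B) ∧
    ∫ t in (0)..B, y t ^ n * (-Real.log (y t)) ^ k * y' t = (k.factorial : ℝ) / (n + 1) ^ (k + 1) := by
  have hc : ContinuousOn (fun t => Phi n k (y t)) (Icc 0 B) := by
    refine (Phi_cont n k).comp H.c ?_
    intro t ht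
    rcases eq_or_lt_of_le ht.1 with h | h
    · rw [← h, H.y0]; simp
    rcases eq_or_lt_of_le ht.2 with h' | h'
    · rw [h', H.yB]; simp
    · exact (H.pos t ⟨h, h'⟩).le
  have hd : ∀ t ∈ Ioo 0 B, HasDerivAt (fun t => Phi n k (y t))
      (y t ^ n * (-Real.log (y t)) ^ k * y' t) t := fun t ht =>
    (Phi_deriv n k (H.pos t ht)).comp t (H.d t ht)
  have hi := intervalIntegral.integrableOn_deriv_of_nonneg hc hd (by
    intro t ht
    have h1 := H.pos t ht
    have h2 := H.dn t ht
    have h3 : 0 ≤ -Real.log (y t) := by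
      have := Real.log_nonpos h1.le (H.le t ht).le
      linarith
    positivity)
  refine ⟨hi, ?_⟩
  rw [intervalIntegral.integral_eq_sub_of_hasDerivAt_of_le H.hB.le hc hd
    ((intervalIntegrable_iff_integrableOn_Ioc_of_le H.hB.le).2 hi), H.y0, H.yB, Phi_zero, Phi_one, sub_zero]

lemma series_int {y y' : ℝ → ℝ} {B : ℝ} (H : Sub y y' B) (k : ℕ) {a : ℕ → ℝ} {f : ℝ → ℝ}
    (hf : ∀ t ∈ Ioo 0 B, HasSum (fun n => a n * y t ^ n) (f t))
    (hs : Summable (fun n : ℕ => |a n| / ((n : ℝ) + 1) ^ (k + 1))) :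
    HasSum (fun n : ℕ => a n * ((k.factorial : ℝ) / (n + 1) ^ (k + 1)))
      (∫ t in (0)..B, f t * (-Real.log (y t)) ^ k * y' t) := by
  have hnn : ∀ n : ℕ, ∀ t ∈ Ioo 0 B, 0 ≤ y t ^ n * (-Real.log (y t)) ^ k * y' t := by
    intro n t ht
    have h1 := H.pos t ht
    have h2 := H.dn t ht
    have h3 : 0 ≤ -Real.log (y t) := by
      have := Real.log_nonpos h1.le (H.le t ht).le
      linarith
    positivity
  have key := hasSum_integral_of_summable_integral_norm
    (F := fun n t => a n * (y t ^ n * (-Real.log (y t)) ^ k * y' t)) (μ := volume.restrict (Ioo 0 B))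
    (fun n => (((gen_int H n k).1.mono_set Ioo_subset_Ioc_self).const_mul (a n))) (by
      have : ∀ n : ℕ, ∫ t in Ioo 0 B, ‖a n * (y t ^ n * (-Real.log (y t)) ^ k * y' t)‖ =
          |a n| / ((n : ℝ) + 1) ^ (k + 1) * (k.factorial : ℝ) := by
        intro n
        rw [setIntegral_congr_fun (g := fun t => |a n| * (y t ^ n * (-Real.log (y t)) ^ k * y' t))
          measurableSet_Ioo, integral_const_mul, ← integral_Ioc_eq_integral_Ioo,
          ← intervalIntegral.integral_of_le H.hB.le, (gen_int H n k).2]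
        · ring
        · intro t ht
          simp only
          rw [norm_mul, Real.norm_eq_abs, Real.norm_eq_abs, abs_of_nonneg (hnn n t ht)]
      simp_rw [this]
      exact hs.mul_right _)
  convert! key using 1
  · ext n
    rw [integral_const_mul, ← integral_Ioc_eq_integral_Ioo,
          ← intervalIntegral.integral_of_le H.hB.le, (gen_int H n k).2]
  · rw [intervalIntegral.integral_of_le H.hB.le, integral_Ioc_eq_integral_Ioo]
    apply setIntegral_congr_fun measurableSet_Ioo
    intro t ht
    simp only
    have := ((hf t ht).mul_right ((-Real.log (y t)) ^ k * y' t)).tsum_eq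
    rw [mul_assoc, ← this]
    congr 1
    ext n
    ring

lemma sub_id : Sub (fun x => x) (fun _ => 1) 1 where
  hB := one_pos
  c := continuousOn_id
  y0 := rfl
  yB := rfl
  d := fun t _ => hasDerivAt_id t
  pos := fun t ht => ht.1
  le := fun t ht => ht.2
  dn := fun _ _ => zero_le_one

lemma sub_yw : Sub yw (fun w => 4 * (1 - w) / (1 + w) ^ 3) 1 where
  hB := one_pos
  c := fun t ht => (yw_deriv ht.1).continuousAt.continuousWithinAt
  y0 := by simp [yw]
  yB := by norm_num [yw]
  d := fun t ht => yw_deriv ht.1.le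
  pos := fun t ht => by have := ht.1; unfold yw; positivity
  le := fun t ht => yw_lt ht.1.le ht.2
  dn := fun t ht => by
    have := ht.1
    have : 0 ≤ 1 - t := by linarith [ht.2]
    positivity

lemma sub_sin : Sub (fun t => Real.sin t ^ 2) (fun t => 2 * Real.sin t * Real.cos t) (Real.pi / 2) where
  hB := by positivity
  c := by fun_prop
  y0 := by simp
  yB := by simp
  d := fun t ht => by
    convert! (Real.hasDerivAt_sin t).pow 2 using 1
    push_cast; ring
  pos := fun t ht => by
    have := Real.sin_pos_of_pos_of_lt_pi ht.1 (by linarith [ht.2, Real.pi_pos]); positivity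
  le := fun t ht => by
    have := Real.cos_pos_of_mem_Ioo ⟨by linarith [ht.1, Real.pi_pos], ht.2⟩
    nlinarith [Real.sin_sq_add_cos_sq t]
  dn := fun t ht => by
    have := Real.cos_pos_of_mem_Ioo ⟨by linarith [ht.1, Real.pi_pos], ht.2⟩
    have := Real.sin_pos_of_pos_of_lt_pi ht.1 (by linarith [ht.2, Real.pi_pos]); positivity

/-- bounded times log power is integrable -/
lemma bdd_log_int {f : ℝ → ℝ} (k : ℕ) {C : ℝ} (hf : ContinuousOn f (Ioo 0 1))
    (hb : ∀ x ∈ Ioo (0 : ℝ) 1, |f x| ≤ C) :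
    IntegrableOn (fun x => f x * (-Real.log x) ^ k) (Ioo 0 1) := by
  have h1 := (gen_int sub_id 0 k).1.mono_set Ioo_subset_Ioc_self
  simp only [pow_zero, one_mul, mul_one] at h1
  refine Integrable.bdd_mul (c := C) h1 (hf.aestronglyMeasurable measurableSet_Ioo) ?_
  exact (ae_restrict_iff' measurableSet_Ioo).2 (ae_of_all _ hb)

lemma summable_inv_sq : Summable (fun n : ℕ => 1 / ((n : ℝ) + 1) ^ 2) := by
  have := (summable_nat_add_iff 1).2 (Real.summable_one_div_nat_pow.2 (by norm_num : 1 < 2))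
  simpa using this

lemma summable_inv_pow (k : ℕ) : Summable (fun n : ℕ => 1 / ((n : ℝ) + 1) ^ (k + 2)) := by
  have := (summable_nat_add_iff 1).2 (Real.summable_one_div_nat_pow.2 (by omega : 1 < k + 2))
  simpa using this

end CB

namespace CB

open MeasureTheory Filter Topology Set

noncomputable def e (n : ℕ) : ℝ := 1 / (2 * ((n : ℝ) + 1) * b (n + 1))

lemma e_pos (n : ℕ) : 0 < e n := by
  have := b_pos (n + 1); unfold e; positivity

lemma e_le (n : ℕ) : e n ≤ 1 := by
  have := b_pos (n + 1); unfold e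
  rw [div_le_one (by positivity)]; exact b_ge n

lemma e_abs (n : ℕ) : |e n| ≤ 1 := by rw [abs_of_pos (e_pos n)]; exact e_le n

lemma e_succ (n : ℕ) : (2 * (n : ℝ) + 3) * e (n + 1) = (2 * n + 2) * e n := by
  have h1 := b_pos (n + 1)
  unfold e
  rw [b_succ' (n + 1)]
  push_cast
  field_simp
  ring

lemma e_zero : e 0 = 1 := by
  have := b_succ 0
  simp [b_zero] at this
  simp [e, this]

noncomputable def Ef (y : ℝ) : ℝ := ∑' n, e n * y ^ n

lemma Ef_ode {y : ℝ} (hy : |y| < 1) : ∃ E', HasDerivAt Ef E' y ∧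
    2 * y * (1 - y) * E' + (1 - 2 * y) * Ef y = 1 := by
  refine ⟨_, ps_deriv e_abs hy, ?_⟩
  have h1 := ps_summable' e_abs hy
  have h2 : HasSum (fun n : ℕ => (n : ℝ) * e n * y ^ n)
      (y * ∑' n : ℕ, ((n : ℝ) + 1) * e (n + 1) * y ^ n) := by
    rw [← hasSum_nat_add_iff' 1]
    have := h1.hasSum.mul_left y
    convert! this using 1
    · ext n; push_cast; ring
    · simp
  have hs := (ps_summable e_abs hy).hasSum
  have hs1 := (hasSum_nat_add_iff' 1).2 hs
  have h3 := ((h1.hasSum.mul_left (2 * y)).add hs1).sub (((h2.mul_left 2).add (hs.mul_left 2)).mul_left y)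
  have h5 := h3.unique (by
    convert! (hasSum_zero : HasSum (fun _ : ℕ => (0 : ℝ)) 0) using 2 with n
    have := e_succ n
    rw [pow_succ]
    linear_combination (y ^ n * y) * this)
  unfold Ef
  simp [e_zero] at h5
  linear_combination h5

lemma sin_pos' {t : ℝ} (ht : t ∈ Ioo 0 (Real.pi / 2)) : 0 < Real.sin t :=
  Real.sin_pos_of_pos_of_lt_pi ht.1 (by linarith [ht.2, Real.pi_pos])
lemma cos_pos' {t : ℝ} (ht : t ∈ Ioo 0 (Real.pi / 2)) : 0 < Real.cos t :=
  Real.cos_pos_of_mem_Ioo ⟨by linarith [ht.1, Real.pi_pos], ht.2⟩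

lemma sinsq_abs {t : ℝ} (ht : t ∈ Ico 0 (Real.pi / 2)) : |Real.sin t ^ 2| < 1 := by
  have := Real.cos_pos_of_mem_Ioo ⟨by linarith [ht.1, Real.pi_pos], ht.2⟩
  rw [abs_of_nonneg (sq_nonneg _)]
  nlinarith [Real.sin_sq_add_cos_sq t]

lemma Ef_eq {t : ℝ} (ht : t ∈ Ioo 0 (Real.pi / 2)) :
    Real.sin t * Real.cos t * Ef (Real.sin t ^ 2) = t := by
  have key : ∀ x ∈ Icc 0 t, HasDerivAt (fun t =>
      Real.sin t * Real.cos t * Ef (Real.sin t ^ 2) - t) 0 x := by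
    intro x hx
    have hx' : x ∈ Ico 0 (Real.pi / 2) := ⟨hx.1, hx.2.trans_lt ht.2⟩
    obtain ⟨E', hE, hE'⟩ := Ef_ode (sinsq_abs hx')
    have h1 := ((((Real.hasDerivAt_sin x).mul (Real.hasDerivAt_cos x)).mul
      (hE.comp x ((Real.hasDerivAt_sin x).pow 2)))).sub (hasDerivAt_id x)
    convert! h1 using 1
    have h2 : Real.cos x ^ 2 = 1 - Real.sin x ^ 2 := by linarith [Real.sin_sq_add_cos_sq x]
    simp
    have h3 : Real.cos x * Real.cos x = 1 - Real.sin x ^ 2 := by rw [← h2]; ring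
    linear_combination -hE' - (Ef (Real.sin x ^ 2) + 2 * Real.sin x ^ 2 * E') * h3
  have := const_of _ ht.1 (fun x hx => (key x hx).continuousAt.continuousWithinAt)
    (fun x hx => key x ⟨hx.1.le, hx.2.le⟩)
  simp at this
  linarith

lemma lhs_hasSum : HasSum (fun n : ℕ => e n * (2 / ((n : ℝ) + 1) ^ 3))
    (∫ t in (0)..(Real.pi / 2), 8 * t * Real.log (Real.sin t) ^ 2) := by
  have key := series_int sub_sin 2 (a := e) (f := fun t => Ef (Real.sin t ^ 2))
    (fun t ht => (ps_summable e_abs (sinsq_abs ⟨ht.1.le, ht.2⟩)).hasSum)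
    (by
      refine Summable.of_nonneg_of_le (fun n => by positivity) (fun n => ?_) (summable_inv_pow 1)
      have := e_abs n
      norm_num
      rw [← one_div]
      gcongr)
  convert! key using 1
  apply intervalIntegral.integral_congr_ae
  rw [uIoc_of_le (by positivity)]
  have : ∀ᵐ t : ℝ, t ≠ Real.pi / 2 := by simp [ae_iff]
  filter_upwards [this] with t h1 h2
  have ht : t ∈ Ioo 0 (Real.pi / 2) := ⟨h2.1, lt_of_le_of_ne h2.2 h1⟩
  have := Ef_eq ht
  rw [Real.log_pow]
  push_cast
  linear_combination (-8 * Real.log (Real.sin t) ^ 2) * this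

noncomputable def d (m : ℕ) : ℝ := 3 / 2 * (b m / m) - b m * h m

lemma d_abs (m : ℕ) : |d m| ≤ 3 := by
  have h1 := abs_le.1 (q_abs m)
  have h2 := abs_le.1 (bh_abs m)
  unfold d
  rw [abs_le]
  constructor <;> linarith

lemma d_zero : d 0 = 0 := by simp [d, h_zero]

noncomputable def TI (w : ℝ) : ℝ := Real.log (1 + w) *
  (2 * Real.log 2 + Real.log w - 2 * Real.log (1 + w)) ^ 2 * (2 / w - 6 / (1 + w))

lemma d_summ (k : ℕ) : Summable (fun n : ℕ => |d (n + 1)| / ((n : ℝ) + 1) ^ (k + 2)) := by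
  refine Summable.of_nonneg_of_le (fun n => by positivity) (fun n => ?_) ((summable_inv_pow k).mul_left 3)
  have := d_abs (n + 1)
  rw [mul_one_div]
  gcongr

lemma log_yw {w : ℝ} (hw : 0 < w) : Real.log (yw w) = 
    2 * Real.log 2 + Real.log w - 2 * Real.log (1 + w) := by
  unfold yw
  rw [Real.log_div (by positivity) (by positivity), Real.log_mul (by norm_num) hw.ne', Real.log_pow,
    show (4 : ℝ) = 2 ^ 2 by norm_num, Real.log_pow]
  push_cast; ring

lemma rhs_hasSum : HasSum (fun n : ℕ => d (n + 1) * (2 / ((n : ℝ) + 1) ^ 3))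
    (∫ w in (0)..1, TI w) := by
  have hfs : ∀ w ∈ Ioo (0 : ℝ) 1, HasSum (fun n => d (n + 1) * yw w ^ n)
      ((3 / 2 * Qf (yw w) - Ff (yw w)) / yw w) := by
    intro w hw
    have hy := yw_abs hw.1.le hw.2
    have h1 := ((ps_summable q_abs hy).hasSum.mul_left (3 / 2)).sub (ps_summable bh_abs hy).hasSum
    have h2 := (((hasSum_nat_add_iff' 1).2 h1)).div_const (yw w)
    have hy0 : yw w ≠ 0 := (sub_yw.pos w hw).ne'
    convert! h2 using 1
    · ext n
      unfold d
      push_cast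
      field_simp
      ring
    · simp [h_zero]
      rfl
  have key := series_int sub_yw 2 hfs (d_summ 1)
  convert! key using 1
  apply intervalIntegral.integral_congr_ae
  rw [uIoc_of_le (by positivity)]
  have : ∀ᵐ t : ℝ, t ≠ 1 := by simp [ae_iff]
  filter_upwards [this] with t h1 h2
  have ht : t ∈ Ioo (0 : ℝ) 1 := ⟨h2.1, lt_of_le_of_ne h2.2 h1⟩
  have hF := Ff_eq ht.1 ht.2
  rw [Qf_eq ht.1 ht.2, log_yw ht.1]
  have h3 : (1 - t) ≠ 0 := by linarith [ht.2]
  have h4 : (1 + t) ≠ 0 := by linarith [ht.1]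
  have h5 : t ≠ 0 := ht.1.ne'
  have h6 : Ff (yw t) = Real.log (1 + t) * (1 + t) / (1 - t) := by
    field_simp at hF ⊢; linarith
  rw [h6]
  unfold TI yw
  field_simp
  ring

end CB

namespace CB

open MeasureTheory Filter Topology Set

noncomputable def f1 (w : ℝ) : ℝ := Real.log (1 + w) / w
noncomputable def f2 (w : ℝ) : ℝ := Real.log (1 + w) ^ 2 / w
noncomputable def II (f : ℝ → ℝ) (k : ℕ) : ℝ := ∫ x in (0)..1, f x * (-Real.log x) ^ k

lemma A_nonneg {w : ℝ} (hw : 0 ≤ w) : 0 ≤ Real.log (1 + w) := Real.log_nonneg (by linarith)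
lemma A_le {w : ℝ} (hw : 0 ≤ w) : Real.log (1 + w) ≤ w := by
  have := Real.log_le_sub_one_of_pos (by linarith : 0 < 1 + w); linarith

lemma Al_cont (k : ℕ) : ContinuousOn (fun w : ℝ => Real.log (1 + w) * Real.log w ^ k) (Ici 0) := by
  intro x hx
  rcases eq_or_lt_of_le (show (0 : ℝ) ≤ x from hx) with h0 | h0
  · subst h0
    rw [← continuousWithinAt_Ioi_iff_Ici]
    simp only [ContinuousWithinAt, add_zero, Real.log_one, zero_mul]
    refine squeeze_zero_norm' ?_ (by simpa using (xlog_tendsto k).norm)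
    filter_upwards [self_mem_nhdsWithin] with w hw
    have hw : 0 < w := hw
    rw [norm_mul, norm_pow, Real.norm_eq_abs, Real.norm_eq_abs]
    refine mul_le_mul_of_nonneg_right ?_ (by positivity)
    rw [abs_of_nonneg (A_nonneg hw.le)]
    exact (A_le hw.le).trans (le_abs_self w)
  · have : ContinuousAt (fun w : ℝ => Real.log (1 + w)) x :=
      ContinuousAt.log (by fun_prop) (by linarith)
    exact (this.mul ((Real.continuousAt_log h0.ne').pow k)).continuousWithinAt

lemma A_cont : ContinuousOn (fun w : ℝ => Real.log (1 + w)) (Ici 0) := by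
  simpa using Al_cont 0

lemma f1_cont : ContinuousOn f1 (Ioo 0 1) :=
  (A_cont.mono (fun _ hx => hx.1.le)).div continuousOn_id (fun _ hx => hx.1.ne')
lemma f2_cont : ContinuousOn f2 (Ioo 0 1) :=
  ((A_cont.mono (fun _ hx => hx.1.le)).pow 2).div continuousOn_id (fun _ hx => hx.1.ne')

lemma f1_bd {x : ℝ} (hx : x ∈ Ioo (0 : ℝ) 1) : |f1 x| ≤ 1 := by
  have h1 := A_nonneg hx.1.le
  have h2 := A_le hx.1.le
  have := hx.1
  rw [abs_of_nonneg (by unfold f1; positivity)]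
  unfold f1
  rw [div_le_one this]; exact h2

lemma f2_bd {x : ℝ} (hx : x ∈ Ioo (0 : ℝ) 1) : |f2 x| ≤ 1 := by
  have h1 := A_nonneg hx.1.le
  have h2 := A_le hx.1.le
  have := hx.1
  have h3 := hx.2
  rw [abs_of_nonneg (by unfold f2; positivity)]
  unfold f2
  rw [div_le_one this]; nlinarith

lemma f1_int (k : ℕ) : IntervalIntegrable (fun x => f1 x * (-Real.log x) ^ k) volume 0 1 := by
  rw [intervalIntegrable_iff_integrableOn_Ioo_of_le zero_le_one]
  exact bdd_log_int k f1_cont (fun x hx => f1_bd hx)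

lemma f2_int (k : ℕ) : IntervalIntegrable (fun x => f2 x * (-Real.log x) ^ k) volume 0 1 := by
  rw [intervalIntegrable_iff_integrableOn_Ioo_of_le zero_le_one]
  exact bdd_log_int k f2_cont (fun x hx => f2_bd hx)

noncomputable def g1 (w : ℝ) : ℝ := f1 w * (2 - 6 * w / (1 + w))
noncomputable def g2 (w : ℝ) : ℝ := 2 * Real.log 2 - 2 * Real.log (1 + w)

lemma g_int (j k : ℕ) : IntervalIntegrable (fun x => (g1 x * g2 x ^ j) * (-Real.log x) ^ k) volume 0 1 := by
  rw [intervalIntegrable_iff_integrableOn_Ioo_of_le zero_le_one]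
  have hA : ContinuousOn (fun w : ℝ => Real.log (1 + w)) (Ioo 0 1) := (A_cont.mono (fun _ hx => hx.1.le))
  refine bdd_log_int (C := 1 * 4 * 2 ^ j) k ?_ ?_
  · unfold g1 g2
    refine (f1_cont.mul ?_).mul ((continuousOn_const.sub (continuousOn_const.mul hA)).pow j)
    refine continuousOn_const.sub (ContinuousOn.div (by fun_prop) (by fun_prop) ?_)
    intro x hx; linarith [hx.1]
  · intro x hx
    rw [abs_mul, abs_pow]
    unfold g1
    rw [abs_mul]
    have h1 := f1_bd hx
    have h2 : |2 - 6 * x / (1 + x)| ≤ 4 := by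
      have := hx.1
      have h3 : 6 * x / (1 + x) ≤ 6 := by rw [div_le_iff₀ (by positivity)]; nlinarith
      have h4 : 0 ≤ 6 * x / (1 + x) := by positivity
      rw [abs_le]; constructor <;> linarith
    have h3 : |g2 x| ≤ 2 := by
      unfold g2
      have := hx.1
      have a1 : Real.log (1 + x) ≤ Real.log 2 := Real.log_le_log (by linarith) (by linarith [hx.2])
      have a2 := A_nonneg hx.1.le
      have a3 : Real.log 2 ≤ 1 := by have := Real.log_two_lt_d9; linarith
      rw [abs_le]; constructor <;> linarith
    gcongr

lemma TI_int : IntervalIntegrable TI volume 0 1 := by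
  have := ((g_int 2 0).add (((g_int 1 1).const_mul (-2)))).add (g_int 0 2)
  refine this.congr ?_
  intro x hx
  rw [uIoc_of_le zero_le_one] at hx
  have h0 : x ≠ 0 := hx.1.ne'
  have h1 : 1 + x ≠ 0 := by linarith [hx.1]
  simp only [g1, g2, f1, TI, Pi.add_apply]
  field_simp
  ring

noncomputable def Psi (w : ℝ) : ℝ :=
  Real.log (1 + w) * Real.log w ^ 0 * (2 * Real.log 2 - 2 * Real.log (1 + w)) ^ 3
  + 3 * (2 * Real.log 2 - 2 * Real.log (1 + w)) ^ 2 * (Real.log (1 + w) * Real.log w ^ 1)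
  + 3 * (2 * Real.log 2 - 2 * Real.log (1 + w)) * (Real.log (1 + w) * Real.log w ^ 2)
  - (-3 * Real.log (1 + w) * (Real.log (1 + w) * Real.log w ^ 2)
    + 4 * Real.log (1 + w) ^ 2 * (Real.log (1 + w) * Real.log w ^ 1) - 2 * Real.log (1 + w) ^ 4
    + 6 * Real.log 2 * ((Real.log (1 + w) * Real.log w ^ 2)
      - 2 * Real.log (1 + w) * (Real.log (1 + w) * Real.log w ^ 1) + 4 * Real.log (1 + w) ^ 3 / 3)
    + 12 * Real.log 2 ^ 2 * ((Real.log (1 + w) * Real.log w ^ 1) - Real.log (1 + w) ^ 2)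
    + 8 * Real.log 2 ^ 3 * Real.log (1 + w))

lemma Psi_cont : ContinuousOn Psi (Ici 0) := by
  have h0 := Al_cont 0
  have h1 := Al_cont 1
  have h2 := Al_cont 2
  have hA := A_cont
  unfold Psi
  fun_prop

noncomputable def RI (w : ℝ) : ℝ :=
  2 * (f1 w * (-Real.log w) ^ 2) + 2 * (f2 w * (-Real.log w) ^ 1)
  + (-8 * Real.log 2) * (f1 w * (-Real.log w) ^ 1) + (-4 * Real.log 2) * (f2 w * (-Real.log w) ^ 0)
  + (8 * Real.log 2 ^ 2) * (f1 w * (-Real.log w) ^ 0)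

lemma Psi_deriv {w : ℝ} (hw : 0 < w) : HasDerivAt Psi (TI w - RI w) w := by
  have h1 : (1 + w) ≠ 0 := by linarith
  have hA : HasDerivAt (fun w : ℝ => Real.log (1 + w)) (1 / (1 + w)) w := by
    simpa using ((hasDerivAt_id w).const_add 1).log (by simpa using h1)
  have hl : HasDerivAt Real.log (1 / w) w := by simpa using Real.hasDerivAt_log hw.ne'
  have hG : HasDerivAt (fun w : ℝ => 2 * Real.log 2 - 2 * Real.log (1 + w)) (-(2 * (1 / (1 + w)))) w :=
    (hA.const_mul 2).const_sub _
  have X := fun k : ℕ => hA.mul (hl.pow k)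
  have := ((((X 0).mul (hG.pow 3)).add (((hG.pow 2).const_mul 3).mul (X 1))).add
    ((hG.const_mul 3).mul (X 2))).sub
    (((((((hA.const_mul (-3)).mul (X 2)).add (((hA.pow 2).const_mul 4).mul (X 1))).sub
      ((hA.pow 4).const_mul 2)).add
      ((((X 2).sub ((hA.const_mul 2).mul (X 1))).add (((hA.pow 3).const_mul 4).div_const 3)).const_mul
        (6 * Real.log 2))).add
      (((X 1).sub (hA.pow 2)).const_mul (12 * Real.log 2 ^ 2))).add
      (hA.const_mul (8 * Real.log 2 ^ 3)))
  convert! this using 1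
  unfold TI RI f1 f2
  simp
  have h0 : w ≠ 0 := hw.ne'
  field_simp
  ring

lemma TI_eq : ∫ w in (0)..1, TI w = 2 * II f1 2 + 2 * II f2 1 + (-8 * Real.log 2) * II f1 1
    + (-4 * Real.log 2) * II f2 0 + (8 * Real.log 2 ^ 2) * II f1 0 - 2 * Real.log 2 ^ 4 := by
  have i1 := (f1_int 2).const_mul 2
  have i2 := (f2_int 1).const_mul 2
  have i3 := (f1_int 1).const_mul (-8 * Real.log 2)
  have i4 := (f2_int 0).const_mul (-4 * Real.log 2)
  have i5 := (f1_int 0).const_mul (8 * Real.log 2 ^ 2)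
  have hR : IntervalIntegrable RI volume 0 1 := (((i1.add i2).add i3).add i4).add i5
  have hRI : ∫ w in (0)..1, RI w = 2 * II f1 2 + 2 * II f2 1 + (-8 * Real.log 2) * II f1 1
    + (-4 * Real.log 2) * II f2 0 + (8 * Real.log 2 ^ 2) * II f1 0 := by
    unfold RI II
    rw [intervalIntegral.integral_add (((i1.add i2).add i3).add i4) i5,
      intervalIntegral.integral_add (((i1.add i2).add i3)) i4,
      intervalIntegral.integral_add ((i1.add i2)) i3,
      intervalIntegral.integral_add i1 i2]
    simp only [intervalIntegral.integral_const_mul]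
  have h := intervalIntegral.integral_eq_sub_of_hasDerivAt_of_le zero_le_one
    (Psi_cont.mono (fun x hx => hx.1)) (fun x hx => Psi_deriv hx.1) (TI_int.sub hR)
  rw [intervalIntegral.integral_sub TI_int hR, hRI] at h
  have p0 : Psi 0 = 0 := by simp [Psi]
  have p1 : Psi 1 = -2 * Real.log 2 ^ 4 := by
    simp [Psi]; norm_num; ring
  rw [p0, p1] at h
  linarith

end CB

namespace CB

open MeasureTheory Filter Topology Set

noncomputable def c (n : ℕ) : ℝ := 2 * (harmonic n : ℝ) / (n + 1)

lemma harm_nonneg (n : ℕ) : (0 : ℝ) ≤ (harmonic n : ℝ) := by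
  have : (0 : ℚ) ≤ harmonic n := by unfold harmonic; positivity
  exact_mod_cast this

lemma c_nonneg (n : ℕ) : 0 ≤ c n := by
  have := harm_nonneg n; unfold c; positivity

lemma harm_le (n : ℕ) : (harmonic n : ℝ) ≤ 3 * Real.sqrt (n + 1) := by
  have h1 := harmonic_le_one_add_log n
  have h2 : Real.log n ≤ 2 * Real.sqrt (n + 1) := by
    have h3 : Real.log n ≤ Real.log (n + 1) := by
      rcases Nat.eq_zero_or_pos n with rfl | hn
      · simp
      · have : (0 : ℝ) < n := by exact_mod_cast hn
        exact Real.log_le_log this (by linarith)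
    have h4 := Real.log_le_sub_one_of_pos (Real.sqrt_pos.2 (by positivity : (0 : ℝ) < n + 1))
    rw [Real.log_sqrt (by positivity)] at h4
    linarith
  have h5 : 1 ≤ Real.sqrt ((n : ℝ) + 1) := by
    rw [Real.one_le_sqrt]
    have : (0 : ℝ) ≤ n := by positivity
    linarith
  linarith

lemma c_le (n : ℕ) : c n ≤ 6 := by
  unfold c
  rw [div_le_iff₀ (by positivity)]
  have h1 := harm_le n
  have h2 : Real.sqrt ((n : ℝ) + 1) ≤ n + 1 := by
    rw [Real.sqrt_le_left (by positivity)]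
    have : (0 : ℝ) ≤ n := by positivity
    nlinarith
  linarith

lemma c_summ : Summable (fun n : ℕ => c n / ((n : ℝ) + 1)) := by
  have h1 : Summable (fun n : ℕ => 6 * (1 / ((n : ℝ) + 1) ^ (3 / 2 : ℝ))) := by
    have := (summable_nat_add_iff 1).2 (Real.summable_one_div_nat_rpow.2 (by norm_num : (1 : ℝ) < 3 / 2))
    push_cast at this
    exact this.mul_left 6
  refine Summable.of_nonneg_of_le (fun n => by have := c_nonneg n; positivity) (fun n => ?_) h1
  have h2 := harm_le n
  have hp : (0 : ℝ) < n + 1 := by positivity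
  have h3 : ((n : ℝ) + 1) ^ (3 / 2 : ℝ) * Real.sqrt (n + 1) = (n + 1) ^ 2 := by
    rw [Real.sqrt_eq_rpow, ← Real.rpow_add hp]
    norm_num
  have hq : 0 < ((n : ℝ) + 1) ^ (3 / 2 : ℝ) := by positivity
  unfold c
  rw [div_div, mul_one_div, div_le_div_iff₀ (by positivity) hq]
  have := mul_le_mul_of_nonneg_right h2 hq.le
  nlinarith

lemma c_summ' (k : ℕ) : Summable (fun n : ℕ => c n / ((n : ℝ) + 1) ^ (k + 1)) := by
  refine Summable.of_nonneg_of_le (fun n => by have := c_nonneg n; positivity) (fun n => ?_) c_summ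
  have := c_nonneg n
  gcongr
  exact le_self_pow₀ (by have : (0 : ℝ) ≤ n := by positivity
                         linarith) (by simp)

lemma antidiag_harm (n : ℕ) : ∑ kl ∈ Finset.HasAntidiagonal.antidiagonal n, (1 / ((kl.1 : ℝ) + 1)) = harmonic (n + 1) := by
  rw [Finset.Nat.sum_antidiagonal_eq_sum_range_succ_mk]
  simp [harmonic]

lemma antidiag_swap (n : ℕ) (g : ℕ → ℝ) : ∑ kl ∈ Finset.HasAntidiagonal.antidiagonal n, g kl.2 =
    ∑ kl ∈ Finset.HasAntidiagonal.antidiagonal n, g kl.1 := by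
  rw [← Finset.Nat.sum_antidiagonal_swap]
  simp

lemma antidiag_c (n : ℕ) : ∑ kl ∈ Finset.HasAntidiagonal.antidiagonal n,
    (1 / ((kl.1 : ℝ) + 1)) * (1 / ((kl.2 : ℝ) + 1)) = c (n + 1) := by
  have : ∀ kl ∈ Finset.HasAntidiagonal.antidiagonal n, (1 / ((kl.1 : ℝ) + 1)) * (1 / ((kl.2 : ℝ) + 1)) =
      (1 / ((n : ℝ) + 2)) * (1 / ((kl.1 : ℝ) + 1) + 1 / ((kl.2 : ℝ) + 1)) := by
    intro kl hkl
    rw [Finset.HasAntidiagonal.mem_antidiagonal] at hkl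
    have : (n : ℝ) = kl.1 + kl.2 := by exact_mod_cast hkl.symm
    rw [this]
    field_simp
    ring
  rw [Finset.sum_congr rfl this, ← Finset.mul_sum, Finset.sum_add_distrib,
    antidiag_swap n (fun m => 1 / ((m : ℝ) + 1)), antidiag_harm]
  unfold c
  push_cast
  field_simp
  ring

lemma logsq_hasSum {z : ℂ} (hz : ‖z‖ < 1) :
    HasSum (fun n : ℕ => (c n : ℂ) * z ^ (n + 1)) (Complex.log (1 - z) ^ 2) := by
  have h1 := Complex.hasSum_taylorSeries_neg_log' hz
  have hn : Summable (fun n : ℕ => ‖z ^ (n + 1) / ((n : ℂ) + 1)‖) := by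
    refine Summable.of_nonneg_of_le (fun n => norm_nonneg _) (fun n => ?_)
      (summable_geometric_of_lt_one (norm_nonneg z) hz)
    rw [norm_div, norm_pow]
    have : ‖((n : ℂ) + 1)‖ = n + 1 := by
      rw [← Nat.cast_add_one, Complex.norm_natCast]; push_cast; rfl
    rw [this, div_le_iff₀ (by positivity), pow_succ]
    have h0 : (0 : ℝ) ≤ n := by positivity
    have : 0 ≤ ‖z‖ ^ n := by positivity
    nlinarith [mul_nonneg this h0]
  have hp := tsum_mul_tsum_eq_tsum_sum_antidiagonal_of_summable_norm hn hn
  have hps := (summable_norm_sum_mul_antidiagonal_of_summable_norm hn hn).of_norm.hasSum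
  rw [← hp, h1.tsum_eq] at hps
  rw [← hasSum_nat_add_iff' 1]
  convert! hps using 1
  · ext n
    rw [← antidiag_c]
    push_cast
    rw [Finset.sum_mul]
    apply Finset.sum_congr rfl
    intro kl hkl
    rw [Finset.HasAntidiagonal.mem_antidiagonal] at hkl
    rw [← hkl]
    field_simp
    ring
  · simp [c]
    ring

lemma logsq_real {x : ℝ} (hx : |x| < 1) :
    HasSum (fun n : ℕ => c n * x ^ (n + 1)) (Real.log (1 - x) ^ 2) := by
  have h := logsq_hasSum (z := (x : ℂ)) (by simpa using hx)
  rw [← Complex.hasSum_ofReal]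
  convert! h using 1
  · ext n; push_cast; rfl
  · rw [Complex.ofReal_pow, Complex.ofReal_log (by linarith [(abs_lt.1 hx).2])]; push_cast; rfl

lemma II_f2 (k : ℕ) : HasSum (fun n : ℕ => c n * (-1) ^ (n + 1) * ((k.factorial : ℝ) / (n + 1) ^ (k + 1)))
    (II f2 k) := by
  have := series_int sub_id k (a := fun n => c n * (-1) ^ (n + 1)) (f := f2) (by
    intro t ht
    have h1 := (logsq_real (x := -t) (by rw [abs_neg, abs_of_pos ht.1]; exact ht.2)).div_const t
    have h0 := ht.1.ne'
    convert! h1 using 1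
    · ext n
      rw [neg_pow t]
      field_simp
      ring
    · simp [f2]) (by
    refine (c_summ' k).congr ?_
    intro n
    rw [abs_mul, abs_pow, abs_neg, abs_one, one_pow, mul_one, abs_of_nonneg (c_nonneg n)])
  simpa [II] using this

lemma II_f1 (k : ℕ) : HasSum (fun n : ℕ => (-1) ^ n / ((n : ℝ) + 1) * ((k.factorial : ℝ) / (n + 1) ^ (k + 1)))
    (II f1 k) := by
  have := series_int sub_id k (a := fun n : ℕ => (-1) ^ n / ((n : ℝ) + 1)) (f := f1) (by
    intro t ht
    have h1 := (Real.hasSum_pow_div_log_of_abs_lt_one (x := -t)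
      (by rw [abs_neg, abs_of_pos ht.1]; exact ht.2)).div_const (-t)
    have h0 := ht.1.ne'
    convert! h1 using 1
    · ext n
      rw [neg_pow t]
      field_simp
      ring
    · simp [f1]) (by
    refine (summable_inv_pow k).congr ?_
    intro n
    rw [abs_div, abs_pow, abs_neg, abs_one, one_pow, abs_of_pos (by positivity : (0 : ℝ) < (n : ℝ) + 1)]
    field_simp
    ring)
  simpa [II] using this

/-- zeta(2,1) = zeta(3) -/
lemma c_sum1 : ∑' n : ℕ, c n / ((n : ℝ) + 1) = 2 * ∑' n : ℕ, 1 / ((n : ℝ) + 1) ^ 3 := by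
  have h1 := series_int sub_id 0 (a := c) (f := fun x => Real.log (1 - x) ^ 2 / x) (by
    intro t ht
    have h1 := (logsq_real (x := t) (by rw [abs_of_pos ht.1]; exact ht.2)).div_const t
    have h0 := ht.1.ne'
    convert! h1 using 1
    ext n
    field_simp
    ring) (by
    refine (c_summ' 0).congr ?_
    intro n
    rw [abs_of_nonneg (c_nonneg n)])
  have h2 := series_int sub_id 2 (a := fun _ => 1) (f := fun x => (1 - x)⁻¹) (by
    intro t ht
    have := hasSum_geometric_of_lt_one ht.1.le ht.2
    simpa using this) (by
    simpa using (summable_inv_pow 1))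
  have h3 : ∫ t in (0 : ℝ)..1, Real.log (1 - t) ^ 2 / t * (-Real.log t) ^ 0 * 1 =
      ∫ t in (0 : ℝ)..1, (1 - t)⁻¹ * (-Real.log t) ^ 2 * 1 := by
    have := intervalIntegral.integral_comp_sub_left (a := 0) (b := 1)
      (fun t : ℝ => (1 - t)⁻¹ * (-Real.log t) ^ 2 * 1) 1
    simp only [sub_self, sub_zero] at this
    rw [← this]
    congr 1
    ext t
    simp
    ring
  rw [h3] at h1
  have h4 := h1.tsum_eq.trans h2.tsum_eq.symm
  rw [← tsum_mul_left]
  convert! h4 using 2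
  · ext n; simp; ring
  · ext n; simp; ring

lemma zeta2 : HasSum (fun n : ℕ => 1 / ((n : ℝ) + 1) ^ 2) (Real.pi ^ 2 / 6) := by
  have := (hasSum_nat_add_iff' 1).2 hasSum_zeta_two
  simpa using this
lemma zeta4 : HasSum (fun n : ℕ => 1 / ((n : ℝ) + 1) ^ 4) (Real.pi ^ 4 / 90) := by
  have := (hasSum_nat_add_iff' 1).2 hasSum_zeta_four
  simpa using this

noncomputable def H2 (n : ℕ) : ℝ := ∑ k ∈ Finset.range n, 1 / ((k : ℝ) + 1) ^ 2

/-- Euler: zeta(3,1) = zeta(4)/4 -/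
lemma c_sum2 : ∑' n : ℕ, c n / ((n : ℝ) + 1) ^ 2 = Real.pi ^ 4 / 180 := by
  set Z := Real.pi ^ 2 / 6 with hZ
  have hz := zeta2
  have hn : Summable (fun n : ℕ => ‖1 / ((n : ℝ) + 1) ^ 2‖) := hz.summable.norm
  have hp := tsum_mul_tsum_eq_tsum_sum_antidiagonal_of_summable_norm hn hn
  have hps := (summable_norm_sum_mul_antidiagonal_of_summable_norm hn hn).of_norm.hasSum
  rw [← hp, hz.tsum_eq] at hps
  have hA : ∀ n : ℕ, ∑ kl ∈ Finset.HasAntidiagonal.antidiagonal n, 1 / ((kl.1 : ℝ) + 1) ^ 2 * (1 / ((kl.2 : ℝ) + 1) ^ 2) =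
      2 * (1 / (((n + 1 : ℕ) : ℝ) + 1) ^ 2) * H2 (n + 1) + 2 * (c (n + 1) / (((n + 1 : ℕ) : ℝ) + 1) ^ 2) := by
    intro n
    have : ∀ kl ∈ Finset.HasAntidiagonal.antidiagonal n, 1 / ((kl.1 : ℝ) + 1) ^ 2 * (1 / ((kl.2 : ℝ) + 1) ^ 2) =
        (1 / ((n : ℝ) + 2) ^ 2) * (1 / ((kl.1 : ℝ) + 1) ^ 2 + 1 / ((kl.2 : ℝ) + 1) ^ 2) +
        (2 / ((n : ℝ) + 2) ^ 3) * (1 / ((kl.1 : ℝ) + 1) + 1 / ((kl.2 : ℝ) + 1)) := by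
      intro kl hkl
      rw [Finset.HasAntidiagonal.mem_antidiagonal] at hkl
      have : (n : ℝ) = kl.1 + kl.2 := by exact_mod_cast hkl.symm
      rw [this]
      field_simp
      ring
    rw [Finset.sum_congr rfl this, Finset.sum_add_distrib, ← Finset.mul_sum, ← Finset.mul_sum,
      Finset.sum_add_distrib, Finset.sum_add_distrib,
      antidiag_swap n (fun m => 1 / ((m : ℝ) + 1)), antidiag_harm,
      antidiag_swap n (fun m => 1 / ((m : ℝ) + 1) ^ 2)]
    have h2 : ∑ kl ∈ Finset.HasAntidiagonal.antidiagonal n, (1 / ((kl.1 : ℝ) + 1) ^ 2) = H2 (n + 1) := by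
      rw [Finset.Nat.sum_antidiagonal_eq_sum_range_succ_mk]
      simp [H2]
    rw [h2]
    unfold c
    push_cast
    field_simp
    ring
  simp_rw [hA] at hps
  have hps0 : HasSum (fun n : ℕ => 2 * (1 / ((n : ℝ) + 1) ^ 2) * H2 n + 2 * (c n / ((n : ℝ) + 1) ^ 2))
      (Z * Z) := by
    rw [← hasSum_nat_add_iff' 1]
    simpa [H2, c] using hps
  -- telescoping
  have htel : HasSum (fun n : ℕ => 2 * (1 / ((n : ℝ) + 1) ^ 2) * H2 n + 1 / ((n : ℝ) + 1) ^ 4) (Z * Z) := by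
    rw [hasSum_iff_tendsto_nat_of_nonneg]
    · have h1 : Tendsto H2 atTop (𝓝 Z) := hz.tendsto_sum_nat
      refine (h1.mul h1).congr ?_
      intro n
      induction n with
      | zero => simp [H2]
      | succ n ih =>
        rw [Finset.sum_range_succ, ← ih]
        have : H2 (n + 1) = H2 n + 1 / ((n : ℝ) + 1) ^ 2 := by
          unfold H2; rw [Finset.sum_range_succ]
        rw [this]
        field_simp
        ring
    · intro n
      have : 0 ≤ H2 n := by unfold H2; positivity
      positivity
  have h5 := ((hps0.sub htel).add zeta4).div_const 2
  simp only [sub_self, zero_add] at h5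
  have h6 : HasSum (fun n : ℕ => c n / ((n : ℝ) + 1) ^ 2) (Real.pi ^ 4 / 90 / 2) := by
    convert! h5 using 2 with n
    ring
  rw [h6.tsum_eq]
  ring

lemma alt_sum_aux {u : ℕ → ℝ} {Z Y : ℝ} (hz : HasSum u Z) (ho : HasSum (fun m : ℕ => u (2 * m + 1)) Y) :
    HasSum (fun n : ℕ => (-1) ^ n * u n) (Z - 2 * Y) := by
  have hes : Summable (fun m : ℕ => u (2 * m)) := by
    have hinj : Function.Injective (fun m : ℕ => 2 * m) := fun a b h => by
      have : 2 * a = 2 * b := h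
      omega
    exact hz.summable.comp_injective hinj
  have h1 := (hes.hasSum.even_add_odd ho).unique hz
  have he : HasSum (fun m : ℕ => u (2 * m)) (Z - Y) := by
    have h2 := eq_sub_of_add_eq h1
    rw [← h2]; exact hes.hasSum
  have he' : HasSum (fun m : ℕ => (-1 : ℝ) ^ (2 * m) * u (2 * m)) (Z - Y) := by
    refine he.congr_fun ?_
    intro m
    rw [pow_mul]; simp
  have ho' : HasSum (fun m : ℕ => (-1 : ℝ) ^ (2 * m + 1) * u (2 * m + 1)) (-Y) := by
    refine ho.neg.congr_fun ?_
    intro m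
    rw [pow_succ, pow_mul]; simp
  have h3 := HasSum.even_add_odd (f := fun n : ℕ => (-1 : ℝ) ^ n * u n) he' ho'
  have h4 : Z - Y + -Y = Z - 2 * Y := by ring
  rw [← h4]
  exact h3

lemma alt_sum {s : ℕ} {Z : ℝ} (hz : HasSum (fun n : ℕ => 1 / ((n : ℝ) + 1) ^ s) Z) :
    HasSum (fun n : ℕ => (-1) ^ n * (1 / ((n : ℝ) + 1) ^ s)) (Z - 2 * (Z / 2 ^ s)) := by
  refine alt_sum_aux hz ?_
  refine (hz.div_const (2 ^ s)).congr_fun ?_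
  intro m
  push_cast
  rw [div_div, ← mul_pow]
  congr 2
  ring

lemma II_f1_0 : II f1 0 = Real.pi ^ 2 / 12 := by
  have h := II_f1 0
  have h2 := alt_sum zeta2
  have := h.unique (by convert! h2 using 2 with n; simp; field_simp)
  rw [this]; ring

lemma II_f1_2 : II f1 2 = 7 * Real.pi ^ 4 / 360 := by
  have h := II_f1 2
  have h2 := (alt_sum zeta4).mul_left 2
  have := h.unique (by convert! h2 using 2 with n; simp; field_simp)
  rw [this]; ring

end CB

namespace CB

open MeasureTheory Filter Topology Set

noncomputable def M (t : ℝ) : ℝ := -Real.log ((2 / Real.pi) * t)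
noncomputable def Cc : ℝ := Real.log 2 + Real.pi

lemma M_nonneg {t : ℝ} (ht : t ∈ Ioc 0 (Real.pi / 2)) : 0 ≤ M t := by
  have hp := Real.pi_pos
  have h1 := ht.1
  have : Real.log ((2 / Real.pi) * t) ≤ 0 := by
    refine Real.log_nonpos (by positivity) ?_
    rw [div_mul_eq_mul_div, div_le_one hp]
    linarith [ht.2]
  unfold M; linarith

lemma Cc_ge : 1 ≤ Cc := by
  have := Real.pi_gt_three
  have := Real.log_nonneg (by norm_num : (1 : ℝ) ≤ 2)
  unfold Cc; linarith

lemma log_sin_ge {t : ℝ} (ht : t ∈ Ioc 0 (Real.pi / 2)) : -M t ≤ Real.log (Real.sin t) := by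
  have hp := Real.pi_pos
  have h1 := ht.1
  unfold M
  rw [neg_neg]
  exact Real.log_le_log (by positivity) (Real.mul_le_sin ht.1.le ht.2)

lemma M_int (k : ℕ) : IntervalIntegrable (fun t => M t ^ k) volume 0 (Real.pi / 2) := by
  have h1 := (gen_int sub_id 0 k).1
  simp only [pow_zero, one_mul, mul_one] at h1
  have h2 : IntervalIntegrable (fun x : ℝ => (-Real.log x) ^ k) volume 0 1 :=
    (intervalIntegrable_iff_integrableOn_Ioc_of_le zero_le_one).2 h1
  have h3 := h2.comp_mul_left (c := 2 / Real.pi)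
  simpa [M] using h3

noncomputable def Bd (t : ℝ) : ℝ := (M t + Cc) ^ 2

lemma Bd_int : IntervalIntegrable Bd volume 0 (Real.pi / 2) := by
  have h := ((M_int 2).add ((M_int 1).const_mul (2 * Cc))).add
    (intervalIntegrable_const (c := Cc ^ 2))
  refine h.congr (fun t _ => ?_)
  simp only [Bd]
  ring

lemma integ {E : Type*} [NormedAddCommGroup E] {F : ℝ → E} (D : ℝ)
    (hF : ContinuousOn F (Ioo 0 (Real.pi / 2)))
    (hb : ∀ t ∈ Ioo 0 (Real.pi / 2), ‖F t‖ ≤ D * Bd t) :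
    IntervalIntegrable F volume 0 (Real.pi / 2) := by
  have hp := Real.pi_pos
  have h := Bd_int.const_mul D
  rw [intervalIntegrable_iff_integrableOn_Ioo_of_le (by positivity)] at h ⊢
  refine Integrable.mono' h (hF.aestronglyMeasurable measurableSet_Ioo) ?_
  exact (ae_restrict_iff' measurableSet_Ioo).2 (ae_of_all _ hb)

noncomputable def z (r t : ℝ) : ℂ := r * Complex.exp (2 * Complex.I * t)

lemma z_norm {r : ℝ} (hr : 0 ≤ r) (t : ℝ) : ‖z r t‖ = r := by
  unfold z
  rw [norm_mul, Complex.norm_real, Real.norm_of_nonneg hr, Complex.norm_exp]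
  simp

lemma z_pow (r t : ℝ) (m : ℕ) : z r t ^ m = (r : ℂ) ^ m * Complex.exp (2 * Complex.I * m * t) := by
  unfold z
  rw [mul_pow, ← Complex.exp_nat_mul]
  congr 2
  ring

lemma z_re (r t : ℝ) : (z r t).re = r * (1 - 2 * Real.sin t ^ 2) := by
  unfold z
  rw [Complex.re_ofReal_mul, show 2 * Complex.I * (t : ℂ) = ((2 * t : ℝ) : ℂ) * Complex.I by push_cast; ring,
    Complex.exp_ofReal_mul_I_re, Real.cos_two_mul, Real.cos_sq']
  ring

lemma z_im (r t : ℝ) : (z r t).im = r * (2 * Real.sin t * Real.cos t) := by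
  unfold z
  rw [Complex.im_ofReal_mul, show 2 * Complex.I * (t : ℂ) = ((2 * t : ℝ) : ℂ) * Complex.I by push_cast; ring,
    Complex.exp_ofReal_mul_I_im, Real.sin_two_mul]

lemma norm_ge {r t : ℝ} (hr : 1 / 4 ≤ r) (ht : t ∈ Ioc 0 (Real.pi / 2)) :
    Real.sin t ≤ ‖1 - z r t‖ := by
  refine Real.le_sqrt_of_sq_le ?_ |>.trans (Complex.norm_def _).ge
  rw [Complex.normSq_apply]
  simp only [Complex.sub_re, Complex.one_re, Complex.sub_im, Complex.one_im, z_re, z_im]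
  have h := Real.sin_sq_add_cos_sq t
  have : (1 - r * (1 - 2 * Real.sin t ^ 2)) * (1 - r * (1 - 2 * Real.sin t ^ 2)) +
    (0 - r * (2 * Real.sin t * Real.cos t)) * (0 - r * (2 * Real.sin t * Real.cos t))
     = (1 - r) ^ 2 + 4 * r * Real.sin t ^ 2 := by
    have h2 : Real.cos t ^ 2 = 1 - Real.sin t ^ 2 := by linarith
    linear_combination 4 * r ^ 2 * Real.sin t ^ 2 * h2
  rw [this]
  nlinarith [sq_nonneg (1 - r), sq_nonneg (Real.sin t)]

lemma sin_pos'' {t : ℝ} (ht : t ∈ Ioc 0 (Real.pi / 2)) : 0 < Real.sin t :=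
  Real.sin_pos_of_pos_of_lt_pi ht.1 (by linarith [ht.2, Real.pi_pos])

lemma log_bd {r t : ℝ} (hr : 1 / 4 ≤ r) (hr1 : r ≤ 1) (ht : t ∈ Ioc 0 (Real.pi / 2)) :
    ‖Complex.log (1 - z r t)‖ ≤ M t + Cc := by
  have h1 := norm_ge hr ht
  have h2 : ‖1 - z r t‖ ≤ 2 := by
    refine (norm_sub_le _ _).trans ?_
    rw [z_norm (by linarith), norm_one]; linarith
  have h3 := sin_pos'' ht
  have h4 := Real.log_le_log h3 h1
  have h5 := Real.log_le_log (h3.trans_le h1) h2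
  have h6 := log_sin_ge ht
  have h7 := M_nonneg ht
  have hl := Real.log_nonneg (by norm_num : (1 : ℝ) ≤ 2)
  refine (Complex.norm_le_abs_re_add_abs_im _).trans ?_
  rw [Complex.log_re, Complex.log_im]
  have h8 := Complex.abs_arg_le_pi (1 - z r t)
  have h9 : |Real.log ‖1 - z r t‖| ≤ M t + Real.log 2 := by
    rw [abs_le]; constructor <;> linarith
  unfold Cc; linarith

lemma slit {r t : ℝ} (hr : 0 ≤ r) (hr1 : r ≤ 1) (ht : t ∈ Ioc 0 (Real.pi / 2)) :
    1 - z r t ∈ Complex.slitPlane := by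
  left
  simp only [Complex.sub_re, Complex.one_re, z_re]
  have := sin_pos'' ht
  rcases eq_or_lt_of_le hr with h | h
  · rw [← h]; norm_num
  · have : 0 < r * Real.sin t ^ 2 := by positivity
    nlinarith

lemma slit' {w : ℂ} (hw : ‖w‖ < 1) : 1 - w ∈ Complex.slitPlane := by
  left
  simp only [Complex.sub_re, Complex.one_re]
  linarith [(Complex.re_le_norm w)]

lemma z_cont_r (t : ℝ) : Continuous (fun r => z r t) := by unfold z; fun_prop
lemma z_cont_t (r : ℝ) : Continuous (fun t => z r t) := by unfold z; fun_prop

lemma fou {a : ℕ → ℝ} {j : ℕ} {φ : ℝ → ℝ} {p : ℕ → ℂ} {K : ℝ} (hj : j = 1 ∨ j = 2)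
    (ha : ∀ n, |a n| ≤ K)
    (hg : ∀ w : ℂ, ‖w‖ < 1 → HasSum (fun n : ℕ => (a n : ℂ) * w ^ (n + 1)) (Complex.log (1 - w) ^ j))
    (hφ : Continuous φ) (hφ2 : ∀ t ∈ Ioc 0 (Real.pi / 2), |φ t| ≤ 2)
    (hp : ∀ n : ℕ, ∫ t in (0 : ℝ)..(Real.pi / 2), (φ t : ℂ) * Complex.exp (2 * Complex.I * ((n + 1 : ℕ) : ℂ) * t) = p n)
    (hpb : ∀ n : ℕ, ‖p n‖ ≤ 2 / ((n : ℝ) + 1))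
    (hs : Summable (fun n : ℕ => |a n| / ((n : ℝ) + 1))) :
    HasSum (fun n => (a n : ℂ) * p n)
      (∫ t in (0 : ℝ)..(Real.pi / 2), (φ t : ℂ) * Complex.log (1 - z 1 t) ^ j) := by
  have hpi : (0 : ℝ) ≤ Real.pi / 2 := by positivity
  have huIoc : Set.uIoc 0 (Real.pi / 2) = Ioc 0 (Real.pi / 2) := uIoc_of_le hpi
  have hK : 0 ≤ K := (abs_nonneg _).trans (ha 0)
  have step1 : ∀ r : ℝ, r ∈ Ico (1 / 4 : ℝ) 1 → HasSum (fun n => (a n : ℂ) * (r : ℂ) ^ (n + 1) * p n)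
      (∫ t in (0 : ℝ)..(Real.pi / 2), (φ t : ℂ) * Complex.log (1 - z r t) ^ j) := by
    intro r hr
    have hr0 : 0 ≤ r := by linarith [hr.1]
    have := intervalIntegral.hasSum_integral_of_dominated_convergence (μ := volume)
      (a := 0) (b := Real.pi / 2)
      (F := fun n t => (φ t : ℂ) * ((a n : ℂ) * z r t ^ (n + 1)))
      (f := fun t => (φ t : ℂ) * Complex.log (1 - z r t) ^ j)
      (fun n _ => 2 * (K * r ^ (n + 1)))
      (fun n => by
        have := z_cont_t r
        refine Continuous.aestronglyMeasurable ?_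
        fun_prop)
      (fun n => by
        refine ae_of_all _ (fun t ht => ?_)
        rw [huIoc] at ht
        rw [norm_mul, norm_mul, norm_pow, z_norm hr0, Complex.norm_real, Complex.norm_real]
        have h1 := hφ2 t ht
        have h2 := ha n
        simp only [Real.norm_eq_abs]
        gcongr)
      (by
        refine ae_of_all _ (fun t _ => ?_)
        refine Summable.mul_left _ (Summable.mul_left _ ?_)
        exact (summable_nat_add_iff 1).2 (summable_geometric_of_lt_one hr0 hr.2))
      (by exact intervalIntegrable_const)
      (by
        refine ae_of_all _ (fun t _ => ?_)
        exact (hg _ (by rw [z_norm hr0]; exact hr.2)).mul_left _)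
    refine this.congr_fun ?_
    intro n
    rw [← hp n, ← intervalIntegral.integral_const_mul]
    congr 1
    ext t
    rw [z_pow]
    ring
  have step2 : Tendsto (fun r : ℝ => ∫ t in (0 : ℝ)..(Real.pi / 2), (φ t : ℂ) * Complex.log (1 - z r t) ^ j)
      (𝓝[<] 1) (𝓝 (∫ t in (0 : ℝ)..(Real.pi / 2), (φ t : ℂ) * Complex.log (1 - z 1 t) ^ j)) := by
    have hev : ∀ᶠ r : ℝ in 𝓝[<] 1, r ∈ Ico (1 / 4 : ℝ) 1 :=
      mem_of_superset (Ioo_mem_nhdsLT (by norm_num : (1 / 4 : ℝ) < 1)) Ioo_subset_Ico_self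
    refine intervalIntegral.tendsto_integral_filter_of_dominated_convergence (fun t => 2 * Bd t) ?_ ?_ ?_ ?_
    · filter_upwards [hev] with r hr
      have hr0 : 0 ≤ r := by linarith [hr.1]
      refine Continuous.aestronglyMeasurable ?_
      have : Continuous (fun t => Complex.log (1 - z r t)) := by
        refine Continuous.clog ?_ ?_
        · have := z_cont_t r
          fun_prop
        · intro t
          exact slit' (by rw [z_norm hr0]; exact hr.2)
      fun_prop
    · filter_upwards [hev] with r hr
      refine ae_of_all _ (fun t ht => ?_)
      rw [huIoc] at ht
      have h1 := log_bd hr.1 hr.2.le ht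
      have h2 := hφ2 t ht
      have h3 := M_nonneg ht
      have h4 := Cc_ge
      rw [norm_mul, norm_pow, Complex.norm_real, Real.norm_eq_abs]
      have h5 : ‖Complex.log (1 - z r t)‖ ^ j ≤ Bd t := by
        unfold Bd
        refine (pow_le_pow_left₀ (norm_nonneg _) h1 j).trans ?_
        refine pow_le_pow_right₀ (by linarith) ?_
        rcases hj with h | h <;> omega
      exact mul_le_mul h2 h5 (by positivity) (by norm_num)
    · exact Bd_int.const_mul 2
    · refine ae_of_all _ (fun t ht => ?_)
      rw [huIoc] at ht
      have : ContinuousAt (fun r => (φ t : ℂ) * Complex.log (1 - z r t) ^ j) 1 := by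
        have h1 : ContinuousAt (fun r => Complex.log (1 - z r t)) 1 := by
          refine ContinuousAt.clog ?_ (slit zero_le_one le_rfl ht)
          have := z_cont_r t
          fun_prop
        fun_prop
      exact this.tendsto.mono_left nhdsWithin_le_nhds
  have hsum : Summable (fun n : ℕ => 2 * (|a n| / ((n : ℝ) + 1))) := hs.mul_left 2
  have hb : ∀ n : ℕ, ‖(a n : ℂ) * p n‖ ≤ 2 * (|a n| / ((n : ℝ) + 1)) := by
    intro n
    rw [norm_mul, Complex.norm_real, Real.norm_eq_abs]
    refine (mul_le_mul_of_nonneg_left (hpb n) (abs_nonneg _)).trans (le_of_eq ?_)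
    ring
  have step3 : Tendsto (fun r : ℝ => ∑' n, (a n : ℂ) * (r : ℂ) ^ (n + 1) * p n)
      (𝓝[<] 1) (𝓝 (∑' n, (a n : ℂ) * p n)) := by
    refine tendsto_tsum_of_dominated_convergence hsum ?_ ?_
    · intro n
      have : ContinuousAt (fun r : ℝ => (a n : ℂ) * (r : ℂ) ^ (n + 1) * p n) 1 := by fun_prop
      have h := this.tendsto.mono_left (nhdsWithin_le_nhds (s := Iio 1))
      simpa using h
    · have hev : ∀ᶠ r : ℝ in 𝓝[<] 1, r ∈ Ico (1 / 4 : ℝ) 1 :=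
        mem_of_superset (Ioo_mem_nhdsLT (by norm_num : (1 / 4 : ℝ) < 1)) Ioo_subset_Ico_self
      filter_upwards [hev] with r hr n
      have hr0 : 0 ≤ r := by linarith [hr.1]
      rw [mul_right_comm, norm_mul, norm_pow, Complex.norm_real, Real.norm_of_nonneg hr0]
      refine (mul_le_of_le_one_right (norm_nonneg _) (pow_le_one₀ hr0 hr.2.le)).trans (hb n)
  have hss : Summable (fun n => (a n : ℂ) * p n) := Summable.of_norm_bounded hsum hb
  have heq : ∑' n, (a n : ℂ) * p n =
      ∫ t in (0 : ℝ)..(Real.pi / 2), (φ t : ℂ) * Complex.log (1 - z 1 t) ^ j := by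
    refine tendsto_nhds_unique step3 (step2.congr' ?_)
    have hev : ∀ᶠ r : ℝ in 𝓝[<] 1, r ∈ Ico (1 / 4 : ℝ) 1 :=
        mem_of_superset (Ioo_mem_nhdsLT (by norm_num : (1 / 4 : ℝ) < 1)) Ioo_subset_Ico_self
    filter_upwards [hev] with r hr
    exact (step1 r hr).tsum_eq.symm
  rw [← heq]
  exact hss.hasSum

end CB

namespace CB

open MeasureTheory Filter Topology Set

noncomputable def S (t : ℝ) : ℝ := Real.log (2 * Real.sin t)

lemma Ioo_Ioc {t : ℝ} (ht : t ∈ Ioo 0 (Real.pi / 2)) : t ∈ Ioc 0 (Real.pi / 2) := ⟨ht.1, ht.2.le⟩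

lemma log_z {t : ℝ} (ht : t ∈ Ioo 0 (Real.pi / 2)) :
    Complex.log (1 - z 1 t) = (S t : ℂ) + ((t - Real.pi / 2 : ℝ) : ℂ) * Complex.I := by
  have h1 := sin_pos'' (Ioo_Ioc ht)
  have hp := Real.pi_pos
  have : 1 - z 1 t = ((2 * Real.sin t : ℝ) : ℂ) *
      Complex.exp (((t - Real.pi / 2 : ℝ) : ℂ) * Complex.I) := by
    apply Complex.ext
    · rw [Complex.re_ofReal_mul, Complex.exp_ofReal_mul_I_re, Real.cos_sub_pi_div_two]
      simp only [Complex.sub_re, Complex.one_re, z_re]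
      ring
    · rw [Complex.im_ofReal_mul, Complex.exp_ofReal_mul_I_im, Real.sin_sub_pi_div_two]
      simp only [Complex.sub_im, Complex.one_im, z_im]
      ring
  rw [this, Complex.log_ofReal_mul (by positivity) (Complex.exp_ne_zero _), Complex.log_exp]
  · rfl
  · simp; linarith [ht.1]
  · simp; linarith [ht.2]

lemma S_eq {t : ℝ} (ht : t ∈ Ioo 0 (Real.pi / 2)) : S t = Real.log 2 + Real.log (Real.sin t) := by
  have h1 := sin_pos'' (Ioo_Ioc ht)
  unfold S; rw [Real.log_mul (by norm_num) h1.ne']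

lemma exp_pi (m : ℕ) : Complex.exp (2 * Complex.I * (m : ℂ) * ((Real.pi / 2 : ℝ) : ℂ)) = (-1) ^ m := by
  rw [← Complex.exp_pi_mul_I, ← Complex.exp_nat_mul]
  congr 1
  push_cast
  ring

lemma four0 (n : ℕ) : ∫ t in (0 : ℝ)..(Real.pi / 2), ((1 : ℝ) : ℂ) * Complex.exp (2 * Complex.I * ((n + 1 : ℕ) : ℂ) * t) =
    ((0 : ℝ) : ℂ) + (((1 - (-1) ^ (n + 1)) / (2 * ((n : ℝ) + 1)) : ℝ) : ℂ) * Complex.I := by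
  have hn : ((n : ℂ) + 1) ≠ 0 := by exact_mod_cast Nat.succ_ne_zero n
  simp only [Complex.ofReal_one, one_mul]
  rw [integral_exp_mul_complex (by simpa using hn), exp_pi]
  simp only [Complex.ofReal_zero, mul_zero, Complex.exp_zero]
  push_cast
  have hI := Complex.I_sq
  field_simp
  linear_combination ((-1 : ℂ) ^ (n + 1) - 1) * hI

lemma four1 (n : ℕ) : ∫ t in (0 : ℝ)..(Real.pi / 2), (t : ℂ) * Complex.exp (2 * Complex.I * ((n + 1 : ℕ) : ℂ) * t) =
    ((((-1) ^ (n + 1) - 1) / (4 * ((n : ℝ) + 1) ^ 2) : ℝ) : ℂ) +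
    ((-Real.pi * (-1) ^ (n + 1) / (4 * ((n : ℝ) + 1)) : ℝ) : ℂ) * Complex.I := by
  have hn : ((n : ℂ) + 1) ≠ 0 := by exact_mod_cast Nat.succ_ne_zero n
  set w : ℂ := 2 * Complex.I * ((n + 1 : ℕ) : ℂ) with hw
  have hw0 : w ≠ 0 := by rw [hw]; simpa using hn
  have hd : ∀ t : ℝ, HasDerivAt (fun t : ℝ => (t : ℂ) * Complex.exp (w * t) / w - Complex.exp (w * t) / w ^ 2)
      ((t : ℂ) * Complex.exp (w * t)) t := by
    intro t
    have h1 : HasDerivAt (fun t : ℝ => (t : ℂ)) 1 t := Complex.ofRealCLM.hasDerivAt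
    have h2 := (h1.const_mul w).cexp
    have h3 := ((h1.mul h2).div_const w).sub (h2.div_const (w ^ 2))
    convert! h3 using 1
    field_simp
    ring
  rw [intervalIntegral.integral_eq_sub_of_hasDerivAt (fun t _ => hd t)
    (Continuous.intervalIntegrable (by fun_prop) _ _), hw, exp_pi]
  simp only [Complex.ofReal_zero, mul_zero, Complex.exp_zero]
  push_cast
  have hI := Complex.I_sq
  field_simp
  rw [hI]; ring_nf
  try rw [hI]
  try ring

lemma m1 (n : ℕ) : |((-1 : ℝ)) ^ n| = 1 := by rw [abs_pow, abs_neg, abs_one, one_pow]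

lemma nrm (A B : ℝ) : ‖(A : ℂ) + (B : ℂ) * Complex.I‖ ≤ |A| + |B| := by
  refine (norm_add_le _ _).trans ?_
  simp

lemma four0_bd (n : ℕ) : ‖((0 : ℝ) : ℂ) + (((1 - (-1) ^ (n + 1)) / (2 * ((n : ℝ) + 1)) : ℝ) : ℂ) * Complex.I‖
    ≤ 2 / ((n : ℝ) + 1) := by
  refine (nrm _ _).trans ?_
  have hp : (0 : ℝ) < n + 1 := by positivity
  have h1 := abs_le.1 (m1 (n + 1)).le
  rw [abs_zero, zero_add, abs_div, abs_of_pos (by positivity : (0 : ℝ) < 2 * ((n : ℝ) + 1)),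
    div_le_div_iff₀ (by positivity) hp]
  have : |1 - (-1 : ℝ) ^ (n + 1)| ≤ 2 := by rw [abs_le]; constructor <;> linarith
  nlinarith

lemma four1_bd (n : ℕ) : ‖((((-1) ^ (n + 1) - 1) / (4 * ((n : ℝ) + 1) ^ 2) : ℝ) : ℂ) +
    ((-Real.pi * (-1) ^ (n + 1) / (4 * ((n : ℝ) + 1)) : ℝ) : ℂ) * Complex.I‖
    ≤ 2 / ((n : ℝ) + 1) := by
  refine (nrm _ _).trans ?_
  have hn : (0 : ℝ) ≤ n := by positivity
  have hp : (0 : ℝ) < n + 1 := by positivity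
  have h1 := abs_le.1 (m1 (n + 1)).le
  have ha : |((-1 : ℝ) ^ (n + 1) - 1) / (4 * ((n : ℝ) + 1) ^ 2)| ≤ 1 / ((n : ℝ) + 1) := by
    rw [abs_div, abs_of_pos (by positivity : (0 : ℝ) < 4 * ((n : ℝ) + 1) ^ 2),
      div_le_div_iff₀ (by positivity) hp]
    have : |(-1 : ℝ) ^ (n + 1) - 1| ≤ 2 := by rw [abs_le]; constructor <;> linarith
    nlinarith
  have hb : |-Real.pi * (-1) ^ (n + 1) / (4 * ((n : ℝ) + 1))| ≤ 1 / ((n : ℝ) + 1) := by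
    rw [abs_div, abs_mul, m1, abs_neg, abs_of_pos Real.pi_pos,
      abs_of_pos (by positivity : (0 : ℝ) < 4 * ((n : ℝ) + 1)),
      div_le_div_iff₀ (by positivity) hp]
    nlinarith [Real.pi_le_four]
  calc _ ≤ 1 / ((n : ℝ) + 1) + 1 / ((n : ℝ) + 1) := add_le_add ha hb
    _ = _ := by ring

lemma S_cont : ContinuousOn S (Ioo 0 (Real.pi / 2)) := by
  unfold S
  refine ContinuousOn.log (by fun_prop) (fun t ht => ?_)
  have := sin_pos'' (Ioo_Ioc ht)
  positivity

lemma M_add_ge {t : ℝ} (ht : t ∈ Ioo 0 (Real.pi / 2)) : 1 ≤ M t + Cc := by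
  linarith [M_nonneg (Ioo_Ioc ht), Cc_ge]

lemma S_bd {t : ℝ} (ht : t ∈ Ioo 0 (Real.pi / 2)) : |S t| ≤ M t + Cc := by
  have h1 := log_sin_ge (Ioo_Ioc ht)
  have h2 := Real.log_nonpos (sin_pos'' (Ioo_Ioc ht)).le (Real.sin_le_one t)
  have h3 := M_nonneg (Ioo_Ioc ht)
  have hl := Real.log_nonneg (by norm_num : (1 : ℝ) ≤ 2)
  have hp := Real.pi_pos
  rw [S_eq ht]
  unfold Cc
  rw [abs_le]; constructor <;> linarith

lemma t_bd {t : ℝ} (ht : t ∈ Ioc 0 (Real.pi / 2)) : |t| ≤ 2 := by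
  rw [abs_of_pos ht.1]; linarith [ht.2, Real.pi_le_four]

lemma one_le_Bd {t : ℝ} (ht : t ∈ Ioo 0 (Real.pi / 2)) : M t + Cc ≤ Bd t := by
  have := M_add_ge ht
  unfold Bd; nlinarith

lemma Spow_bd {t : ℝ} (ht : t ∈ Ioo 0 (Real.pi / 2)) {j : ℕ} (hj : j ≤ 2) : |S t| ^ j ≤ Bd t := by
  refine (pow_le_pow_left₀ (abs_nonneg _) (S_bd ht) j).trans ?_
  exact pow_le_pow_right₀ (M_add_ge ht) hj

/-- integrability of polynomial weights against powers of `S` -/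
lemma S_int {φ : ℝ → ℝ} (hφ : Continuous φ) {j : ℕ} (hj : j ≤ 2) :
    IntervalIntegrable (fun t => φ t * S t ^ j) volume 0 (Real.pi / 2) := by
  obtain ⟨D, hD⟩ := isCompact_Icc.exists_bound_of_continuousOn (s := Icc 0 (Real.pi / 2)) hφ.continuousOn
  refine integ D (hφ.continuousOn.mul (S_cont.pow j)) ?_
  intro t ht
  have h1 := hD t ⟨ht.1.le, ht.2.le⟩
  rw [norm_mul, norm_pow, Real.norm_eq_abs (S t)]
  exact mul_le_mul h1 (Spow_bd ht hj) (by positivity) ((norm_nonneg _).trans h1)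

/-- split a complex integral into real and imaginary parts -/
lemma split_int {F : ℝ → ℂ} {u v : ℝ → ℝ} (hu : IntervalIntegrable u volume 0 (Real.pi / 2))
    (hv : IntervalIntegrable v volume 0 (Real.pi / 2))
    (h : ∀ t ∈ Ioo 0 (Real.pi / 2), F t = (u t : ℂ) + (v t : ℂ) * Complex.I) :
    ∫ t in (0 : ℝ)..(Real.pi / 2), F t =
      ((∫ t in (0 : ℝ)..(Real.pi / 2), u t : ℝ) : ℂ) +
      ((∫ t in (0 : ℝ)..(Real.pi / 2), v t : ℝ) : ℂ) * Complex.I := by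
  have hp : (0 : ℝ) ≤ Real.pi / 2 := by positivity
  have h1 : ∫ t in (0 : ℝ)..(Real.pi / 2), F t =
      ∫ t in (0 : ℝ)..(Real.pi / 2), ((u t : ℂ) + (v t : ℂ) * Complex.I) := by
    rw [intervalIntegral.integral_of_le hp, intervalIntegral.integral_of_le hp,
      integral_Ioc_eq_integral_Ioo, integral_Ioc_eq_integral_Ioo]
    exact setIntegral_congr_fun measurableSet_Ioo h
  have hu' : IntervalIntegrable (fun t => (u t : ℂ)) volume 0 (Real.pi / 2) := ⟨hu.1.ofReal, hu.2.ofReal⟩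
  have hv' : IntervalIntegrable (fun t => (v t : ℂ)) volume 0 (Real.pi / 2) := ⟨hv.1.ofReal, hv.2.ofReal⟩
  rw [h1, intervalIntegral.integral_add hu' (hv'.mul_const _), intervalIntegral.integral_mul_const,
    intervalIntegral.integral_ofReal, intervalIntegral.integral_ofReal]

lemma hasSum_parts {a A B : ℕ → ℝ} {U V : ℝ}
    (h : HasSum (fun n => (a n : ℂ) * ((A n : ℂ) + (B n : ℂ) * Complex.I)) ((U : ℂ) + (V : ℂ) * Complex.I)) :
    HasSum (fun n => a n * A n) U ∧ HasSum (fun n => a n * B n) V := by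
  constructor
  · have := Complex.hasSum_re h
    simpa using this
  · have := Complex.hasSum_im h
    simpa using this

lemma log_hasSum (w : ℂ) (hw : ‖w‖ < 1) :
    HasSum (fun n : ℕ => ((-1 / ((n : ℝ) + 1) : ℝ) : ℂ) * w ^ (n + 1)) (Complex.log (1 - w) ^ 1) := by
  have h1 := (Complex.hasSum_taylorSeries_neg_log' hw).neg
  rw [neg_neg] at h1
  rw [pow_one]
  refine h1.congr_fun ?_
  intro n
  push_cast
  ring

lemma a1_bd (n : ℕ) : |-1 / ((n : ℝ) + 1)| ≤ 1 := by
  have hn : (0 : ℝ) ≤ n := by positivity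
  rw [abs_div, abs_neg, abs_one, abs_of_pos (by positivity : (0 : ℝ) < (n : ℝ) + 1), div_le_one (by positivity)]
  linarith

lemma a1_summ : Summable (fun n : ℕ => |-1 / ((n : ℝ) + 1)| / ((n : ℝ) + 1)) := by
  refine summable_inv_sq.congr ?_
  intro n
  rw [abs_div, abs_neg, abs_one, abs_of_pos (by positivity : (0 : ℝ) < (n : ℝ) + 1)]
  field_simp

lemma c_abs_summ : Summable (fun n : ℕ => |c n| / ((n : ℝ) + 1)) :=
  c_summ.congr (fun n => by rw [abs_of_nonneg (c_nonneg n)])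

lemma c_abs_le (n : ℕ) : |c n| ≤ 6 := by rw [abs_of_nonneg (c_nonneg n)]; exact c_le n

lemma parts1 {t : ℝ} (ht : t ∈ Ioo 0 (Real.pi / 2)) (x : ℝ) :
    (x : ℂ) * Complex.log (1 - z 1 t) ^ 1 = ((x * S t ^ 1 : ℝ) : ℂ) +
      ((x * (t - Real.pi / 2) : ℝ) : ℂ) * Complex.I := by
  rw [log_z ht]; push_cast; ring

lemma parts2 {t : ℝ} (ht : t ∈ Ioo 0 (Real.pi / 2)) (x : ℝ) :
    (x : ℂ) * Complex.log (1 - z 1 t) ^ 2 = ((x * S t ^ 2 - x * (t - Real.pi / 2) ^ 2 : ℝ) : ℂ) +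
      ((2 * x * (t - Real.pi / 2) * S t ^ 1 : ℝ) : ℂ) * Complex.I := by
  rw [log_z ht]; push_cast
  have hI := Complex.I_sq
  linear_combination (x : ℂ) * ((t : ℂ) - Real.pi / 2) ^ 2 * hI

noncomputable def z3 : ℝ := ∑' n : ℕ, 1 / ((n : ℝ) + 1) ^ 3

lemma z3_hasSum : HasSum (fun n : ℕ => 1 / ((n : ℝ) + 1) ^ 3) z3 := (summable_inv_pow 1).hasSum

lemma res1 : ∫ t in (0 : ℝ)..(Real.pi / 2), t * S t ^ 1 = (z3 + II f1 1) / 4 := by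
  have h := fou (j := 1) (φ := fun t => t) (Or.inl rfl) a1_bd log_hasSum continuous_id
    (fun t ht => t_bd ht) four1 four1_bd a1_summ
  rw [split_int (S_int continuous_id (by norm_num : 1 ≤ 2))
    (Continuous.intervalIntegrable (by fun_prop) _ _) (fun t ht => parts1 ht t)] at h
  have h1 := (hasSum_parts h).1
  have h2 := (z3_hasSum.add (II_f1 1)).div_const 4
  refine h1.unique (h2.congr_fun ?_)
  intro n
  simp
  field_simp
  ring

lemma res2 : ∫ t in (0 : ℝ)..(Real.pi / 2), 2 * 1 * (t - Real.pi / 2) * S t ^ 1 = (2 * z3 - II f2 0) / 2 := by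
  have h := fou (j := 2) (φ := fun _ => 1) (Or.inr rfl) c_abs_le (fun w hw => logsq_hasSum hw) continuous_const
    (fun t ht => by norm_num) four0 four0_bd c_abs_summ
  rw [split_int ((S_int continuous_const (by norm_num : 2 ≤ 2)).sub
    (Continuous.intervalIntegrable (by fun_prop) _ _))
    (S_int (φ := fun t => 2 * 1 * (t - Real.pi / 2)) (by fun_prop) (by norm_num : 1 ≤ 2))
     (fun t ht => parts2 ht 1)] at h
  have h1 := (hasSum_parts h).2
  have h0 : HasSum (fun n : ℕ => c n / ((n : ℝ) + 1)) (2 * z3) := by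
    unfold z3; rw [← c_sum1]; exact c_summ.hasSum
  have h2 := (h0.sub (II_f2 0)).div_const 2
  refine h1.unique (h2.congr_fun ?_)
  intro n
  simp
  field_simp

lemma res3 : ∫ t in (0 : ℝ)..(Real.pi / 2), (t * S t ^ 2 - t * (t - Real.pi / 2) ^ 2) =
    (II f2 1 - Real.pi ^ 4 / 180) / 4 := by
  have h := fou (j := 2) (φ := fun t => t) (Or.inr rfl) c_abs_le (fun w hw => logsq_hasSum hw) continuous_id
    (fun t ht => t_bd ht) four1 four1_bd c_abs_summ
  rw [split_int ((S_int continuous_id (by norm_num : 2 ≤ 2)).sub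
    (Continuous.intervalIntegrable (by fun_prop) _ _))
    (S_int (φ := fun t => 2 * t * (t - Real.pi / 2)) (by fun_prop) (by norm_num : 1 ≤ 2))
     (fun t ht => parts2 ht t)] at h
  have h1 := (hasSum_parts h).1
  have h0 : HasSum (fun n : ℕ => c n / ((n : ℝ) + 1) ^ 2) (Real.pi ^ 4 / 180) := by
    rw [← c_sum2]; exact (c_summ' 1).hasSum
  have h2 := ((II_f2 1).sub h0).div_const 4
  refine h1.unique (h2.congr_fun ?_)
  intro n
  simp
  field_simp

lemma int_S : ∫ t in (0 : ℝ)..(Real.pi / 2), S t ^ 1 = 0 := by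
  have hp : (0 : ℝ) ≤ Real.pi / 2 := by positivity
  have h1 : ∫ t in (0 : ℝ)..(Real.pi / 2), S t ^ 1 =
      ∫ t in (0 : ℝ)..(Real.pi / 2), (Real.log 2 + Real.log (Real.sin t)) := by
    rw [intervalIntegral.integral_of_le hp, intervalIntegral.integral_of_le hp,
      integral_Ioc_eq_integral_Ioo, integral_Ioc_eq_integral_Ioo]
    refine setIntegral_congr_fun measurableSet_Ioo (fun t ht => ?_)
    simp only [pow_one]
    exact S_eq ht
  rw [h1, intervalIntegral.integral_add intervalIntegrable_const (by exact intervalIntegrable_log_sin),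
    integral_log_sin_zero_pi_div_two, intervalIntegral.integral_const]
  simp
  ring

lemma f20 : II f2 0 = z3 - II f1 1 := by
  have h2 := res2
  have h1 := res1
  have h0 := int_S
  have e : ∫ t in (0 : ℝ)..(Real.pi / 2), 2 * 1 * (t - Real.pi / 2) * S t ^ 1 =
      2 * (∫ t in (0 : ℝ)..(Real.pi / 2), t * S t ^ 1) - Real.pi * ∫ t in (0 : ℝ)..(Real.pi / 2), S t ^ 1 := by
    have i1 := S_int continuous_id (by norm_num : 1 ≤ 2)
    have i0 := S_int (φ := fun _ => 1) continuous_const (by norm_num : 1 ≤ 2)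
    simp only [one_mul] at i0
    simp only [id] at i1
    rw [← intervalIntegral.integral_const_mul, ← intervalIntegral.integral_const_mul,
      ← intervalIntegral.integral_sub (i1.const_mul 2) (i0.const_mul _)]
    congr 1
    ext t
    ring
  rw [e, h1, h0] at h2
  linarith

lemma poly_int : ∫ t in (0 : ℝ)..(Real.pi / 2), t * (t - Real.pi / 2) ^ 2 = Real.pi ^ 4 / 192 := by
  have hd : ∀ t : ℝ, HasDerivAt (fun t : ℝ => t ^ 4 / 4 - Real.pi * t ^ 3 / 3 + Real.pi ^ 2 * t ^ 2 / 8)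
      (t * (t - Real.pi / 2) ^ 2) t := by
    intro t
    have h := ((((hasDerivAt_id t).pow 4).div_const 4).sub
      ((((hasDerivAt_id t).pow 3).const_mul Real.pi).div_const 3)).add
      ((((hasDerivAt_id t).pow 2).const_mul (Real.pi ^ 2)).div_const 8)
    convert! h using 1
    simp only [id]
    norm_num
    ring
  rw [intervalIntegral.integral_eq_sub_of_hasDerivAt (fun t _ => hd t)
    (Continuous.intervalIntegrable (by fun_prop) _ _)]
  ring

lemma lhs_val : ∫ t in (0 : ℝ)..(Real.pi / 2), 8 * t * Real.log (Real.sin t) ^ 2 =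
    2 * (Real.pi ^ 4 / 48 + II f2 1 - Real.pi ^ 4 / 180 - 2 * Real.log 2 * (z3 + II f1 1)
      + Real.log 2 ^ 2 * Real.pi ^ 2 / 2) := by
  have hp : (0 : ℝ) ≤ Real.pi / 2 := by positivity
  have i1 := S_int continuous_id (by norm_num : 1 ≤ 2)
  have i2 := S_int continuous_id (by norm_num : 2 ≤ 2)
  simp only [id] at i1 i2
  have i3 : IntervalIntegrable (fun t : ℝ => t * (t - Real.pi / 2) ^ 2) volume 0 (Real.pi / 2) :=
    Continuous.intervalIntegrable (by fun_prop) _ _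
  have i4 : IntervalIntegrable (fun t : ℝ => t) volume 0 (Real.pi / 2) :=
    Continuous.intervalIntegrable (by fun_prop) _ _
  have r3 := res3
  rw [intervalIntegral.integral_sub i2 i3, poly_int] at r3
  have e : ∫ t in (0 : ℝ)..(Real.pi / 2), 8 * t * Real.log (Real.sin t) ^ 2 =
      ∫ t in (0 : ℝ)..(Real.pi / 2), (8 * (t * S t ^ 2) - 16 * Real.log 2 * (t * S t ^ 1)
        + 8 * Real.log 2 ^ 2 * t) := by
    rw [intervalIntegral.integral_of_le hp, intervalIntegral.integral_of_le hp,
      integral_Ioc_eq_integral_Ioo, integral_Ioc_eq_integral_Ioo]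
    refine setIntegral_congr_fun measurableSet_Ioo (fun t ht => ?_)
    simp only [S_eq ht]
    ring
  rw [e, intervalIntegral.integral_add ((i2.const_mul 8).sub (i1.const_mul _)) (i4.const_mul _),
    intervalIntegral.integral_sub (i2.const_mul 8) (i1.const_mul _),
    intervalIntegral.integral_const_mul, intervalIntegral.integral_const_mul,
    intervalIntegral.integral_const_mul, res1, integral_id]
  linear_combination 8 * r3

end CB

/-- 2·∑_{n=1}^∞ 4^{n-1}/(n⁴·C(2n,n)) = -(1/240)·π⁴ + (1/6)·π²·log²2 + log⁴2
+ (1/2)·∑_{n=1}^∞ (C(2n,n)/(4ⁿ·n⁴))·(4 + 2n(H_{n-1} - H_{2n-1})), both series converging. -/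
theorem inverse_centralBinom_n4_identity :
    Summable (fun n : ℕ =>
      (4 : ℝ) ^ n / (((n : ℝ) + 1) ^ 4 * (Nat.centralBinom (n + 1) : ℝ))) ∧
    Summable (fun n : ℕ =>
      (Nat.centralBinom (n + 1) : ℝ) / ((4 : ℝ) ^ (n + 1) * ((n : ℝ) + 1) ^ 4) *
        (4 + 2 * ((n : ℝ) + 1) * ((harmonic n : ℝ) - (harmonic (2 * n + 1) : ℝ)))) ∧
    2 * ∑' n : ℕ, (4 : ℝ) ^ n / (((n : ℝ) + 1) ^ 4 * (Nat.centralBinom (n + 1) : ℝ)) =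
      -(1 / 240) * Real.pi ^ 4 + (1 / 6) * Real.pi ^ 2 * Real.log 2 ^ 2 + Real.log 2 ^ 4 +
        (1 / 2) * ∑' n : ℕ,
          (Nat.centralBinom (n + 1) : ℝ) / ((4 : ℝ) ^ (n + 1) * ((n : ℝ) + 1) ^ 4) *
            (4 + 2 * ((n : ℝ) + 1) * ((harmonic n : ℝ) - (harmonic (2 * n + 1) : ℝ))) := by
  have hb : ∀ n : ℕ, (Nat.centralBinom (n + 1) : ℝ) = CB.b (n + 1) * 4 ^ (n + 1) := by
    intro n; unfold CB.b; field_simp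
  have h1 : HasSum (fun n : ℕ =>
      (4 : ℝ) ^ n / (((n : ℝ) + 1) ^ 4 * (Nat.centralBinom (n + 1) : ℝ)))
      ((∫ t in (0 : ℝ)..(Real.pi / 2), 8 * t * Real.log (Real.sin t) ^ 2) / 4) := by
    refine (CB.lhs_hasSum.div_const 4).congr_fun ?_
    intro n
    have := CB.b_pos (n + 1)
    rw [hb n]
    unfold CB.e
    field_simp
    ring
  have h2 : HasSum (fun n : ℕ =>
      (Nat.centralBinom (n + 1) : ℝ) / ((4 : ℝ) ^ (n + 1) * ((n : ℝ) + 1) ^ 4) *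
        (4 + 2 * ((n : ℝ) + 1) * ((harmonic n : ℝ) - (harmonic (2 * n + 1) : ℝ))))
      (∫ w in (0 : ℝ)..1, CB.TI w) := by
    refine CB.rhs_hasSum.congr_fun ?_
    intro n
    have hh : (harmonic n : ℝ) - (harmonic (2 * n + 1) : ℝ) =
        -CB.h (n + 1) - 1 / (2 * ((n : ℝ) + 1)) := by
      unfold CB.h
      rw [show 2 * (n + 1) = 2 * n + 1 + 1 by ring, harmonic_succ (2 * n + 1), harmonic_succ n]
      push_cast
      field_simp
      ring
    rw [hh, hb n]
    unfold CB.d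
    push_cast
    field_simp
    ring
  refine ⟨h1.summable, h2.summable, ?_⟩
  rw [h1.tsum_eq, h2.tsum_eq, CB.lhs_val, CB.TI_eq, CB.f20, CB.II_f1_0, CB.II_f1_2]
  ring
end
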